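/- Let h ≥ 2 be an integer and let N_h(x) denote the set of h-full ideals of O_K with norm at most x. Then for every γ ∈ ℝ, lim_{x → ∞} (1/|N_h(x)|) · |{m ∈ N_h(x) : N(m) ≥ 3, (ω(m) − log log N(m)) / √(log log N(m)) ≤ γ}| = Φ(γ). -/

import Mathlib

/-!
The distribution of `ω` is read off from the exponential sums `∑ exp(it(ω(m) - L)/√L)`,
`L = log log x`, which have to be asymptotic to `exp(-t²/2)` times the number of ideals.

For all ideals of norm at most `x` this only needs divisibility counts. The ideals of norm at most
`x` divisible by `d`, in a fixed class, correspond to the points of a sublattice of index `N(d)` in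
a dilated region of the fundamental cone. No error term for the count in that region itself is
available, but the region is exhausted, up to small volume, by finitely many cubes, and in a cube
the sublattice is equidistributed with a power saving in `N(d)`. Hence, on each cube, `ω` truncated
to the primes of norm at most `x^{o(1)}` behaves like a sum of independent Bernoulli variables of
parameters `1/N(p)`: its exponential sum is compared with `∏ (1 + (e^{it/√L} - 1)/N(p))` by
inclusion-exclusion truncated at a suitable order. Mertens' theorem
`∑_{N(p) ≤ x} 1/N(p) = log log x + O(1)` makes the product asymptotically Gaussian.

An `h`-full ideal is uniquely `a ^ h * b` with the exponents of `b` in `{0} ∪ (h, 2h)`, and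
`∑ N(b) ^ (-1/h)` converges. For fixed `b` the ideal `a` runs over all ideals of norm at most
`(x / N(b)) ^ (1/h)`, and `ω(m) = ω(a) + O(ω(b))`, so dominated convergence transfers the Gaussian
behaviour to `h`-full ideals. Lévy's continuity theorem then gives the limit law, and replacing
`log log x` by `log log N(m)` is harmless because few `h`-full ideals have norm at most `√x`.
-/

open Filter MeasureTheory Topology
open scoped BigOperators

noncomputable section

variable (K : Type) [Field K] [NumberField K]

/-- The standard Gaussian distribution function Φ. -/
def gaussPhi (γ : ℝ) : ℝ :=
  (Real.sqrt (2 * Real.pi))⁻¹ * ∫ u in Set.Iic γ, Real.exp (-u ^ 2 / 2)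

/-- Number of distinct prime ideal divisors of an ideal. -/
def omegaI (m : Ideal (NumberField.RingOfIntegers K)) : ℕ :=
  Nat.card {p : Ideal (NumberField.RingOfIntegers K) // p.IsPrime ∧ p ∣ m}

/-- `m` is an `h`-full ideal: every prime ideal dividing `m` divides it to order at least `h`. -/
def IsHFull (h : ℕ) (m : Ideal (NumberField.RingOfIntegers K)) : Prop :=
  m ≠ 0 ∧ ∀ p : Ideal (NumberField.RingOfIntegers K), p.IsPrime → p ∣ m → p ^ h ∣ m

open NumberField

/-! ### Products of distinct primes -/

section PrimeProducts

variable {α : Type*} [CommMonoidWithZero α]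

lemma prod_primes_ne_zero [NoZeroDivisors α] [Nontrivial α] {T : Finset α}
    (hT : ∀ p ∈ T, Prime p) : ∏ p ∈ T, p ≠ 0 :=
  Finset.prod_ne_zero_iff.2 fun p hp => (hT p hp).ne_zero

variable [Subsingleton αˣ]

lemma forall_dvd_iff_prod_dvd [IsCancelMulZero α] {T : Finset α} (hT : ∀ p ∈ T, Prime p) (m : α) :
    (∀ p ∈ T, p ∣ m) ↔ ∏ p ∈ T, p ∣ m :=
  ⟨Finset.prod_primes_dvd m hT, fun h _ hp => (Finset.dvd_prod_of_mem _ hp).trans h⟩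

lemma mem_of_prime_dvd_prod_primes [IsCancelMulZero α] {T : Finset α} (hT : ∀ p ∈ T, Prime p)
    {q : α} (hq : Prime q) (h : q ∣ ∏ p ∈ T, p) : q ∈ T := by
  obtain ⟨p, hp, hqp⟩ := (hq.dvd_finsetProd_iff _).1 h
  rwa [associated_iff_eq.1 ((hq.dvd_prime_iff_associated (hT p hp)).1 hqp)]

lemma prod_primes_injective [IsCancelMulZero α] {S T : Finset α} (hS : ∀ p ∈ S, Prime p)
    (hT : ∀ p ∈ T, Prime p) (h : ∏ p ∈ S, p = ∏ p ∈ T, p) : S = T :=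
  Finset.Subset.antisymm
    (fun _ hq => mem_of_prime_dvd_prod_primes hT (hS _ hq) (h ▸ Finset.dvd_prod_of_mem _ hq))
    (fun _ hq => mem_of_prime_dvd_prod_primes hS (hT _ hq) (h ▸ Finset.dvd_prod_of_mem _ hq))

lemma exists_eq_prod_primes_mul_sq [UniqueFactorizationMonoid α] {m : α} (hm : m ≠ 0) :
    ∃ (T : Finset α) (k : α), (∀ p ∈ T, Prime p) ∧ m = (∏ p ∈ T, p) * k ^ 2 := by
  classical
  induction m using UniqueFactorizationMonoid.induction_on_prime with
  | h₁ => exact absurd rfl hm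
  | h₂ x hx => exact ⟨∅, 1, by simp, by simpa using hx⟩
  | h₃ a p ha hp ih =>
    obtain ⟨T, k, hT, rfl⟩ := ih ha
    by_cases hpT : p ∈ T
    · refine ⟨T.erase p, p * k, fun q hq => hT q (Finset.mem_of_mem_erase hq), ?_⟩
      rw [← Finset.mul_prod_erase T _ hpT, mul_pow, sq p]
      ac_rfl
    · exact ⟨insert p T, k, by simpa [hp] using hT, by rw [Finset.prod_insert hpT, mul_assoc]⟩

end PrimeProducts

/-! ### Counting ideals by norm -/

section Ideals

variable {K}

/-- The absolute norm of an ideal, as a real number. -/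
abbrev realNorm (I : Ideal (𝓞 K)) : ℝ := Ideal.absNorm I

lemma realNorm_mul (I J : Ideal (𝓞 K)) : realNorm (I * J) = realNorm I * realNorm J := by
  simp [realNorm]

lemma realNorm_prod (T : Finset (Ideal (𝓞 K))) :
    realNorm (∏ p ∈ T, p) = ∏ p ∈ T, realNorm p := by
  simp [realNorm]

lemma one_le_realNorm {I : Ideal (𝓞 K)} (hI : I ≠ ⊥) : 1 ≤ realNorm I := by
  exact_mod_cast Nat.one_le_iff_ne_zero.2 (Ideal.absNorm_eq_zero_iff.not.2 hI)

lemma realNorm_pos {I : Ideal (𝓞 K)} (hI : I ≠ ⊥) : 0 < realNorm I :=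
  one_pos.trans_le (one_le_realNorm hI)

lemma realNorm_le_of_dvd {I J : Ideal (𝓞 K)} (h : I ∣ J) (hJ : J ≠ ⊥) :
    realNorm I ≤ realNorm J :=
  Nat.cast_le.2 (Nat.le_of_dvd (Nat.cast_pos.1 (realNorm_pos hJ)) (map_dvd Ideal.absNorm h))

lemma finite_setOf_realNorm_le (x : ℝ) : {I : Ideal (𝓞 K) | I ≠ ⊥ ∧ realNorm I ≤ x}.Finite :=
  (Ideal.finite_setOfPred_absNorm_le ⌊x⌋₊).subset fun _ hI => Nat.le_floor hI.2

variable (K)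

/-- The nonzero ideals of norm at most `x`. -/
def idealsLE (x : ℝ) : Finset (Ideal (𝓞 K)) := (finite_setOf_realNorm_le x).toFinset

open Classical in
/-- The nonzero prime ideals of norm at most `x`. -/
def primesLE (x : ℝ) : Finset (Ideal (𝓞 K)) := (idealsLE K x).filter Prime

variable {K}

@[simp] lemma mem_idealsLE {x : ℝ} {I : Ideal (𝓞 K)} :
    I ∈ idealsLE K x ↔ I ≠ ⊥ ∧ realNorm I ≤ x := by
  simp [idealsLE]

@[simp] lemma mem_primesLE {x : ℝ} {p : Ideal (𝓞 K)} :
    p ∈ primesLE K x ↔ Prime p ∧ realNorm p ≤ x := by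
  simp only [primesLE, Finset.mem_filter, mem_idealsLE]
  exact ⟨fun h => ⟨h.2, h.1.2⟩, fun h => ⟨⟨h.1.ne_zero, h.2⟩, h.1⟩⟩

lemma idealsLE_mono {x y : ℝ} (hxy : x ≤ y) : idealsLE K x ⊆ idealsLE K y := fun I hI => by
  rw [mem_idealsLE] at *
  exact ⟨hI.1, hI.2.trans hxy⟩

lemma mem_idealsLE_of_dvd {x : ℝ} {I J : Ideal (𝓞 K)} (h : I ∣ J) (hJ : J ∈ idealsLE K x) :
    I ∈ idealsLE K x := by
  rw [mem_idealsLE] at *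
  exact ⟨ne_zero_of_dvd_ne_zero hJ.1 h, (realNorm_le_of_dvd h hJ.1).trans hJ.2⟩

open Classical in
lemma card_idealsLE_div_le {d : Ideal (𝓞 K)} (hd : d ≠ ⊥) (x : ℝ) :
    (idealsLE K (x / realNorm d)).card ≤ ((idealsLE K x).filter (d ∣ ·)).card := by
  refine Finset.card_le_card_of_injOn (d * ·) (fun a ha => ?_)
    fun a _ b _ hab => mul_left_cancel₀ hd hab
  simp only [Finset.mem_coe, mem_idealsLE, Finset.mem_filter] at ha ⊢
  refine ⟨⟨mul_ne_zero hd ha.1, ?_⟩, dvd_mul_right _ _⟩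
  rw [realNorm_mul, mul_comm, ← le_div_iff₀ (realNorm_pos hd)]
  exact ha.2

variable (K)

lemma tendsto_card_idealsLE_div :
    ∃ ρ : ℝ, 0 < ρ ∧ Tendsto (fun x : ℝ => ((idealsLE K x).card : ℝ) / x) atTop (𝓝 ρ) := by
  refine ⟨_, dedekindZeta_residue_pos K, ?_⟩
  rw [dedekindZeta_residue_def]
  refine (NumberField.Ideal.tendsto_norm_le_div_atTop₀ K).congr fun x => ?_
  rw [← Nat.card_eq_finsetCard (idealsLE K x)]
  congr 2
  exact Nat.card_congr ⟨
    fun I => ⟨I.1.1, mem_idealsLE.2 ⟨nonZeroDivisors.ne_zero I.1.2, I.2⟩⟩,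
    fun I => ⟨⟨I.1, mem_nonZeroDivisors_of_ne_zero (mem_idealsLE.1 I.2).1⟩,
      (mem_idealsLE.1 I.2).2⟩,
    fun _ => rfl, fun _ => rfl⟩

lemma exists_card_idealsLE_bounds : ∃ c C : ℝ, 0 < c ∧ 0 < C ∧ ∀ x : ℝ, 1 ≤ x →
    c * x ≤ (idealsLE K x).card ∧ (idealsLE K x).card ≤ C * x := by
  obtain ⟨ρ, hρ, hlim⟩ := tendsto_card_idealsLE_div K
  obtain ⟨X, hX⟩ := eventually_atTop.1
    (hlim.eventually (Ioo_mem_nhds (half_lt_self hρ) (lt_two_mul_self hρ)))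
  set Y := max X 1
  have hY : 1 ≤ Y := le_max_right _ _
  refine ⟨min (ρ / 2) Y⁻¹, 2 * ρ + (idealsLE K Y).card, by positivity, by positivity,
    fun x hx => ?_⟩
  rcases le_total Y x with hYx | hxY
  · obtain ⟨hl, hu⟩ := hX x ((le_max_left _ _).trans hYx)
    rw [lt_div_iff₀ (by linarith)] at hl
    rw [div_lt_iff₀ (by linarith)] at hu
    exact ⟨(mul_le_mul_of_nonneg_right (min_le_left _ _) (by linarith)).trans hl.le,
      hu.le.trans (mul_le_mul_of_nonneg_right (by simp) (by linarith))⟩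
  · have htop : ⊤ ∈ idealsLE K x := by simpa [realNorm] using hx
    constructor
    · calc _ ≤ Y⁻¹ * Y := by gcongr; exact min_le_right _ _
        _ = 1 := inv_mul_cancel₀ (by positivity)
        _ ≤ _ := by exact_mod_cast Finset.card_pos.2 ⟨⊤, htop⟩
    · calc ((idealsLE K x).card : ℝ) ≤ (idealsLE K Y).card := by
            exact_mod_cast Finset.card_le_card (idealsLE_mono hxY)
        _ ≤ (idealsLE K Y).card * x := le_mul_of_one_le_right (by positivity) hx
        _ ≤ _ := by gcongr; linarith

end Ideals

/-! ### Mertens' estimate for prime ideals -/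

section CountingSums

lemma div_three_le_one_sub_two_rpow {u : ℝ} (hu0 : 0 ≤ u) (hu1 : u ≤ 1) :
    u / 3 ≤ 1 - 2 ^ (-u) := by
  have h1 : 1 + u / 2 ≤ 2 ^ u := by
    rw [Real.rpow_def_of_pos two_pos]
    nlinarith [Real.add_one_le_exp (Real.log 2 * u), Real.log_two_gt_d9]
  have h2 : (2 : ℝ) ^ (-u) ≤ (1 + u / 2)⁻¹ := by
    rw [Real.rpow_neg two_pos.le]
    gcongr
  have h3 : (1 + u / 2)⁻¹ ≤ 1 - u / 3 := by
    rw [inv_le_iff_one_le_mul₀ (by positivity)]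
    nlinarith
  linarith

variable {ι : Type*} {F : Finset ι} {N : ι → ℕ} {c C : ℝ}

lemma sum_filter_log_rpow_neg_le (hN : ∀ i ∈ F, N i ≠ 0)
    (hC : ∀ n : ℕ, 1 ≤ n → ((F.filter (N · ≤ n)).card : ℝ) ≤ C * n) {s : ℝ} (hs : 0 ≤ s) (j : ℕ) :
    ∑ i ∈ F with Nat.log 2 (N i) = j, (N i : ℝ) ^ (-s) ≤ 2 * C * (2 ^ (1 - s)) ^ j := by
  have hterm : ∀ i ∈ F.filter (fun i => Nat.log 2 (N i) = j),
      (N i : ℝ) ^ (-s) ≤ ((2 : ℝ) ^ j) ^ (-s) := by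
    intro i hi
    obtain ⟨hiF, rfl⟩ := Finset.mem_filter.1 hi
    exact Real.rpow_le_rpow_of_nonpos (by positivity)
      (by exact_mod_cast Nat.pow_log_le_self 2 (hN i hiF)) (by linarith)
  have hcard : ((F.filter fun i => Nat.log 2 (N i) = j).card : ℝ) ≤ C * (2 ^ (j + 1) : ℕ) := by
    refine le_trans ?_ (hC (2 ^ (j + 1)) Nat.one_le_two_pow)
    refine Nat.cast_le.2 (Finset.card_le_card fun i hi => ?_)
    obtain ⟨hiF, rfl⟩ := Finset.mem_filter.1 hi
    exact Finset.mem_filter.2 ⟨hiF, (Nat.lt_pow_succ_log_self one_lt_two _).le⟩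
  calc _ ≤ ((F.filter fun i => Nat.log 2 (N i) = j).card : ℝ) * ((2 : ℝ) ^ j) ^ (-s) := by
        rw [← nsmul_eq_mul]
        exact Finset.sum_le_card_nsmul _ _ _ hterm
    _ ≤ C * (2 ^ (j + 1) : ℕ) * ((2 : ℝ) ^ j) ^ (-s) := by gcongr
    _ = 2 * C * (2 ^ (1 - s)) ^ j := by
        rw [sub_eq_add_neg, Real.rpow_add two_pos, Real.rpow_one, mul_pow,
          Real.rpow_pow_comm two_pos.le]
        push_cast
        ring

lemma sum_rpow_neg_le_of_card_le (hN : ∀ i ∈ F, N i ≠ 0)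
    (hC : ∀ n : ℕ, 1 ≤ n → ((F.filter (N · ≤ n)).card : ℝ) ≤ C * n) {s : ℝ} (hs1 : 1 < s)
    (hs2 : s ≤ 2) :
    ∑ i ∈ F, (N i : ℝ) ^ (-s) ≤ 6 * C / (s - 1) := by
  have hC0 : 0 ≤ C := by simpa using (Nat.cast_nonneg _).trans (hC 1 le_rfl)
  set q : ℝ := 2 ^ (1 - s)
  have hq0 : 0 ≤ q := by positivity
  have hq : (s - 1) / 3 ≤ 1 - q := by
    simpa using div_three_le_one_sub_two_rpow (u := s - 1) (by linarith) (by linarith)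
  have hq1 : q < 1 := by linarith
  calc ∑ i ∈ F, (N i : ℝ) ^ (-s)
      = ∑ j ∈ F.image (fun i => Nat.log 2 (N i)),
          ∑ i ∈ F with Nat.log 2 (N i) = j, (N i : ℝ) ^ (-s) :=
        (Finset.sum_fiberwise_of_maps_to (fun i hi => Finset.mem_image_of_mem _ hi) _).symm
    _ ≤ ∑ j ∈ F.image (fun i => Nat.log 2 (N i)), 2 * C * q ^ j :=
        Finset.sum_le_sum fun j _ => sum_filter_log_rpow_neg_le hN hC (by linarith) j
    _ ≤ 2 * C * (1 - q)⁻¹ := by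
        rw [← Finset.mul_sum, ← tsum_geometric_of_lt_one hq0 hq1]
        gcongr
        exact (summable_geometric_of_lt_one hq0 hq1).sum_le_tsum _ fun _ _ => by positivity
    _ ≤ 2 * C * ((s - 1) / 3)⁻¹ := by
        have : 0 < (s - 1) / 3 := by linarith
        gcongr
    _ = 6 * C / (s - 1) := by
        field_simp
        ring

lemma sum_Ico_inv_mul_succ_le {m : ℕ} (hm : m ≠ 0) (n : ℕ) :
    ∑ k ∈ Finset.Ico m n, ((k : ℝ) * (k + 1))⁻¹ ≤ (m : ℝ)⁻¹ := by
  rcases le_total n m with hnm | hmn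
  · simp [Finset.Ico_eq_empty_of_le hnm]
  have htele : ∑ k ∈ Finset.Ico m n, ((k : ℝ) * (k + 1))⁻¹ = (m : ℝ)⁻¹ - (n : ℝ)⁻¹ := by
    induction n, hmn using Nat.le_induction with
    | base => simp
    | succ j hmj ih =>
      have : (j : ℝ) ≠ 0 := Nat.cast_ne_zero.2 (by lia)
      rw [Finset.sum_Ico_succ_top hmj, ih]
      push_cast
      field_simp
      ring
  rw [htele]
  exact sub_le_self _ (by positivity)

lemma log_sub_one_le_sum_Ico_inv (n : ℕ) :
    Real.log (n + 1) - 1 ≤ ∑ k ∈ Finset.Ico 1 (n + 1), ((k : ℝ) + 1)⁻¹ := by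
  have h : ((harmonic (n + 1) : ℚ) : ℝ) = 1 + ∑ k ∈ Finset.Ico 1 (n + 1), ((k : ℝ) + 1)⁻¹ := by
    rw [harmonic, Finset.range_eq_Ico, Finset.sum_eq_sum_Ico_succ_bot (by lia)]
    simp
  have hlog : Real.log (n + 1) ≤ Real.log (n + 1 + 1 : ℕ) :=
    Real.log_le_log (by positivity) (by simp)
  linarith [log_add_one_le_harmonic (n + 1)]

lemma log_le_sum_inv_of_le_card (hN : ∀ i ∈ F, N i ≠ 0) (hc0 : 0 ≤ c) {n : ℕ}
    (hc : ∀ k : ℕ, 1 ≤ k → k ≤ n → c * k ≤ (F.filter (N · ≤ k)).card) :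
    c * (Real.log (n + 1) - 1) ≤ ∑ i ∈ F, (N i : ℝ)⁻¹ :=
  calc c * (Real.log (n + 1) - 1) ≤ c * ∑ k ∈ Finset.Ico 1 (n + 1), ((k : ℝ) + 1)⁻¹ := by
        gcongr
        exact log_sub_one_le_sum_Ico_inv n
    _ = ∑ k ∈ Finset.Ico 1 (n + 1), c * k * ((k : ℝ) * (k + 1))⁻¹ := by
        rw [Finset.mul_sum]
        refine Finset.sum_congr rfl fun k hk => ?_
        have : (k : ℝ) ≠ 0 := Nat.cast_ne_zero.2 (by grind)
        field_simp
    _ ≤ ∑ k ∈ Finset.Ico 1 (n + 1), ∑ i ∈ F with N i ≤ k, ((k : ℝ) * (k + 1))⁻¹ := by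
        refine Finset.sum_le_sum fun k hk => ?_
        rw [Finset.sum_const, nsmul_eq_mul]
        gcongr
        exact hc k (by grind) (by grind)
    _ = ∑ i ∈ F, ∑ k ∈ Finset.Ico (N i) (n + 1), ((k : ℝ) * (k + 1))⁻¹ :=
        Finset.sum_comm' fun k i => by grind
    _ ≤ ∑ i ∈ F, (N i : ℝ)⁻¹ :=
        Finset.sum_le_sum fun i hi => sum_Ico_inv_mul_succ_le (hN i hi) _

lemma sub_sq_le_log_one_add {u : ℝ} (hu : 0 ≤ u) : u - u ^ 2 ≤ Real.log (1 + u) := by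
  refine le_trans ?_ (Real.le_log_one_add_of_nonneg hu)
  rw [le_div_iff₀ (by positivity)]
  nlinarith [pow_nonneg hu 3]

end CountingSums

section Mertens

open Real (log exp)

lemma exists_sum_realNorm_rpow_neg_le : ∃ C : ℝ, 0 < C ∧ ∀ s : ℝ, 1 < s → s ≤ 2 →
    ∀ F : Finset (Ideal (𝓞 K)), (∀ I ∈ F, I ≠ ⊥) →
      ∑ I ∈ F, realNorm I ^ (-s) ≤ C / (s - 1) := by
  obtain ⟨c, C, -, hC, hcard⟩ := exists_card_idealsLE_bounds K
  refine ⟨6 * C, by positivity, fun s hs1 hs2 F hF => sum_rpow_neg_le_of_card_le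
    (fun I hI => Ideal.absNorm_eq_zero_iff.not.2 (hF I hI)) (fun n hn => ?_) hs1 hs2⟩
  have hsub : F.filter (Ideal.absNorm · ≤ n) ⊆ idealsLE K n := fun I hI => by
    rw [Finset.mem_filter] at hI
    exact mem_idealsLE.2 ⟨hF I hI.1, Nat.cast_le.2 hI.2⟩
  exact (Nat.cast_le.2 (Finset.card_le_card hsub)).trans (hcard n (by exact_mod_cast hn)).2

lemma exists_sum_realNorm_sq_inv_le : ∃ C : ℝ, 0 < C ∧
    ∀ F : Finset (Ideal (𝓞 K)), (∀ I ∈ F, I ≠ ⊥) → ∑ I ∈ F, (realNorm I ^ 2)⁻¹ ≤ C := by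
  obtain ⟨C, hC, h⟩ := exists_sum_realNorm_rpow_neg_le K
  refine ⟨C, hC, fun F hF => ?_⟩
  simpa [Real.rpow_neg, show (2 : ℝ) - 1 = 1 by norm_num] using h 2 one_lt_two le_rfl F hF

variable {K} in
open Classical in
lemma sum_log_realNorm_filter_dvd_le {x : ℝ} {m : Ideal (𝓞 K)} (hm : m ∈ idealsLE K x) :
    ∑ p ∈ primesLE K x with p ∣ m, log (realNorm p) ≤ log x := by
  have hprime : ∀ p ∈ (primesLE K x).filter (· ∣ m), Prime p := fun p hp =>
    (mem_primesLE.1 (Finset.mem_filter.1 hp).1).1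
  have hdvd : ∏ p ∈ (primesLE K x).filter (· ∣ m), p ∣ m :=
    Finset.prod_primes_dvd m hprime fun p hp => (Finset.mem_filter.1 hp).2
  rw [← Real.log_prod fun p hp => (realNorm_pos (hprime p hp).ne_zero).ne', ← realNorm_prod]
  exact Real.log_le_log (realNorm_pos (prod_primes_ne_zero hprime))
    (mem_idealsLE.1 (mem_idealsLE_of_dvd hdvd hm)).2

-- Double counting of `∑_{N(m) ≤ x} ∑_{p ∣ m} log N(p) ≤ ∑_{N(m) ≤ x} log x`.
lemma exists_sum_log_div_le : ∃ C : ℝ, 0 < C ∧ ∀ x : ℝ, 1 ≤ x →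
    ∑ p ∈ primesLE K x, log (realNorm p) / realNorm p ≤ C * log x := by
  classical
  obtain ⟨c, C, hc, hC, hcard⟩ := exists_card_idealsLE_bounds K
  refine ⟨C / c, by positivity, fun x hx => ?_⟩
  have hx0 : 0 < x := by linarith
  have key : (c * x) * ∑ p ∈ primesLE K x, log (realNorm p) / realNorm p ≤ C * x * log x :=
    calc _ = ∑ p ∈ primesLE K x, log (realNorm p) * (c * (x / realNorm p)) := by
          rw [Finset.mul_sum]
          exact Finset.sum_congr rfl fun p _ => by ring
      _ ≤ ∑ p ∈ primesLE K x, log (realNorm p) * ((idealsLE K x).filter (p ∣ ·)).card := by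
          refine Finset.sum_le_sum fun p hp => ?_
          obtain ⟨hp, hpx⟩ := mem_primesLE.1 hp
          have hp1 := one_le_realNorm hp.ne_zero
          have := Real.log_nonneg hp1
          gcongr
          exact (hcard _ ((one_le_div (by linarith)).2 hpx)).1.trans
            (Nat.cast_le.2 (card_idealsLE_div_le hp.ne_zero x))
      _ = ∑ m ∈ idealsLE K x, ∑ p ∈ primesLE K x with p ∣ m, log (realNorm p) := by
          simp_rw [Finset.card_filter, Nat.cast_sum, Finset.mul_sum, Finset.sum_filter]
          rw [Finset.sum_comm]
          simp
      _ ≤ (idealsLE K x).card * log x := by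
          rw [← nsmul_eq_mul]
          exact Finset.sum_le_card_nsmul _ _ _ fun m => sum_log_realNorm_filter_dvd_le
      _ ≤ C * x * log x := by
          gcongr
          · exact Real.log_nonneg hx
          · exact (hcard x hx).2
  rw [← le_div_iff₀' (mul_pos hc hx0)] at key
  exact key.trans_eq (by field_simp)

/-- The sum of the reciprocals of the norms of the prime ideals of norm at most `x`. -/
def primeRecipSum (x : ℝ) : ℝ := ∑ p ∈ primesLE K x, (realNorm p)⁻¹

variable {K}

lemma prod_one_add_primesLE (x : ℝ) (f : ℝ → ℝ)
    (hf : ∀ T : Finset (Ideal (𝓞 K)), f (∏ p ∈ T, realNorm p) = ∏ p ∈ T, f (realNorm p)) :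
    ∏ p ∈ primesLE K x, (1 + f (realNorm p)) =
      ∑ T ∈ (primesLE K x).powerset, f (realNorm (∏ p ∈ T, p)) := by
  classical
  simp_rw [Finset.prod_one_add, realNorm_prod, hf]

open Classical in
lemma exists_prod_one_add_rpow_neg_le : ∃ C : ℝ, 0 < C ∧ ∀ s : ℝ, 1 < s → s ≤ 2 → ∀ x : ℝ,
    ∏ p ∈ primesLE K x, (1 + realNorm p ^ (-s)) ≤ C / (s - 1) := by
  obtain ⟨C, hC, hsum⟩ := exists_sum_realNorm_rpow_neg_le K
  refine ⟨C, hC, fun s hs1 hs2 x => ?_⟩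
  have hprime : ∀ T ∈ (primesLE K x).powerset, ∀ p ∈ T, Prime p := fun T hT p hp =>
    (mem_primesLE.1 (Finset.mem_powerset.1 hT hp)).1
  rw [prod_one_add_primesLE x (· ^ (-s))
    fun T => (Real.finsetProd_rpow _ _ (fun _ _ => Nat.cast_nonneg _) _).symm]
  have himage := hsum s hs1 hs2 ((primesLE K x).powerset.image fun T => ∏ p ∈ T, p) fun I hI => by
    obtain ⟨T, hT, rfl⟩ := Finset.mem_image.1 hI
    exact prod_primes_ne_zero (hprime T hT)
  rwa [Finset.sum_image fun S hS T hT h => prod_primes_injective (hprime S hS) (hprime T hT) h]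
    at himage

lemma one_le_log {x : ℝ} (hx : 3 ≤ x) : 1 ≤ log x := by
  rw [Real.le_log_iff_exp_le (by linarith)]
  linarith [Real.exp_one_lt_d9]

lemma inv_sub_rpow_neg_one_add_le {y δ : ℝ} (hy : 0 < y) :
    y⁻¹ - y ^ (-(1 + δ)) ≤ δ * (log y / y) :=
  calc y⁻¹ - y ^ (-(1 + δ)) = y⁻¹ * (1 - exp (-(δ * log y))) := by
        rw [neg_add, Real.rpow_add hy, Real.rpow_neg_one, Real.rpow_def_of_pos hy]
        ring_nf
    _ ≤ y⁻¹ * (δ * log y) := by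
        gcongr
        linarith [Real.add_one_le_exp (-(δ * log y))]
    _ = _ := by ring

-- Rankin's trick: compare `1 / N(p)` with `1 / N(p) ^ s` for `s = 1 + 1 / log x`.
lemma exists_primeRecipSum_le :
    ∃ C : ℝ, ∀ x : ℝ, 3 ≤ x → primeRecipSum K x ≤ log (log x) + C := by
  obtain ⟨C₁, hC₁, hprod⟩ := exists_prod_one_add_rpow_neg_le (K := K)
  obtain ⟨C₂, -, hsq⟩ := exists_sum_realNorm_sq_inv_le K
  obtain ⟨C₃, -, hcheb⟩ := exists_sum_log_div_le K
  refine ⟨log C₁ + C₂ + C₃, fun x hx => ?_⟩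
  have hlx := one_le_log hx
  set δ := (log x)⁻¹
  have hδ0 : 0 < δ := by positivity
  have hδ1 : δ ≤ 1 := inv_le_one_of_one_le₀ hlx
  have hpos : ∀ p ∈ primesLE K x, 0 < realNorm p := fun p hp =>
    realNorm_pos (mem_primesLE.1 hp).1.ne_zero
  have hlog : ∑ p ∈ primesLE K x, log (1 + realNorm p ^ (-(1 + δ))) ≤ log C₁ + log (log x) := by
    rw [← Real.log_prod fun p hp => by have := hpos p hp; positivity,
      ← Real.log_mul hC₁.ne' (by positivity)]
    refine Real.log_le_log (Finset.prod_pos fun p hp => by have := hpos p hp; positivity) ?_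
    simpa [δ] using hprod (1 + δ) (by linarith) (by linarith) x
  have hterm : ∀ p ∈ primesLE K x, (realNorm p)⁻¹ ≤ log (1 + realNorm p ^ (-(1 + δ))) +
      (realNorm p ^ 2)⁻¹ + δ * (log (realNorm p) / realNorm p) := fun p hp => by
    have hp1 := one_le_realNorm (mem_primesLE.1 hp).1.ne_zero
    have hu : 0 ≤ realNorm p ^ (-(1 + δ)) := by positivity
    have husq : (realNorm p ^ (-(1 + δ))) ^ 2 ≤ (realNorm p ^ 2)⁻¹ := by
      rw [← inv_pow]
      gcongr
      rw [← Real.rpow_neg_one]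
      exact Real.rpow_le_rpow_of_exponent_le hp1 (by linarith)
    linarith [sub_sq_le_log_one_add hu, inv_sub_rpow_neg_one_add_le (δ := δ) (hpos p hp)]
  have hsum := Finset.sum_le_sum hterm
  rw [Finset.sum_add_distrib, Finset.sum_add_distrib, ← Finset.mul_sum] at hsum
  have hcheb' : δ * ∑ p ∈ primesLE K x, log (realNorm p) / realNorm p ≤ C₃ := by
    rw [inv_mul_le_iff₀ (by positivity), mul_comm]
    exact hcheb x (by linarith)
  unfold primeRecipSum
  linarith [hsq (primesLE K x) fun p hp => (mem_primesLE.1 hp).1.ne_zero]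

variable (K) in
lemma exists_log_le_sum_inv_realNorm : ∃ c : ℝ, 0 < c ∧ ∀ x : ℝ, 1 ≤ x →
    c * (log x - 1) ≤ ∑ m ∈ idealsLE K x, (realNorm m)⁻¹ := by
  obtain ⟨c, _, hc, -, hcard⟩ := exists_card_idealsLE_bounds K
  refine ⟨c, hc, fun x hx => ?_⟩
  have hle : ∀ k : ℕ, 1 ≤ k → k ≤ ⌊x⌋₊ →
      c * k ≤ ((idealsLE K x).filter (Ideal.absNorm · ≤ k)).card := fun k hk1 hkx => by
    have hkx' : (k : ℝ) ≤ x := (Nat.le_floor_iff (by linarith)).1 hkx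
    refine (hcard k (by exact_mod_cast hk1)).1.trans
      (Nat.cast_le.2 (Finset.card_le_card fun m hm => ?_))
    exact Finset.mem_filter.2 ⟨idealsLE_mono hkx' hm, Nat.cast_le.1 (mem_idealsLE.1 hm).2⟩
  calc c * (log x - 1) ≤ c * (log (⌊x⌋₊ + 1) - 1) := by
        gcongr
        exact (Nat.lt_floor_add_one x).le
    _ ≤ _ := log_le_sum_inv_of_le_card
        (fun m hm => Ideal.absNorm_eq_zero_iff.not.2 (mem_idealsLE.1 hm).1) hc.le hle

lemma sum_powerset_inv_realNorm_le_exp (x : ℝ) :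
    ∑ T ∈ (primesLE K x).powerset, (realNorm (∏ p ∈ T, p))⁻¹ ≤ exp (primeRecipSum K x) := by
  rw [← prod_one_add_primesLE x (·⁻¹) fun T => by simp, primeRecipSum, Real.exp_sum]
  refine Finset.prod_le_prod (fun p _ => by positivity) fun p _ => ?_
  rw [add_comm]
  exact Real.add_one_le_exp _

variable (K) in
-- Every ideal is a product of distinct primes times a square.
lemma exists_sum_inv_realNorm_le_exp : ∃ C : ℝ, 0 < C ∧ ∀ x : ℝ,
    ∑ m ∈ idealsLE K x, (realNorm m)⁻¹ ≤ exp (primeRecipSum K x) * C := by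
  classical
  obtain ⟨C, hC, hsq⟩ := exists_sum_realNorm_sq_inv_le K
  refine ⟨C, hC, fun x => ?_⟩
  choose! T k hT hTk using fun (m : Ideal (𝓞 K)) (hm : m ≠ ⊥) => exists_eq_prod_primes_mul_sq hm
  set g : Finset (Ideal (𝓞 K)) × Ideal (𝓞 K) → ℝ :=
    fun z => (realNorm (∏ p ∈ z.1, p))⁻¹ * (realNorm z.2 ^ 2)⁻¹ with hg
  have hmem : ∀ m ∈ idealsLE K x, (T m, k m) ∈ (primesLE K x).powerset ×ˢ idealsLE K x := by
    intro m hm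
    have hm0 := (mem_idealsLE.1 hm).1
    have hprod : ∏ p ∈ T m, p ∣ m := Dvd.intro _ (hTk m hm0).symm
    have hk : k m ∣ m := (dvd_pow_self _ two_ne_zero).trans (Dvd.intro_left _ (hTk m hm0).symm)
    refine Finset.mk_mem_product (Finset.mem_powerset.2 fun p hp => mem_primesLE.2
      ⟨hT m hm0 p hp, ?_⟩) (mem_idealsLE_of_dvd hk hm)
    exact (mem_idealsLE.1 (mem_idealsLE_of_dvd ((Finset.dvd_prod_of_mem _ hp).trans hprod) hm)).2
  have hterm : ∀ m ∈ idealsLE K x, (realNorm m)⁻¹ = g (T m, k m) := fun m hm => by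
    conv_lhs => rw [hTk m (mem_idealsLE.1 hm).1]
    simp [hg, realNorm, mul_comm]
  have hinj : Set.InjOn (fun m => (T m, k m)) (idealsLE K x) := fun a ha b hb hab => by
    rw [hTk a (mem_idealsLE.1 ha).1, hTk b (mem_idealsLE.1 hb).1, (Prod.mk.inj hab).1,
      (Prod.mk.inj hab).2]
  calc _ = ∑ z ∈ (idealsLE K x).image fun m => (T m, k m), g z := by
        rw [Finset.sum_image hinj]
        exact Finset.sum_congr rfl hterm
    _ ≤ ∑ z ∈ (primesLE K x).powerset ×ˢ idealsLE K x, g z :=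
        Finset.sum_le_sum_of_subset_of_nonneg (Finset.image_subset_iff.2 hmem)
          fun z _ _ => by positivity
    _ = (∑ S ∈ (primesLE K x).powerset, (realNorm (∏ p ∈ S, p))⁻¹) *
          ∑ k ∈ idealsLE K x, (realNorm k ^ 2)⁻¹ := by
        rw [Finset.sum_mul_sum, Finset.sum_product]
    _ ≤ exp (primeRecipSum K x) * C := by
        gcongr
        · exact sum_powerset_inv_realNorm_le_exp x
        · exact hsq _ fun I hI => (mem_idealsLE.1 hI).1

lemma exists_le_primeRecipSum :
    ∃ C : ℝ, ∀ x : ℝ, 3 ≤ x → log (log x) - C ≤ primeRecipSum K x := by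
  obtain ⟨c, hc, hlower⟩ := exists_log_le_sum_inv_realNorm K
  obtain ⟨C, hC, hupper⟩ := exists_sum_inv_realNorm_le_exp K
  refine ⟨log (C / c + 1), fun x hx => ?_⟩
  have hlx := one_le_log hx
  have hS : 0 ≤ primeRecipSum K x := Finset.sum_nonneg fun p _ => by positivity
  have hle : log x ≤ exp (primeRecipSum K x) * (C / c + 1) := by
    have h := (hlower x (by linarith)).trans (hupper x)
    rw [← le_div_iff₀' hc, mul_div_assoc] at h
    linarith [Real.one_le_exp hS]
  have := Real.log_le_log (by linarith) hle
  rw [Real.log_mul (by positivity) (by positivity), Real.log_exp] at this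
  linarith

variable (K) in
lemma exists_abs_primeRecipSum_sub_loglog_le : ∃ C : ℝ, 0 < C ∧ ∀ x : ℝ, 3 ≤ x →
    |primeRecipSum K x - log (log x)| ≤ C := by
  obtain ⟨C₁, h₁⟩ := exists_primeRecipSum_le (K := K)
  obtain ⟨C₂, h₂⟩ := exists_le_primeRecipSum (K := K)
  refine ⟨|C₁| + |C₂| + 1, by positivity, fun x hx => abs_le.2 ⟨?_, ?_⟩⟩ <;>
    linarith [h₁ x hx, h₂ x hx, le_abs_self C₁, le_abs_self C₂, abs_nonneg C₁, abs_nonneg C₂]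

end Mertens

/-! ### Truncated inclusion-exclusion for quasi-independent events -/

section ElementarySymmetric

lemma esymm_cons_succ {R : Type*} [CommSemiring R] (a : R) (s : Multiset R) (j : ℕ) :
    (a ::ₘ s).esymm (j + 1) = s.esymm (j + 1) + a * s.esymm j := by
  simp [Multiset.esymm, Multiset.powersetCard_cons, Multiset.sum_map_mul_left]

lemma esymm_le_exp {s : Multiset ℝ} (hs : ∀ y ∈ s, 0 ≤ y) (j : ℕ) :
    s.esymm j ≤ Real.exp (-j + Real.exp 1 * s.sum) := by
  induction s using Multiset.induction_on generalizing j with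
  | empty =>
    cases j with
    | zero => simp [Multiset.esymm]
    | succ j => simp [Multiset.esymm, Multiset.powersetCard_zero_right, Real.exp_nonneg]
  | cons a s ih =>
    have hs' := fun y hy => hs y (Multiset.mem_cons_of_mem hy)
    have ha := hs a (Multiset.mem_cons_self a s)
    cases j with
    | zero =>
      have : 0 ≤ s.sum := Multiset.sum_nonneg hs'
      simpa [Multiset.esymm] using by positivity
    | succ j =>
      calc (a ::ₘ s).esymm (j + 1) ≤ Real.exp (-(j + 1 : ℕ) + Real.exp 1 * s.sum) +
            a * Real.exp (-j + Real.exp 1 * s.sum) := by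
            rw [esymm_cons_succ]
            gcongr
            exacts [ih hs' _, ih hs' _]
        _ = Real.exp (-(j + 1 : ℕ) + Real.exp 1 * s.sum) * (Real.exp 1 * a + 1) := by
            rw [mul_add_one, ← mul_assoc, ← Real.exp_add]
            push_cast
            ring_nf
        _ ≤ Real.exp (-(j + 1 : ℕ) + Real.exp 1 * s.sum) * Real.exp (Real.exp 1 * a) := by
            gcongr
            exact Real.add_one_le_exp _
        _ = _ := by
            rw [← Real.exp_add, Multiset.sum_cons]
            ring_nf

lemma norm_multiset_prod_le_one {s : Multiset ℂ} (hs : ∀ x ∈ s, ‖x‖ ≤ 1) : ‖s.prod‖ ≤ 1 := by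
  induction s using Multiset.induction_on with
  | empty => simp
  | cons a s ih =>
    rw [Multiset.prod_cons, norm_mul]
    exact mul_le_one₀ (hs a (Multiset.mem_cons_self a s)) (norm_nonneg _)
      (ih fun x hx => hs x (Multiset.mem_cons_of_mem hx))

lemma norm_prod_one_add_sub_sum_esymm_le {s : Multiset ℂ} (hs : ∀ x ∈ s, ‖1 + x‖ ≤ 1) (J : ℕ) :
    ‖(s.map (1 + ·)).prod - ∑ j ∈ Finset.range J, s.esymm j‖ ≤ (s.map norm).esymm J := by
  induction s using Multiset.induction_on generalizing J with
  | empty =>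
    cases J with
    | zero => simp [Multiset.esymm]
    | succ J => simp [Finset.sum_range_succ', Multiset.esymm, Multiset.powersetCard_zero_right]
  | cons a s ih =>
    have ih := ih fun x hx => hs x (Multiset.mem_cons_of_mem hx)
    cases J with
    | zero =>
      rw [Finset.sum_range_zero, sub_zero]
      refine (norm_multiset_prod_le_one fun x hx => ?_).trans_eq (by simp [Multiset.esymm])
      obtain ⟨y, hy, rfl⟩ := Multiset.mem_map.1 hx
      exact hs y hy
    | succ J =>
      have hsplit : ((a ::ₘ s).map (1 + ·)).prod - ∑ j ∈ Finset.range (J + 1), (a ::ₘ s).esymm j =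
          ((s.map (1 + ·)).prod - ∑ j ∈ Finset.range (J + 1), s.esymm j) +
            a * ((s.map (1 + ·)).prod - ∑ j ∈ Finset.range J, s.esymm j) := by
        have h0 : (a ::ₘ s).esymm 0 = s.esymm 0 := by simp [Multiset.esymm]
        simp_rw [Finset.sum_range_succ', esymm_cons_succ, Finset.sum_add_distrib, ← Finset.mul_sum,
          Multiset.map_cons, Multiset.prod_cons, h0]
        ring
      rw [hsplit, Multiset.map_cons, esymm_cons_succ]
      refine (norm_add_le _ _).trans (add_le_add (ih _) ?_)
      rw [norm_mul]
      gcongr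
      exact ih J

end ElementarySymmetric

section QuasiIndependence

variable {V ι : Type*}

open Classical in
/-- The events `A p`, `p ∈ P`, in the finite uniform probability space `Ω` are independent with
probabilities `a p` up to an error `ε`, as far as intersections of at most `J` of them go. -/
def QuasiIndependent (Ω : Finset V) (A : ι → V → Prop) (P : Finset ι) (a : ι → ℝ) (J : ℕ)
    (ε : ℝ) : Prop :=
  ∀ S ⊆ P, S.card ≤ J →
    |((Ω.filter fun v => ∀ p ∈ S, A p v).card : ℝ) - Ω.card * ∏ p ∈ S, a p| ≤ ε * Ω.card

variable {Ω : Finset V} {A : ι → V → Prop} {P : Finset ι} {a : ι → ℝ} {J : ℕ} {ε : ℝ}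

open Classical in
lemma sum_esymm_ite {R : Type*} [CommSemiring R] (w : R) (j : ℕ) :
    ∑ v ∈ Ω, (P.val.map fun p => if A p v then w else 0).esymm j =
      ∑ S ∈ P.powersetCard j, w ^ j * (Ω.filter fun v => ∀ p ∈ S, A p v).card := by
  simp_rw [Finset.esymm_map_val]
  rw [Finset.sum_comm]
  refine Finset.sum_congr rfl fun S hS => ?_
  simp_rw [Finset.prod_ite_zero, Finset.prod_const, (Finset.mem_powersetCard.1 hS).2]
  rw [← Finset.sum_filter, Finset.sum_const, nsmul_eq_mul, mul_comm]

open Classical in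
lemma QuasiIndependent.norm_sum_esymm_sub_le {𝕜 : Type*} [RCLike 𝕜]
    (hq : QuasiIndependent Ω A P a J ε) (w : 𝕜) {j : ℕ} (hj : j ≤ J) :
    ‖∑ v ∈ Ω, (P.val.map fun p => if A p v then w else 0).esymm j -
        Ω.card * (P.val.map fun p => w * (a p : 𝕜)).esymm j‖ ≤
      ‖w‖ ^ j * P.card.choose j * (ε * Ω.card) := by
  have hterm : ∀ S ∈ P.powersetCard j, ‖w ^ j * ((Ω.filter fun v => ∀ p ∈ S, A p v).card : 𝕜) -
      Ω.card * ∏ p ∈ S, w * (a p : 𝕜)‖ ≤ ‖w‖ ^ j * (ε * Ω.card) := fun S hS => by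
    obtain ⟨hSP, hSj⟩ := Finset.mem_powersetCard.1 hS
    have hfactor : w ^ j * ((Ω.filter fun v => ∀ p ∈ S, A p v).card : 𝕜) -
        Ω.card * ∏ p ∈ S, w * (a p : 𝕜) = w ^ j *
        (((Ω.filter fun v => ∀ p ∈ S, A p v).card - Ω.card * ∏ p ∈ S, a p : ℝ) : 𝕜) := by
      rw [Finset.prod_mul_distrib, Finset.prod_const, hSj]
      push_cast
      ring
    rw [hfactor, norm_mul, norm_pow, RCLike.norm_ofReal]
    gcongr
    exact hq S hSP (hSj.trans_le hj)
  rw [sum_esymm_ite, Finset.esymm_map_val, Finset.mul_sum, ← Finset.sum_sub_distrib]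
  refine (norm_sum_le_of_le _ hterm).trans_eq ?_
  rw [Finset.sum_const, Finset.card_powersetCard, nsmul_eq_mul]
  ring

lemma pow_mul_choose_le {y : ℝ} (hy0 : 0 ≤ y) (hy2 : y ≤ 2) (n : ℕ) {j J : ℕ} (hj : j ≤ J) :
    y ^ j * n.choose j ≤ (1 + 2 * n) ^ J :=
  calc y ^ j * (n.choose j : ℝ) ≤ 2 ^ j * (n : ℝ) ^ j := by
        gcongr
        exact_mod_cast Nat.choose_le_pow _ _
    _ = (2 * n) ^ j := (mul_pow _ _ _).symm
    _ ≤ (1 + 2 * n) ^ j := by gcongr; linarith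
    _ ≤ (1 + 2 * n) ^ J := pow_le_pow_right₀ (by simp) hj

lemma norm_one_add_mul_le_one {w : ℂ} (hw : ‖1 + w‖ ≤ 1) {t : ℝ} (h0 : 0 ≤ t) (h1 : t ≤ 1) :
    ‖1 + w * t‖ ≤ 1 :=
  calc ‖1 + w * t‖ = ‖((1 - t : ℝ) : ℂ) + t * (1 + w)‖ := by
        push_cast
        ring_nf
    _ ≤ (1 - t) + t * ‖1 + w‖ := by
        refine (norm_add_le _ _).trans_eq ?_
        rw [norm_mul, Complex.norm_of_nonneg h0, Complex.norm_of_nonneg (sub_nonneg.2 h1)]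
    _ ≤ 1 := by nlinarith

open Classical in
lemma one_add_pow_card_filter {R : Type*} [CommSemiring R] (w : R) (v : V) :
    (1 + w) ^ (P.filter (A · v)).card =
      ((P.val.map fun p => if A p v then w else 0).map (1 + ·)).prod := by
  rw [Multiset.map_map, ← Finset.prod_const, Finset.prod_filter]
  exact Finset.prod_congr rfl fun p _ => by by_cases h : A p v <;> simp [h]

open Classical in
lemma QuasiIndependent.norm_sum_sum_esymm_sub_le (hq : QuasiIndependent Ω A P a J ε) (hε : 0 ≤ ε)
    {w : ℂ} (hw : ‖w‖ ≤ 2) :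
    ‖∑ v ∈ Ω, ∑ j ∈ Finset.range J, (P.val.map fun p => if A p v then w else 0).esymm j -
        Ω.card * ∑ j ∈ Finset.range J, (P.val.map fun p => w * (a p : ℂ)).esymm j‖ ≤
      Ω.card * (J * (1 + 2 * P.card) ^ J * ε) := by
  rw [Finset.sum_comm, Finset.mul_sum, ← Finset.sum_sub_distrib]
  calc _ ≤ ∑ _ ∈ Finset.range J, (1 + 2 * P.card : ℝ) ^ J * (ε * Ω.card) := by
        refine norm_sum_le_of_le _ fun j hj => ?_
        have hjJ := (Finset.mem_range.1 hj).le
        refine (hq.norm_sum_esymm_sub_le w hjJ).trans ?_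
        gcongr
        exact pow_mul_choose_le (norm_nonneg w) hw _ hjJ
    _ = _ := by
        rw [Finset.sum_const, Finset.card_range, nsmul_eq_mul]
        ring

open Classical in
lemma QuasiIndependent.sum_esymm_le (hq : QuasiIndependent Ω A P a J ε) (hε : 0 ≤ ε)
    (ha : ∀ p ∈ P, 0 ≤ a p) {w : ℝ} (hw0 : 0 ≤ w) (hw2 : w ≤ 2) :
    ∑ v ∈ Ω, (P.val.map fun p => if A p v then w else 0).esymm J ≤
      Ω.card * ((1 + 2 * P.card) ^ J * ε +
        Real.exp (-J + Real.exp 1 * (w * ∑ p ∈ P, a p))) := by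
  have hmean : (P.val.map fun p => w * a p).esymm J ≤
      Real.exp (-J + Real.exp 1 * (w * ∑ p ∈ P, a p)) := by
    rw [Finset.mul_sum]
    refine esymm_le_exp (fun z hz => ?_) J
    obtain ⟨p, hp, rfl⟩ := Multiset.mem_map.1 hz
    exact mul_nonneg hw0 (ha p hp)
  have hdiff := (le_abs_self _).trans (hq.norm_sum_esymm_sub_le w le_rfl)
  rw [Real.norm_of_nonneg hw0] at hdiff
  calc _ ≤ Ω.card * (P.val.map fun p => w * a p).esymm J +
        w ^ J * P.card.choose J * (ε * Ω.card) := sub_le_iff_le_add'.1 hdiff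
    _ ≤ Ω.card * Real.exp (-J + Real.exp 1 * (w * ∑ p ∈ P, a p)) +
        (1 + 2 * P.card) ^ J * (ε * Ω.card) := by
        gcongr
        exact pow_mul_choose_le hw0 hw2 _ le_rfl
    _ = _ := by ring

open Classical in
lemma norm_one_add_pow_card_filter_sub_le {w : ℂ} (hw : ‖1 + w‖ ≤ 1) (v : V) (J : ℕ) :
    ‖(1 + w) ^ (P.filter (A · v)).card -
        ∑ j ∈ Finset.range J, (P.val.map fun p => if A p v then w else 0).esymm j‖ ≤
      (P.val.map fun p => if A p v then ‖w‖ else 0).esymm J := by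
  rw [one_add_pow_card_filter]
  refine (norm_prod_one_add_sub_sum_esymm_le (fun z hz => ?_) J).trans_eq ?_
  · obtain ⟨p, -, rfl⟩ := Multiset.mem_map.1 hz
    split_ifs <;> simp [hw]
  · simp only [Multiset.map_map, Function.comp_apply, apply_ite norm, norm_zero]

lemma norm_prod_one_add_mul_sub_le (ha : ∀ p ∈ P, 0 ≤ a p ∧ a p ≤ 1) {w : ℂ} (hw : ‖1 + w‖ ≤ 1)
    (J : ℕ) :
    ‖∏ p ∈ P, (1 + w * a p) - ∑ j ∈ Finset.range J, (P.val.map fun p => w * (a p : ℂ)).esymm j‖ ≤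
      Real.exp (-J + Real.exp 1 * (‖w‖ * ∑ p ∈ P, a p)) := by
  have hprod : ∏ p ∈ P, (1 + w * a p) = ((P.val.map fun p => w * (a p : ℂ)).map (1 + ·)).prod := by
    rw [Multiset.map_map]
    rfl
  rw [hprod]
  refine (norm_prod_one_add_sub_sum_esymm_le (fun z hz => ?_) J).trans
    ((esymm_le_exp (fun z hz => ?_) J).trans_eq ?_)
  · obtain ⟨p, hp, rfl⟩ := Multiset.mem_map.1 hz
    exact norm_one_add_mul_le_one hw (ha p hp).1 (ha p hp).2
  · obtain ⟨y, -, rfl⟩ := Multiset.mem_map.1 hz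
    exact norm_nonneg y
  · rw [Finset.mul_sum, Multiset.map_map]
    congr 3
    refine Finset.sum_congr rfl fun p hp => ?_
    simp [abs_of_nonneg (ha p hp).1]

open Classical in
lemma QuasiIndependent.norm_sum_pow_sub_le (hq : QuasiIndependent Ω A P a J ε) (hε : 0 ≤ ε)
    (ha : ∀ p ∈ P, 0 ≤ a p ∧ a p ≤ 1) {w : ℂ} (hw : ‖1 + w‖ ≤ 1) :
    ‖∑ v ∈ Ω, (1 + w) ^ (P.filter (A · v)).card - Ω.card * ∏ p ∈ P, (1 + w * a p)‖ ≤
      Ω.card * ((J + 1) * (1 + 2 * P.card) ^ J * ε +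
        2 * Real.exp (-J + Real.exp 1 * (‖w‖ * ∑ p ∈ P, a p))) := by
  have hw2 : ‖w‖ ≤ 2 := by
    simpa [one_add_one_eq_two] using norm_sub_le_of_le hw (norm_one (α := ℂ)).le
  have htrunc : ‖∑ v ∈ Ω, (1 + w) ^ (P.filter (A · v)).card -
      ∑ v ∈ Ω, ∑ j ∈ Finset.range J, (P.val.map fun p => if A p v then w else 0).esymm j‖ ≤
      Ω.card * ((1 + 2 * P.card) ^ J * ε +
        Real.exp (-J + Real.exp 1 * (‖w‖ * ∑ p ∈ P, a p))) := by
    rw [← Finset.sum_sub_distrib]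
    exact (norm_sum_le_of_le _ fun v _ => norm_one_add_pow_card_filter_sub_le hw v J).trans
      (hq.sum_esymm_le hε (fun p hp => (ha p hp).1) (norm_nonneg w) hw2)
  have hmain := hq.norm_sum_sum_esymm_sub_le hε hw2
  have hprod : ‖Ω.card * ∏ p ∈ P, (1 + w * a p) -
      Ω.card * ∑ j ∈ Finset.range J, (P.val.map fun p => w * (a p : ℂ)).esymm j‖ ≤
      Ω.card * Real.exp (-J + Real.exp 1 * (‖w‖ * ∑ p ∈ P, a p)) := by
    rw [← mul_sub, norm_mul, Complex.norm_natCast]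
    gcongr
    exact norm_prod_one_add_mul_sub_le ha hw J
  rw [norm_sub_rev] at hprod
  calc _ ≤ _ + (_ + _) := (norm_sub_le_norm_sub_add_norm_sub _ _ _).trans
        (add_le_add htrunc
          ((norm_sub_le_norm_sub_add_norm_sub _ _ _).trans (add_le_add hmain hprod)))
    _ = _ := by ring

end QuasiIndependence

/-! ### Prime divisors of ideals with a level of distribution -/

section LevelOfDistribution

variable {K}

open Classical in
lemma omegaI_eq_card_filter {m : Ideal (𝓞 K)} (hm : m ≠ ⊥) {x : ℝ} (hx : realNorm m ≤ x) :
    omegaI K m = ((primesLE K x).filter (· ∣ m)).card := by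
  refine Nat.subtype_card _ fun p => ?_
  rw [Finset.mem_filter, mem_primesLE]
  constructor
  · rintro ⟨⟨hp, -⟩, hpm⟩
    exact ⟨Ideal.isPrime_of_prime hp, hpm⟩
  · rintro ⟨hp, hpm⟩
    exact ⟨⟨Ideal.prime_of_isPrime (ne_zero_of_dvd_ne_zero hm hpm) hp,
      (realNorm_le_of_dvd hpm hm).trans hx⟩, hpm⟩

variable {V : Type*} {Ω : Finset V} {I : V → Ideal (𝓞 K)} {ℓ ε z : ℝ}

open Classical in
/-- Each ideal `d` of norm at most `ℓ` divides the expected proportion of the ideals `I v`,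
`v ∈ Ω`, up to the error `ε`: the family has level of distribution `ℓ`. -/
def HasLevelOfDistribution (Ω : Finset V) (I : V → Ideal (𝓞 K)) (ℓ ε : ℝ) : Prop :=
  ∀ d : Ideal (𝓞 K), d ≠ ⊥ → realNorm d ≤ ℓ →
    |((Ω.filter (d ∣ I ·)).card : ℝ) - Ω.card / realNorm d| ≤ ε * Ω.card

open Classical in
lemma HasLevelOfDistribution.quasiIndependent (h : HasLevelOfDistribution Ω I ℓ ε) (hz : 1 ≤ z)
    {J : ℕ} (hJ : z ^ J ≤ ℓ) :
    QuasiIndependent Ω (fun p v => p ∣ I v) (primesLE K z) (fun p => (realNorm p)⁻¹) J ε := by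
  intro S hS hSJ
  have hprime : ∀ p ∈ S, Prime p := fun p hp => (mem_primesLE.1 (hS hp)).1
  have hfilter : (Ω.filter fun v => ∀ p ∈ S, p ∣ I v) = Ω.filter (∏ p ∈ S, p ∣ I ·) :=
    Finset.filter_congr fun v _ => forall_dvd_iff_prod_dvd hprime (I v)
  rw [hfilter, Finset.prod_inv_distrib, ← realNorm_prod, ← div_eq_mul_inv]
  refine h _ (prod_primes_ne_zero hprime) ?_
  calc realNorm (∏ p ∈ S, p) = ∏ p ∈ S, realNorm p := realNorm_prod S
    _ ≤ ∏ _ ∈ S, z :=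
        Finset.prod_le_prod (fun _ _ => by positivity) fun p hp => (mem_primesLE.1 (hS hp)).2
    _ = z ^ S.card := Finset.prod_const z
    _ ≤ z ^ J := pow_le_pow_right₀ hz hSJ
    _ ≤ ℓ := hJ

lemma card_le_of_lt_realNorm {T : Finset (Ideal (𝓞 K))} (hT : ∀ p ∈ T, Prime p ∧ ℓ < realNorm p)
    (hℓ : 1 < ℓ) {m : Ideal (𝓞 K)} (hm : m ≠ ⊥) (hTm : ∀ p ∈ T, p ∣ m) {M : ℕ}
    (hM : realNorm m ≤ ℓ ^ M) : T.card ≤ M := by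
  rw [← pow_le_pow_iff_right₀ hℓ]
  calc ℓ ^ T.card = ∏ _ ∈ T, ℓ := (Finset.prod_const ℓ).symm
    _ ≤ ∏ p ∈ T, realNorm p :=
        Finset.prod_le_prod (fun _ _ => by linarith) fun p hp => (hT p hp).2.le
    _ = realNorm (∏ p ∈ T, p) := (realNorm_prod T).symm
    _ ≤ realNorm m :=
        realNorm_le_of_dvd ((forall_dvd_iff_prod_dvd (fun p hp => (hT p hp).1) m).1 hTm) hm
    _ ≤ ℓ ^ M := hM

lemma primesLE_mono {x y : ℝ} (hxy : x ≤ y) : primesLE K x ⊆ primesLE K y := fun p hp => by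
  rw [mem_primesLE] at *
  exact ⟨hp.1, hp.2.trans hxy⟩

open Classical in
lemma omegaI_sub_card_filter_mem_Icc (hzℓ : z ≤ ℓ) (hℓ : 1 < ℓ) {m : Ideal (𝓞 K)} (hm : m ≠ ⊥)
    {M : ℕ} (hM : realNorm m ≤ ℓ ^ M) :
    (omegaI K m : ℝ) - ((primesLE K z).filter (· ∣ m)).card ∈
      Set.Icc 0 ((((primesLE K ℓ \ primesLE K z).filter (· ∣ m)).card : ℝ) + M) := by
  set x := max (realNorm m) ℓ
  have hlarge : ((primesLE K x \ primesLE K ℓ).filter (· ∣ m)).card ≤ M := by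
    refine card_le_of_lt_realNorm (fun p hp => ?_) hℓ hm (fun p hp => (Finset.mem_filter.1 hp).2) hM
    simp only [Finset.mem_filter, Finset.mem_sdiff, mem_primesLE, not_and, not_le] at hp
    exact ⟨hp.1.1.1, hp.1.2 hp.1.1.1⟩
  have hcover : (primesLE K x).filter (· ∣ m) ⊆ (primesLE K z).filter (· ∣ m) ∪
      ((primesLE K ℓ \ primesLE K z).filter (· ∣ m) ∪
        (primesLE K x \ primesLE K ℓ).filter (· ∣ m)) := fun p => by
    simp only [Finset.mem_filter, Finset.mem_union, Finset.mem_sdiff]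
    tauto
  have hupper := (Finset.card_le_card hcover).trans
    ((Finset.card_union_le _ _).trans (Nat.add_le_add_left (Finset.card_union_le _ _) _))
  have hlower : ((primesLE K z).filter (· ∣ m)).card ≤ ((primesLE K x).filter (· ∣ m)).card :=
    Finset.card_le_card (Finset.filter_subset_filter _
      (primesLE_mono (hzℓ.trans (le_max_right _ _))))
  rw [omegaI_eq_card_filter hm (le_max_left _ _ : realNorm m ≤ x)]
  constructor
  · rw [sub_nonneg]
    exact_mod_cast hlower
  · rw [sub_le_iff_le_add']
    exact_mod_cast (by lia : _ ≤ _)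

open Classical in
lemma HasLevelOfDistribution.sum_card_filter_le (h : HasLevelOfDistribution Ω I ℓ ε)
    {P : Finset (Ideal (𝓞 K))} (hP : P ⊆ primesLE K ℓ) :
    ∑ v ∈ Ω, ((P.filter (· ∣ I v)).card : ℝ) ≤
      Ω.card * (∑ p ∈ P, (realNorm p)⁻¹ + P.card * ε) :=
  calc ∑ v ∈ Ω, ((P.filter (· ∣ I v)).card : ℝ) = ∑ p ∈ P, ((Ω.filter (p ∣ I ·)).card : ℝ) := by
        simp_rw [Finset.card_filter, Nat.cast_sum]
        exact Finset.sum_comm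
    _ ≤ ∑ p ∈ P, (Ω.card / realNorm p + ε * Ω.card) := Finset.sum_le_sum fun p hp => by
        obtain ⟨hp0, hpℓ⟩ := mem_primesLE.1 (hP hp)
        exact sub_le_iff_le_add'.1 ((le_abs_self _).trans (h p hp0.ne_zero hpℓ))
    _ = _ := by
        simp_rw [Finset.sum_add_distrib, Finset.sum_const, nsmul_eq_mul, div_eq_mul_inv,
          ← Finset.mul_sum]
        ring

open Classical in
lemma HasLevelOfDistribution.sum_abs_omegaI_sub_le (h : HasLevelOfDistribution Ω I ℓ ε)
    (hzℓ : z ≤ ℓ) (hℓ : 1 < ℓ) {M : ℕ} (hI : ∀ v ∈ Ω, I v ≠ ⊥ ∧ realNorm (I v) ≤ ℓ ^ M) :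
    ∑ v ∈ Ω, |(omegaI K (I v) : ℝ) - ((primesLE K z).filter (· ∣ I v)).card| ≤
      Ω.card * (primeRecipSum K ℓ - primeRecipSum K z +
        (primesLE K ℓ \ primesLE K z).card * ε + M) := by
  have hdiff : ∑ p ∈ primesLE K ℓ \ primesLE K z, (realNorm p)⁻¹ =
      primeRecipSum K ℓ - primeRecipSum K z :=
    eq_sub_of_add_eq (Finset.sum_sdiff (primesLE_mono hzℓ))
  calc _ ≤ ∑ v ∈ Ω, ((((primesLE K ℓ \ primesLE K z).filter (· ∣ I v)).card : ℝ) + M) :=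
        Finset.sum_le_sum fun v hv => by
          have := omegaI_sub_card_filter_mem_Icc hzℓ hℓ (hI v hv).1 (hI v hv).2
          rw [abs_of_nonneg this.1]
          exact this.2
    _ ≤ Ω.card * (∑ p ∈ primesLE K ℓ \ primesLE K z, (realNorm p)⁻¹ +
          (primesLE K ℓ \ primesLE K z).card * ε) + Ω.card * M := by
        rw [Finset.sum_add_distrib, Finset.sum_const, nsmul_eq_mul]
        gcongr
        exact h.sum_card_filter_le Finset.sdiff_subset
    _ = _ := by rw [hdiff, mul_add _ _ (M : ℝ)]

end LevelOfDistribution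

section Exponentials

lemma norm_prod_sub_prod_le_sum {ι : Type*} (P : Finset ι) {u v : ι → ℂ}
    (hu : ∀ p ∈ P, ‖u p‖ ≤ 1) (hv : ∀ p ∈ P, ‖v p‖ ≤ 1) :
    ‖∏ p ∈ P, u p - ∏ p ∈ P, v p‖ ≤ ∑ p ∈ P, ‖u p - v p‖ := by
  induction P using Finset.cons_induction with
  | empty => simp
  | cons q P hq ih =>
    rw [Finset.forall_mem_cons] at hu hv
    have hprod : ‖∏ p ∈ P, u p‖ ≤ 1 := by
      rw [norm_prod]
      exact Finset.prod_le_one (fun _ _ => norm_nonneg _) hu.2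
    rw [Finset.prod_cons, Finset.prod_cons, Finset.sum_cons,
      show u q * ∏ p ∈ P, u p - v q * ∏ p ∈ P, v p = (u q - v q) * ∏ p ∈ P, u p +
        v q * (∏ p ∈ P, u p - ∏ p ∈ P, v p) by ring]
    refine (norm_add_le _ _).trans ?_
    rw [norm_mul, norm_mul]
    exact add_le_add (mul_le_of_le_one_right (norm_nonneg _) hprod)
      ((mul_le_of_le_one_left (norm_nonneg _) hv.1).trans (ih hu.2 hv.2))

lemma re_nonpos_of_norm_one_add_le_one {w : ℂ} (hw : ‖1 + w‖ ≤ 1) : w.re ≤ 0 := by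
  simpa using (Complex.re_le_norm _).trans hw

lemma norm_exp_I_mul_sub_le (x y : ℝ) :
    ‖Complex.exp (Complex.I * x) - Complex.exp (Complex.I * y)‖ ≤ |x - y| := by
  have hfactor : Complex.exp (Complex.I * x) - Complex.exp (Complex.I * y) =
      Complex.exp (Complex.I * y) * (Complex.exp (Complex.I * (x - y : ℝ)) - 1) := by
    rw [mul_sub, ← Complex.exp_add]
    push_cast
    ring_nf
  rw [hfactor, norm_mul, Complex.norm_exp_I_mul_ofReal, one_mul]
  exact Real.norm_exp_I_mul_ofReal_sub_one_le

lemma norm_exp_I_mul_sub_taylor_le {τ : ℝ} (hτ : |τ| ≤ 1) :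
    ‖Complex.exp (Complex.I * τ) - 1 - Complex.I * τ + (τ : ℂ) ^ 2 / 2‖ ≤ |τ| ^ 3 := by
  have hnorm : ‖Complex.I * (τ : ℂ)‖ = |τ| := by simp
  have hexp := Complex.exp_bound (x := Complex.I * τ) (hnorm.trans_le hτ) (n := 3) (by simp)
  rw [hnorm] at hexp
  have hsum : Complex.exp (Complex.I * τ) -
        ∑ m ∈ Finset.range 3, (Complex.I * τ) ^ m / m.factorial =
      Complex.exp (Complex.I * τ) - 1 - Complex.I * τ + (τ : ℂ) ^ 2 / 2 := by
    simp only [Finset.sum_range_succ, Finset.sum_range_zero, mul_pow, Complex.I_sq]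
    simp [Nat.factorial]
    ring
  rw [hsum] at hexp
  exact hexp.trans (mul_le_of_le_one_right (by positivity) (by norm_num [Nat.factorial]))

lemma exists_norm_prod_one_add_sub_exp_le : ∃ C : ℝ, 0 < C ∧ ∀ P : Finset (Ideal (𝓞 K)),
    (∀ p ∈ P, p ≠ ⊥) → ∀ w : ℂ, ‖w‖ ≤ 1 → ‖1 + w‖ ≤ 1 →
    ‖∏ p ∈ P, (1 + w * ((realNorm p)⁻¹ : ℝ)) -
      Complex.exp (w * (∑ p ∈ P, (realNorm p)⁻¹ : ℝ))‖ ≤ C * ‖w‖ ^ 2 := by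
  obtain ⟨C, hC, hsq⟩ := exists_sum_realNorm_sq_inv_le K
  refine ⟨C, hC, fun P hP w hw hw1 => ?_⟩
  have hinv : ∀ p ∈ P, 0 ≤ (realNorm p)⁻¹ ∧ (realNorm p)⁻¹ ≤ 1 := fun p hp =>
    ⟨by positivity, inv_le_one_of_one_le₀ (one_le_realNorm (hP p hp))⟩
  have hterm : ∀ p ∈ P, ‖1 + w * ((realNorm p)⁻¹ : ℝ) - Complex.exp (w * ((realNorm p)⁻¹ : ℝ))‖ ≤
      ‖w‖ ^ 2 * (realNorm p ^ 2)⁻¹ := fun p hp => by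
    have hnorm : ‖w * ((realNorm p)⁻¹ : ℝ)‖ = ‖w‖ * (realNorm p)⁻¹ := by
      rw [norm_mul, Complex.norm_of_nonneg (hinv p hp).1]
    have hexp := Complex.norm_exp_sub_one_sub_id_le
      (hnorm.trans_le (mul_le_one₀ hw (hinv p hp).1 (hinv p hp).2))
    rwa [sub_sub, norm_sub_rev, hnorm, mul_pow, inv_pow] at hexp
  rw [Complex.ofReal_sum, Finset.mul_sum, Complex.exp_sum]
  refine (norm_prod_sub_prod_le_sum P (fun p hp => ?_) fun p hp => ?_).trans
    ((Finset.sum_le_sum hterm).trans ?_)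
  · exact norm_one_add_mul_le_one hw1 (hinv p hp).1 (hinv p hp).2
  · rw [Complex.norm_exp, Complex.re_mul_ofReal, Real.exp_le_one_iff]
    exact mul_nonpos_of_nonpos_of_nonneg (re_nonpos_of_norm_one_add_le_one hw1) (hinv p hp).1
  · rw [← Finset.mul_sum, mul_comm]
    gcongr
    exact hsq P hP

end Exponentials

/-! ### The truncation parameters -/

section Truncation

open Real (exp log)
open Asymptotics

lemma tendsto_log_log_atTop : Tendsto (fun x : ℝ => log (log x)) atTop atTop :=
  Real.tendsto_log_atTop.comp Real.tendsto_log_atTop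

lemma tendsto_norm_sqrt_log_log_atTop : Tendsto (fun x : ℝ => ‖√(log (log x))‖) atTop atTop :=
  tendsto_norm_atTop_atTop.comp (Real.tendsto_sqrt_atTop.comp tendsto_log_log_atTop)

/-- The number of terms kept in inclusion-exclusion for a family with level of distribution
`ℓ`. -/
def truncDepth (ℓ : ℝ) : ℕ := ⌈log (log ℓ)⌉₊

/-- The size of the primes taken into account for a family with level of distribution `ℓ`: a
product of `truncDepth ℓ` of them has norm at most `√ℓ`. -/
def truncLevel (ℓ : ℝ) : ℝ := ℓ ^ (1 / (2 * truncDepth ℓ) : ℝ)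

lemma one_le_truncDepth {ℓ : ℝ} (hℓ : 0 < log (log ℓ)) : 1 ≤ (truncDepth ℓ : ℝ) :=
  Nat.one_le_cast.2 (Nat.one_le_ceil_iff.2 hℓ)

lemma truncDepth_le {ℓ : ℝ} (hℓ : 0 < log (log ℓ)) : (truncDepth ℓ : ℝ) ≤ log (log ℓ) + 1 :=
  (Nat.ceil_lt_add_one hℓ.le).le

lemma truncLevel_pow_truncDepth {ℓ : ℝ} (hℓ0 : 0 ≤ ℓ) (hℓ : 0 < log (log ℓ)) :
    truncLevel ℓ ^ truncDepth ℓ = √ℓ := by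
  have hJ := one_le_truncDepth hℓ
  rw [truncLevel, ← Real.rpow_mul_natCast hℓ0, Real.sqrt_eq_rpow]
  congr 1
  field_simp

lemma log_log_truncLevel {ℓ : ℝ} (hℓ : 1 < ℓ) (hℓ' : 0 < log (log ℓ)) :
    log (log (truncLevel ℓ)) = log (log ℓ) - log (2 * truncDepth ℓ) := by
  have hJ := one_le_truncDepth hℓ'
  rw [truncLevel, Real.log_rpow (by linarith), one_div_mul_eq_div,
    Real.log_div (Real.log_pos hℓ).ne' (by positivity)]

lemma isLittleO_log_truncDepth :
    (fun ℓ => log (2 * truncDepth ℓ)) =o[atTop] fun ℓ => √(log (log ℓ)) := by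
  have hlog : (fun y : ℝ => log (4 * y)) =o[atTop] fun y => √y := by
    have hmul : (fun y : ℝ => log 4 + log y) =o[atTop] fun y => √y := by
      simp_rw [Real.sqrt_eq_rpow]
      exact (isLittleO_const_left.2 (Or.inr (tendsto_norm_atTop_atTop.comp
        (tendsto_rpow_atTop one_half_pos)))).add (isLittleO_log_rpow_atTop one_half_pos)
    refine hmul.congr' ?_ EventuallyEq.rfl
    filter_upwards [eventually_gt_atTop 0] with y hy
    rw [Real.log_mul four_ne_zero hy.ne']
  refine IsBigO.trans_isLittleO (IsBigO.of_bound' ?_) (hlog.comp_tendsto tendsto_log_log_atTop)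
  filter_upwards [tendsto_log_log_atTop.eventually_ge_atTop 1] with ℓ hℓ
  have hJ := one_le_truncDepth (one_pos.trans_le hℓ)
  rw [Function.comp_apply, Real.norm_of_nonneg (Real.log_nonneg (by linarith)),
    Real.norm_of_nonneg (Real.log_nonneg (by linarith))]
  exact Real.log_le_log (by linarith) (by linarith [truncDepth_le (one_pos.trans_le hℓ)])

lemma tendsto_truncLevel : Tendsto truncLevel atTop atTop := by
  have hsub : Tendsto (fun ℓ => log (log ℓ) - log (2 * truncDepth ℓ)) atTop atTop := by
    have hequiv := isLittleO_log_truncDepth.trans_isBigO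
      (g := fun ℓ => √(log (log ℓ))) (k := fun ℓ => log (log ℓ)) ?_
    · exact (IsEquivalent.sub_isLittleO IsEquivalent.refl hequiv).symm.tendsto_atTop
        tendsto_log_log_atTop
    · refine IsBigO.of_bound' ?_
      filter_upwards [tendsto_log_log_atTop.eventually_ge_atTop 1] with ℓ hℓ
      rw [Real.norm_of_nonneg (Real.sqrt_nonneg _), Real.norm_of_nonneg (by linarith)]
      exact Real.sqrt_le_iff.2 ⟨by linarith, by nlinarith⟩
  refine (Real.tendsto_exp_atTop.comp (Real.tendsto_exp_atTop.comp hsub)).congr' ?_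
  filter_upwards [eventually_gt_atTop 1, tendsto_log_log_atTop.eventually_gt_atTop 0] with ℓ hℓ hℓ'
  have hJ := one_le_truncDepth hℓ'
  have hz0 : 0 < truncLevel ℓ := Real.rpow_pos_of_pos (by linarith) _
  have hz : 0 < log (truncLevel ℓ) := by
    rw [truncLevel, Real.log_rpow (by linarith)]
    exact mul_pos (by positivity) (Real.log_pos hℓ)
  rw [Function.comp_apply, Function.comp_apply, ← log_log_truncLevel hℓ hℓ', Real.exp_log hz,
    Real.exp_log hz0]

open Classical in
lemma exists_card_primesLE_le :
    ∃ C : ℝ, 0 < C ∧ ∀ x : ℝ, 1 ≤ x → (primesLE K x).card ≤ C * x := by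
  obtain ⟨_, C, _, hC, hcard⟩ := exists_card_idealsLE_bounds K
  exact ⟨C, hC, fun x hx =>
    (Nat.cast_le.2 (Finset.card_le_card (Finset.filter_subset _ _))).trans (hcard x hx).2⟩

lemma isLittleO_primeRecipSum_truncLevel_sub :
    (fun ℓ => primeRecipSum K (truncLevel ℓ) - log (log ℓ)) =o[atTop]
      fun ℓ => √(log (log ℓ)) := by
  obtain ⟨C, hC, hmertens⟩ := exists_abs_primeRecipSum_sub_loglog_le K
  have hbound : (fun ℓ => primeRecipSum K (truncLevel ℓ) - log (log ℓ)) =O[atTop]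
      fun ℓ => C + log (2 * truncDepth ℓ) := by
    refine IsBigO.of_bound' ?_
    filter_upwards [eventually_gt_atTop 1, tendsto_log_log_atTop.eventually_gt_atTop 0,
      tendsto_truncLevel.eventually_ge_atTop 3] with ℓ hℓ hℓ' hz
    have hm := hmertens _ hz
    have hJ := Real.log_nonneg (by linarith [one_le_truncDepth hℓ'] : (1:ℝ) ≤ 2 * truncDepth ℓ)
    rw [log_log_truncLevel hℓ hℓ', abs_le] at hm
    rw [Real.norm_eq_abs, Real.norm_of_nonneg (by positivity), abs_le]
    constructor <;> linarith
  exact hbound.trans_isLittleO ((isLittleO_const_left.2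
    (Or.inr tendsto_norm_sqrt_log_log_atTop)).add isLittleO_log_truncDepth)

lemma isLittleO_primeRecipSum_sub_truncLevel :
    (fun ℓ => primeRecipSum K ℓ - primeRecipSum K (truncLevel ℓ)) =o[atTop]
      fun ℓ => √(log (log ℓ)) := by
  obtain ⟨C, -, hmertens⟩ := exists_abs_primeRecipSum_sub_loglog_le K
  have hmertens' : (fun ℓ => primeRecipSum K ℓ - log (log ℓ)) =o[atTop] fun ℓ => √(log (log ℓ)) :=
    (IsBigO.of_bound C (by
      filter_upwards [eventually_ge_atTop 3] with ℓ hℓ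
      simpa using hmertens ℓ hℓ) : _ =O[atTop] fun _ => (1 : ℝ)).trans_isLittleO
    (isLittleO_const_left.2 (Or.inr tendsto_norm_sqrt_log_log_atTop))
  simpa using hmertens'.sub (isLittleO_primeRecipSum_truncLevel_sub K)

lemma pow_truncDepth_le {A ℓ : ℝ} (hA : 1 ≤ A) (hℓ : 1 < ℓ) (hℓ' : 0 < log (log ℓ)) :
    A ^ truncDepth ℓ ≤ A * log ℓ ^ log A :=
  calc A ^ truncDepth ℓ = A ^ (truncDepth ℓ : ℝ) := (Real.rpow_natCast _ _).symm
    _ ≤ A ^ (log (log ℓ) + 1) := Real.rpow_le_rpow_of_exponent_le hA (truncDepth_le hℓ')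
    _ = A * log ℓ ^ log A := by
        rw [Real.rpow_add_one (by linarith), mul_comm, Real.rpow_def_of_pos (by linarith),
          Real.rpow_def_of_pos (Real.log_pos hℓ), mul_comm (log A)]

lemma tendsto_truncation_error (C : ℝ) :
    Tendsto (fun ℓ => (truncDepth ℓ + 1) * (1 + 2 * (primesLE K (truncLevel ℓ)).card : ℝ) ^
      truncDepth ℓ * (C / ℓ)) atTop (𝓝 0) := by
  obtain ⟨C', hC', hcard⟩ := exists_card_primesLE_le K
  set A := 2 * (1 + 2 * C')
  have hsmall : Tendsto (fun ℓ => log ℓ ^ log A / ℓ ^ (1 / 2 : ℝ) * (A * |C|)) atTop (𝓝 0) := by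
    simpa using ((isLittleO_log_rpow_rpow_atTop (log A)
      one_half_pos).tendsto_div_nhds_zero).mul_const (A * |C|)
  refine squeeze_zero_norm' ?_ hsmall
  filter_upwards [eventually_gt_atTop 1, tendsto_log_log_atTop.eventually_gt_atTop 0,
    tendsto_truncLevel.eventually_ge_atTop 1] with ℓ hℓ hℓ' hz
  set J := truncDepth ℓ
  set z := truncLevel ℓ
  have hP := hcard z hz
  have hJ : (J : ℝ) + 1 ≤ 2 ^ J := mod_cast Nat.lt_two_pow_self
  calc ‖(J + 1) * (1 + 2 * (primesLE K z).card : ℝ) ^ J * (C / ℓ)‖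
      = (J + 1) * (1 + 2 * (primesLE K z).card : ℝ) ^ J * (|C| / ℓ) := by
        rw [norm_mul, norm_div, Real.norm_of_nonneg (by positivity), Real.norm_eq_abs C,
          Real.norm_of_nonneg (by linarith : (0 : ℝ) ≤ ℓ)]
    _ ≤ 2 ^ J * ((1 + 2 * C') * z) ^ J * (|C| / ℓ) := by
        gcongr
        linarith
    _ = A ^ J * √ℓ * (|C| / ℓ) := by
        rw [← truncLevel_pow_truncDepth (by linarith) hℓ', ← mul_pow, ← mul_pow, ← mul_assoc]
    _ ≤ A * log ℓ ^ log A * √ℓ * (|C| / ℓ) := by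
        gcongr
        exact pow_truncDepth_le (by linarith) hℓ hℓ'
    _ = log ℓ ^ log A / ℓ ^ (1 / 2 : ℝ) * (A * |C|) := by
        have hdiv : √ℓ / ℓ = (√ℓ)⁻¹ := Real.sqrt_div_self
        rw [← Real.sqrt_eq_rpow, div_eq_mul_inv (log ℓ ^ log A), ← hdiv]
        ring

end Truncation

/-! ### Erdős–Kac for families with a level of distribution -/

section FamilyCLT

open Asymptotics
open Complex (exp)

variable {K} {α : Type*} {l : Filter α} {ℓ L : α → ℝ}

/-- The phase `exp (i t (ω(m) - L) / √L)`, whose averages over ideals `m` are the values at `t` of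
the characteristic function of `ω(m)`, standardised with mean and variance `L`. -/
def omegaPhase (t L : ℝ) (m : Ideal (𝓞 K)) : ℂ :=
  exp (Complex.I * (t / √L * (omegaI K m - L) : ℝ))

omit [NumberField K] in
lemma norm_omegaPhase (t L : ℝ) (m : Ideal (𝓞 K)) : ‖omegaPhase t L m‖ = 1 :=
  Complex.norm_exp_I_mul_ofReal _

lemma isLittleO_of_norm_le_mul {f : α → ℂ} {n E : α → ℝ} (hE : Tendsto E l (𝓝 0))
    (hf : ∀ᶠ a in l, ‖f a‖ ≤ n a * E a) : f =o[l] n := by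
  have hn : (fun a => n a * E a) =o[l] fun a => n a * 1 :=
    (isBigO_refl n l).mul_isLittleO ((isLittleO_one_iff ℝ).2 hE)
  simp only [mul_one] at hn
  exact (IsBigO.of_bound' (hf.mono fun a ha => ha.trans (le_abs_self _))).trans_isLittleO hn

lemma tendsto_div_sqrt (hL : Tendsto L l atTop) (t : ℝ) :
    Tendsto (fun a => t / √(L a)) l (𝓝 0) :=
  tendsto_const_nhds.div_atTop (Real.tendsto_sqrt_atTop.comp hL)

lemma tendsto_div_sqrt_mul {f : α → ℝ} (hf : f =o[l] fun a => √(L a)) (t : ℝ) :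
    Tendsto (fun a => t / √(L a) * f a) l (𝓝 0) := by
  have := hf.tendsto_div_nhds_zero.const_mul t
  rw [mul_zero] at this
  exact this.congr fun a => by ring

lemma tendsto_div_sqrt_sq_mul (hL : Tendsto L l atTop) {R : α → ℝ}
    (hR : (fun a => R a - L a) =o[l] fun a => √(L a)) (t : ℝ) :
    Tendsto (fun a => (t / √(L a)) ^ 2 * R a) l (𝓝 (t ^ 2)) := by
  have hcross := (tendsto_div_sqrt hL t).mul (tendsto_div_sqrt_mul hR t)
  rw [zero_mul] at hcross
  have hsum := (tendsto_const_nhds (x := t ^ 2)).add hcross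
  rw [add_zero] at hsum
  refine hsum.congr' ?_
  filter_upwards [hL.eventually_gt_atTop 0] with a ha
  have hsq : (t / √(L a)) ^ 2 * L a = t ^ 2 := by
    rw [div_pow, Real.sq_sqrt ha.le, div_mul_cancel₀ _ ha.ne']
  linear_combination -hsq

/-- The left side is the characteristic function of the Poisson law of mean `R`, centred at `L` and
scaled by `τ`. -/
lemma tendsto_poisson_charFun {τ R : α → ℝ} {s : ℝ} (hτ : Tendsto τ l (𝓝 0))
    (hlin : Tendsto (fun a => τ a * (R a - L a)) l (𝓝 0))
    (hsq : Tendsto (fun a => τ a ^ 2 * R a) l (𝓝 s)) :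
    Tendsto (fun a => exp (-(Complex.I * (τ a * L a : ℝ))) *
        exp ((exp (Complex.I * τ a) - 1) * R a)) l
      (𝓝 (Real.exp (-s / 2) : ℝ)) := by
  have hcube : Tendsto
      (fun a => (exp (Complex.I * τ a) - 1 - Complex.I * τ a + (τ a : ℂ) ^ 2 / 2) * R a)
      l (𝓝 0) := by
    have hbound : Tendsto (fun a => |τ a| * |τ a ^ 2 * R a|) l (𝓝 0) := by
      simpa using hτ.abs.mul hsq.abs
    refine squeeze_zero_norm' ?_ hbound
    filter_upwards [hτ.eventually (Metric.closedBall_mem_nhds 0 one_pos)] with a ha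
    rw [norm_mul, Complex.norm_real, Real.norm_eq_abs, abs_mul, abs_pow, ← mul_assoc, ← pow_succ']
    gcongr
    exact norm_exp_I_mul_sub_taylor_le (by simpa using ha)
  have hexponent := (hcube.add ((hlin.ofReal).const_mul Complex.I)).sub
    ((hsq.div_const 2).ofReal)
  convert (Complex.continuous_exp.tendsto _).comp hexponent using 2 with a
  · rw [← Complex.exp_add, Function.comp_apply]
    congr 1
    push_cast
    ring
  · push_cast
    ring_nf

lemma isBigO_sqrt_log_log (hℓ : Tendsto ℓ l atTop)
    (hL : (fun a => L a - Real.log (Real.log (ℓ a))) =O[l] fun _ => (1 : ℝ)) :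
    Tendsto L l atTop ∧ (fun a => √(Real.log (Real.log (ℓ a)))) =O[l] fun a => √(L a) := by
  have hloglog := tendsto_log_log_atTop.comp hℓ
  have hequiv : L ~[l] fun a => Real.log (Real.log (ℓ a)) :=
    hL.trans_isLittleO (isLittleO_const_left.2 (Or.inr (tendsto_norm_atTop_atTop.comp hloglog)))
  have hLtop : Tendsto L l atTop := hequiv.symm.tendsto_atTop hloglog
  refine ⟨hLtop, ?_⟩
  simp_rw [Real.sqrt_eq_rpow]
  exact hequiv.symm.isBigO.rpow (by norm_num) (hLtop.eventually_ge_atTop 0)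

/-- The number of prime divisors of `m` of norm at most `truncLevel ℓ`. -/
def truncOmega (ℓ : ℝ) (m : Ideal (𝓞 K)) : ℕ := by
  classical exact ((primesLE K (truncLevel ℓ)).filter (· ∣ m)).card

lemma isLittleO_primeRecipSum_truncLevel_comp_sub (hℓ : Tendsto ℓ l atTop)
    (hL : (fun a => L a - Real.log (Real.log (ℓ a))) =O[l] fun _ => (1 : ℝ)) :
    (fun a => primeRecipSum K (truncLevel (ℓ a)) - L a) =o[l] fun a => √(L a) := by
  obtain ⟨hLtop, hsqrt⟩ := isBigO_sqrt_log_log hℓ hL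
  have hL' : (fun a => L a - Real.log (Real.log (ℓ a))) =o[l] fun a => √(L a) :=
    hL.trans_isLittleO (isLittleO_const_left.2 (Or.inr
      (tendsto_norm_atTop_atTop.comp (Real.tendsto_sqrt_atTop.comp hLtop))))
  refine ((((isLittleO_primeRecipSum_truncLevel_sub K).comp_tendsto hℓ).trans_isBigO hsqrt).sub
    hL').congr_left fun a => ?_
  simp only [Function.comp_apply]
  ring

lemma one_le_truncLevel {x : ℝ} (hx : 1 ≤ x) : 1 ≤ truncLevel x :=
  Real.one_le_rpow hx (by positivity)

lemma truncLevel_le_self {x : ℝ} (hx : 1 ≤ x) (hx' : 0 < Real.log (Real.log x)) :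
    truncLevel x ≤ x := by
  have hJ : 1 ≤ (truncDepth x : ℝ) := one_le_truncDepth hx'
  refine Real.rpow_le_self_of_one_le hx ?_
  rw [div_le_one (by linarith)]
  linarith

variable {V : Type*} {I : V → Ideal (𝓞 K)}

lemma norm_sum_omegaPhase_sub_truncated_le (Ω : Finset V) (t ℓ L : ℝ) :
    ‖∑ v ∈ Ω, omegaPhase t L (I v) - exp (-(Complex.I * (t / √L * L : ℝ))) *
      ∑ v ∈ Ω, exp (Complex.I * (t / √L : ℝ)) ^ truncOmega ℓ (I v)‖ ≤
      |t / √L| * ∑ v ∈ Ω, |(omegaI K (I v) : ℝ) - truncOmega ℓ (I v)| := by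
  rw [Finset.mul_sum, ← Finset.sum_sub_distrib, Finset.mul_sum]
  refine norm_sum_le_of_le _ fun v _ => ?_
  have htrunc : exp (-(Complex.I * (t / √L * L : ℝ))) *
      exp (Complex.I * (t / √L : ℝ)) ^ truncOmega ℓ (I v) =
      exp (Complex.I * (t / √L * (truncOmega ℓ (I v) - L) : ℝ)) := by
    rw [← Complex.exp_nat_mul, ← Complex.exp_add]
    push_cast
    ring_nf
  rw [htrunc, ← abs_mul]
  refine (norm_exp_I_mul_sub_le _ _).trans_eq ?_
  ring_nf

variable {Ω : α → Finset V} {C : ℝ}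

lemma isLittleO_sum_omegaPhase_sub_truncated (hℓ : Tendsto ℓ l atTop)
    (hL : (fun a => L a - Real.log (Real.log (ℓ a))) =O[l] fun _ => (1 : ℝ)) (hC : 0 ≤ C)
    (hΩ : ∀ᶠ a in l, HasLevelOfDistribution (Ω a) I (ℓ a) (C / ℓ a)) {M : ℕ}
    (hM : ∀ᶠ a in l, ∀ v ∈ Ω a, I v ≠ ⊥ ∧ realNorm (I v) ≤ ℓ a ^ M) (t : ℝ) :
    (fun a => ∑ v ∈ Ω a, omegaPhase t (L a) (I v) -
      exp (-(Complex.I * (t / √(L a) * L a : ℝ))) *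
        ∑ v ∈ Ω a, exp (Complex.I * (t / √(L a) : ℝ)) ^ truncOmega (ℓ a) (I v)) =o[l]
      fun a => ((Ω a).card : ℝ) := by
  obtain ⟨C', hC', hprimes⟩ := exists_card_primesLE_le K
  obtain ⟨hLtop, hsqrt⟩ := isBigO_sqrt_log_log hℓ hL
  have herror : Tendsto (fun a => |t / √(L a) * (primeRecipSum K (ℓ a) -
      primeRecipSum K (truncLevel (ℓ a)))| + |t / √(L a)| * (C' * C + M)) l (𝓝 0) := by
    have hrecip := tendsto_div_sqrt_mul
      (((isLittleO_primeRecipSum_sub_truncLevel K).comp_tendsto hℓ).trans_isBigO hsqrt) t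
    simpa using hrecip.abs.add ((tendsto_div_sqrt hLtop t).abs.mul_const (C' * C + M))
  refine isLittleO_of_norm_le_mul herror ?_
  filter_upwards [hΩ, hM, hℓ.eventually_gt_atTop 1,
    (tendsto_log_log_atTop.comp hℓ).eventually_gt_atTop 0] with a hΩa hMa hℓa hloga
  have hsum := hΩa.sum_abs_omegaI_sub_le (truncLevel_le_self hℓa.le hloga) hℓa hMa
  have hcard : ((primesLE K (ℓ a) \ primesLE K (truncLevel (ℓ a))).card : ℝ) * (C / ℓ a) ≤
      C' * C :=
    calc _ ≤ (C' * ℓ a) * (C / ℓ a) := by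
          gcongr
          exact (Nat.cast_le.2 (Finset.card_le_card Finset.sdiff_subset)).trans (hprimes _ hℓa.le)
      _ = C' * C := by field_simp
  calc _ ≤ |t / √(L a)| * ∑ v ∈ Ω a, |(omegaI K (I v) : ℝ) - truncOmega (ℓ a) (I v)| :=
        norm_sum_omegaPhase_sub_truncated_le _ _ _ _
    _ ≤ |t / √(L a)| * ((Ω a).card * (|primeRecipSum K (ℓ a) -
          primeRecipSum K (truncLevel (ℓ a))| + C' * C + M)) := by
        gcongr
        exact hsum.trans (by gcongr; exact le_abs_self _)
    _ = _ := by rw [abs_mul]; ring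

lemma tendsto_neg_truncDepth_add (hℓ : Tendsto ℓ l atTop) {τ : α → ℝ} (hτ : Tendsto τ l (𝓝 0)) :
    Tendsto (fun a => -(truncDepth (ℓ a) : ℝ) +
      Real.exp 1 * (|τ a| * primeRecipSum K (truncLevel (ℓ a)))) l atBot := by
  have hloglog := tendsto_log_log_atTop.comp hℓ
  have hrecip : (fun a => primeRecipSum K (truncLevel (ℓ a))) =O[l]
      fun a => Real.log (Real.log (ℓ a)) := by
    have hsqrt : (fun a => √(Real.log (Real.log (ℓ a)))) =O[l]
        fun a => Real.log (Real.log (ℓ a)) :=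
      IsBigO.of_bound' <| (hloglog.eventually_ge_atTop 1).mono fun a ha => by
        rw [Function.comp_apply] at ha
        rw [Real.norm_of_nonneg (Real.sqrt_nonneg _), Real.norm_of_nonneg (zero_le_one.trans ha)]
        exact Real.sqrt_le_iff.2 ⟨zero_le_one.trans ha, le_self_pow₀ ha two_ne_zero⟩
    simpa using ((((isLittleO_primeRecipSum_truncLevel_sub K).comp_tendsto hℓ).isBigO.trans
      hsqrt).add (isBigO_refl (fun a => Real.log (Real.log (ℓ a))) l))
  have hsmall : (fun a => Real.exp 1 * (|τ a| * primeRecipSum K (truncLevel (ℓ a)))) =o[l]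
      fun a => Real.log (Real.log (ℓ a)) := by
    have := ((isLittleO_one_iff ℝ).2 (by simpa using hτ.abs)).mul_isBigO hrecip
    simpa using this.const_mul_left (Real.exp 1)
  have hequiv : (fun a => Real.log (Real.log (ℓ a)) - Real.exp 1 *
      (|τ a| * primeRecipSum K (truncLevel (ℓ a)))) ~[l] fun a => Real.log (Real.log (ℓ a)) :=
    IsEquivalent.refl.sub_isLittleO hsmall
  refine tendsto_atBot_mono (fun a => ?_)
    (tendsto_neg_atTop_atBot.comp (hequiv.symm.tendsto_atTop hloglog))
  have := Nat.le_ceil (Real.log (Real.log (ℓ a)))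
  simp only [Function.comp_apply, truncDepth]
  linarith

lemma isLittleO_sum_pow_truncOmega_sub_prod (hℓ : Tendsto ℓ l atTop)
    (hC : 0 ≤ C) (hΩ : ∀ᶠ a in l, HasLevelOfDistribution (Ω a) I (ℓ a) (C / ℓ a)) {τ : α → ℝ}
    (hτ : Tendsto τ l (𝓝 0)) :
    (fun a => ∑ v ∈ Ω a, exp (Complex.I * τ a) ^ truncOmega (ℓ a) (I v) -
      (Ω a).card * ∏ p ∈ primesLE K (truncLevel (ℓ a)),
        (1 + (exp (Complex.I * τ a) - 1) * ((realNorm p)⁻¹ : ℝ))) =o[l]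
      fun a => ((Ω a).card : ℝ) := by
  have htail : Tendsto (fun a => 2 * Real.exp (-truncDepth (ℓ a) + Real.exp 1 *
      (|τ a| * primeRecipSum K (truncLevel (ℓ a))))) l (𝓝 0) := by
    simpa using (Real.tendsto_exp_atBot.comp (tendsto_neg_truncDepth_add hℓ hτ)).const_mul 2
  have herror := ((tendsto_truncation_error K C).comp hℓ).add htail
  rw [add_zero] at herror
  refine isLittleO_of_norm_le_mul herror ?_
  filter_upwards [hΩ, hℓ.eventually_gt_atTop 1,
    (tendsto_log_log_atTop.comp hℓ).eventually_gt_atTop 0] with a hΩa hℓa hloga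
  have hpow : truncLevel (ℓ a) ^ truncDepth (ℓ a) ≤ ℓ a := by
    rw [truncLevel_pow_truncDepth (by linarith) hloga]
    exact Real.sqrt_le_iff.2 ⟨by linarith, by nlinarith⟩
  have hnorm : ‖1 + (exp (Complex.I * τ a) - 1)‖ ≤ 1 := by
    rw [add_sub_cancel, Complex.norm_exp_I_mul_ofReal]
  have hsum := (hΩa.quasiIndependent (one_le_truncLevel hℓa.le) hpow).norm_sum_pow_sub_le
    (by positivity)
    (fun p hp => ⟨by positivity, inv_le_one_of_one_le₀ (one_le_realNorm
      (mem_primesLE.1 hp).1.ne_zero)⟩) hnorm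
  rw [add_sub_cancel] at hsum
  refine hsum.trans ?_
  dsimp only [Function.comp_apply, primeRecipSum]
  gcongr
  exact Real.norm_exp_I_mul_ofReal_sub_one_le

lemma tendsto_prod_charFun (hℓ : Tendsto ℓ l atTop)
    (hL : (fun a => L a - Real.log (Real.log (ℓ a))) =O[l] fun _ => (1 : ℝ)) (t : ℝ) :
    Tendsto (fun a => exp (-(Complex.I * (t / √(L a) * L a : ℝ))) *
      ∏ p ∈ primesLE K (truncLevel (ℓ a)),
        (1 + (exp (Complex.I * (t / √(L a) : ℝ)) - 1) * ((realNorm p)⁻¹ : ℝ))) l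
      (𝓝 (Real.exp (-t ^ 2 / 2) : ℝ)) := by
  have hLtop := (isBigO_sqrt_log_log hℓ hL).1
  have hR := isLittleO_primeRecipSum_truncLevel_comp_sub (K := K) hℓ hL
  have hτ := tendsto_div_sqrt hLtop t
  have hpoisson := tendsto_poisson_charFun hτ (tendsto_div_sqrt_mul hR t)
    (tendsto_div_sqrt_sq_mul hLtop hR t)
  obtain ⟨C, hC, hprod⟩ := exists_norm_prod_one_add_sub_exp_le K
  have herror : Tendsto (fun a => C * |t / √(L a)| ^ 2) l (𝓝 0) := by
    simpa using (hτ.abs.pow 2).const_mul C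
  refine (tendsto_iff_of_dist (squeeze_zero_norm' ?_ herror)).1 hpoisson
  filter_upwards [hτ.eventually (Metric.closedBall_mem_nhds 0 one_pos)] with a ha
  have hw : ‖exp (Complex.I * (t / √(L a) : ℝ)) - 1‖ ≤ |t / √(L a)| :=
    Real.norm_exp_I_mul_ofReal_sub_one_le
  have hnorm : ‖1 + (exp (Complex.I * (t / √(L a) : ℝ)) - 1)‖ ≤ 1 := by
    rw [add_sub_cancel, Complex.norm_exp_I_mul_ofReal]
  rw [Real.norm_of_nonneg dist_nonneg, dist_comm, dist_eq_norm, ← mul_sub, norm_mul, ← mul_neg,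
    ← Complex.ofReal_neg, Complex.norm_exp_I_mul_ofReal, one_mul]
  calc _ ≤ C * ‖exp (Complex.I * (t / √(L a) : ℝ)) - 1‖ ^ 2 :=
        hprod _ (fun p hp => (mem_primesLE.1 hp).1.ne_zero) _
          (hw.trans (mem_closedBall_zero_iff.1 ha)) hnorm
    _ ≤ C * |t / √(L a)| ^ 2 := by gcongr

theorem isLittleO_sum_omegaPhase (hℓ : Tendsto ℓ l atTop)
    (hL : (fun a => L a - Real.log (Real.log (ℓ a))) =O[l] fun _ => (1 : ℝ)) (hC : 0 ≤ C)
    (hΩ : ∀ᶠ a in l, HasLevelOfDistribution (Ω a) I (ℓ a) (C / ℓ a)) {M : ℕ}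
    (hM : ∀ᶠ a in l, ∀ v ∈ Ω a, I v ≠ ⊥ ∧ realNorm (I v) ≤ ℓ a ^ M) (t : ℝ) :
    (fun a => ∑ v ∈ Ω a, omegaPhase t (L a) (I v) - (Ω a).card * (Real.exp (-t ^ 2 / 2) : ℝ))
      =o[l] fun a => ((Ω a).card : ℝ) := by
  have hS1 := isLittleO_sum_omegaPhase_sub_truncated hℓ hL hC hΩ hM t
  have hS2 := isLittleO_sum_pow_truncOmega_sub_prod hℓ hC hΩ
    (tendsto_div_sqrt (isBigO_sqrt_log_log hℓ hL).1 t)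
  have hS3 := (tendsto_prod_charFun (K := K) hℓ hL t).sub_const (Real.exp (-t ^ 2 / 2) : ℂ)
  rw [sub_self] at hS3
  have hphase : (fun a => exp (-(Complex.I * (t / √(L a) * L a : ℝ)))) =O[l] fun _ => (1 : ℝ) :=
    IsBigO.of_bound' (Eventually.of_forall fun a => by
      rw [← mul_neg, ← Complex.ofReal_neg, Complex.norm_exp_I_mul_ofReal, norm_one])
  have hcard : (fun a => ((Ω a).card : ℂ)) =O[l] fun a => ((Ω a).card : ℝ) :=
    IsBigO.of_bound' (Eventually.of_forall fun a => by simp)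
  have hS2' := hphase.mul_isLittleO hS2
  have hS3' := hcard.mul_isLittleO ((isLittleO_one_iff ℝ).2 hS3)
  simp only [one_mul, mul_one] at hS2' hS3'
  exact ((hS1.add hS2').add hS3').congr_left fun a => by ring

end FamilyCLT

/-! ### Points of a finite-index subgroup of `ℤⁿ` in a box -/

section BoxCount

variable {ι Q : Type*}

lemma abs_prod_sub_prod_le (s : Finset ι) {m x : ι → ℝ} (hx : ∀ i ∈ s, 0 ≤ x i)
    (h : ∀ i ∈ s, |m i - x i| ≤ 1) :
    |∏ i ∈ s, m i - ∏ i ∈ s, x i| ≤ ∏ i ∈ s, (x i + 1) - ∏ i ∈ s, x i := by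
  classical
  induction s using Finset.induction_on with
  | empty => simp
  | insert j s hj ih =>
    rw [Finset.forall_mem_insert] at hx h
    rw [Finset.prod_insert hj, Finset.prod_insert hj, Finset.prod_insert hj]
    have hm : |m j| ≤ x j + 1 := by
      have := abs_le.1 h.1
      exact abs_le.2 ⟨by linarith, by linarith⟩
    have hprod : 0 ≤ ∏ i ∈ s, x i := Finset.prod_nonneg hx.2
    calc |m j * ∏ i ∈ s, m i - x j * ∏ i ∈ s, x i|
        = |m j * (∏ i ∈ s, m i - ∏ i ∈ s, x i) + (m j - x j) * ∏ i ∈ s, x i| := by ring_nf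
      _ ≤ |m j| * |∏ i ∈ s, m i - ∏ i ∈ s, x i| + |m j - x j| * ∏ i ∈ s, x i := by
          refine (abs_add_le _ _).trans_eq ?_
          rw [abs_mul, abs_mul, abs_of_nonneg hprod]
      _ ≤ (x j + 1) * (∏ i ∈ s, (x i + 1) - ∏ i ∈ s, x i) + 1 * ∏ i ∈ s, x i := by
          gcongr
          · linarith [hx.1]
          · exact ih hx.2 h.2
          · exact h.1
      _ = _ := by ring

lemma one_add_pow_sub_one_le {u : ℝ} (h0 : 0 ≤ u) (h1 : u ≤ 1) (n : ℕ) :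
    (1 + u) ^ n - 1 ≤ 2 ^ n * u := by
  induction n with
  | zero => simpa using h0
  | succ n ih =>
    have hpow : (1 + u) ^ n ≤ 2 ^ n := pow_le_pow_left₀ (by linarith) (by linarith) n
    have hmul := mul_le_mul_of_nonneg_right hpow h0
    calc (1 + u) ^ (n + 1) - 1 = ((1 + u) ^ n - 1) + (1 + u) ^ n * u := by ring
      _ ≤ 2 ^ n * u + 2 ^ n * u := add_le_add ih hmul
      _ = 2 ^ (n + 1) * u := by ring

lemma abs_card_Ico_filter_zmod_eq_sub_le (N : ℕ) [NeZero N] {a b : ℤ} (hab : a ≤ b) (c : ZMod N) :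
    |(((Finset.Ico a b).filter fun k : ℤ => (k : ZMod N) = c).card : ℝ) - ((b - a : ℤ) : ℝ) / N| ≤
      1 := by
  have hN : (0 : ℤ) < N := by exact_mod_cast Nat.pos_of_ne_zero (NeZero.ne N)
  have hfilter : ((Finset.Ico a b).filter fun k : ℤ => (k : ZMod N) = c) =
      (Finset.Ico a b).filter fun k : ℤ => k ≡ (c.val : ℤ) [ZMOD N] := by
    refine Finset.filter_congr fun k _ => ?_
    rw [← ZMod.intCast_eq_intCast_iff]
    simp
  set p : ℚ := ((b : ℚ) - (c.val : ℤ)) / (N : ℤ)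
  set q : ℚ := ((a : ℚ) - (c.val : ℤ)) / (N : ℤ)
  have hqp : q ≤ p := by
    have : (a : ℚ) ≤ b := by exact_mod_cast hab
    have : (0 : ℚ) < (N : ℤ) := by exact_mod_cast hN
    simp only [p, q]
    gcongr
  have hcard : ((((Finset.Ico a b).filter fun k : ℤ => (k : ZMod N) = c).card : ℤ) : ℚ) =
      ⌈p⌉ - ⌈q⌉ := by
    rw [hfilter, Int.Ico_filter_modEq_card a b hN (c.val : ℤ),
      max_eq_left (sub_nonneg.2 (Int.ceil_mono hqp)), Int.cast_sub]
  have hpq : p - q = ((b - a : ℤ) : ℚ) / N := by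
    simp only [p, q]
    push_cast
    ring
  have hp := Int.ceil_lt_add_one p
  have hp' := Int.le_ceil p
  have hq := Int.ceil_lt_add_one q
  have hq' := Int.le_ceil q
  have hℚ : |((((Finset.Ico a b).filter fun k : ℤ => (k : ZMod N) = c).card : ℤ) : ℚ) -
      ((b - a : ℤ) : ℚ) / N| ≤ 1 := by
    rw [hcard, ← hpq]
    exact abs_le.2 ⟨by linarith, by linarith⟩
  exact_mod_cast hℚ

variable [AddCommGroup Q]

lemma exists_addMonoidHom_zmod_lift [Finite ι] (f : (ι → ℤ) →+ Q) {N : ℕ}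
    (hN : ∀ y : Q, N • y = 0) :
    ∃ ψ : (ι → ZMod N) →+ Q, ∀ v : ι → ℤ, ψ (fun i => (v i : ZMod N)) = f v := by
  classical
  cases nonempty_fintype ι
  let g : ι → (ZMod N →+ Q) := fun i =>
    ZMod.lift N ⟨zmultiplesHom Q (f (Pi.single i 1)), by simp [hN]⟩
  refine ⟨∑ i, (g i).comp (Pi.evalAddMonoidHom _ i), fun v => ?_⟩
  have hv : v = ∑ i, v i • (Pi.single i (1 : ℤ) : ι → ℤ) := by
    ext j
    simp [Finset.sum_apply, Pi.single_apply]
  conv_rhs => rw [hv, map_sum]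
  simp only [g, AddMonoidHom.finsetSum_apply, AddMonoidHom.comp_apply, Pi.evalAddMonoidHom_apply,
    ZMod.lift_coe, zmultiplesHom_apply, map_zsmul]

open Classical in
lemma card_filter_eq_zero_mul_card {G : Type*} [AddGroup G] [Fintype G] {ψ : G →+ Q}
    (hψ : Function.Surjective ψ) :
    (Finset.univ.filter fun c => ψ c = 0).card * Nat.card Q = Nat.card G := by
  have hker : Nat.card ψ.ker = (Finset.univ.filter fun c => ψ c = 0).card :=
    Nat.subtype_card _ fun c => by simp [AddMonoidHom.mem_ker]
  rw [AddSubgroup.card_eq_card_quotient_mul_card_addSubgroup ψ.ker, hker,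
    Nat.card_congr (QuotientAddGroup.quotientKerEquivOfSurjective ψ hψ).toEquiv, mul_comm]

variable [Fintype ι]

open Classical in
lemma card_piFinset_filter_zmod (s : ι → Finset ℤ) {N : ℕ} (Z : Finset (ι → ZMod N)) :
    ((Fintype.piFinset s).filter fun v => (fun i => (v i : ZMod N)) ∈ Z).card =
      ∑ c ∈ Z, ∏ i, ((s i).filter fun k : ℤ => (k : ZMod N) = c i).card := by
  refine (Finset.card_eq_sum_card_fiberwise (t := Z) (f := fun (v : ι → ℤ) i => (v i : ZMod N))
    fun v hv => (Finset.mem_filter.1 hv).2).trans ?_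
  refine Finset.sum_congr rfl fun c hc => ?_
  rw [← Fintype.card_piFinset]
  congr 1
  ext v
  simp only [Finset.mem_filter, Fintype.mem_piFinset, forall_and, ← funext_iff]
  exact ⟨fun h => ⟨h.1.1, h.2⟩, fun h => ⟨⟨h.1, h.2 ▸ hc⟩, h.2⟩⟩

lemma prod_add_one_sub_prod_le {u : ℝ} (hu0 : 0 < u) (hu1 : u ≤ 1) {x : ι → ℝ}
    (hx : ∀ i, u⁻¹ ≤ x i) :
    ∏ i, (x i + 1) - ∏ i, x i ≤ (∏ i, x i) * (2 ^ Fintype.card ι * u) := by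
  have hx0 : ∀ i, 0 ≤ x i := fun i => (inv_pos.2 hu0).le.trans (hx i)
  have hprod : ∏ i, (x i + 1) ≤ (∏ i, x i) * (1 + u) ^ Fintype.card ι :=
    calc ∏ i, (x i + 1) ≤ ∏ i, (x i * (1 + u)) :=
          Finset.prod_le_prod (fun i _ => by linarith [hx0 i]) fun i _ => by
            have := (inv_le_iff_one_le_mul₀ hu0).1 (hx i)
            linarith
      _ = _ := by rw [Finset.prod_mul_distrib, Finset.prod_const, Finset.card_univ]
  have hpow := mul_le_mul_of_nonneg_left (one_add_pow_sub_one_le hu0.le hu1 (Fintype.card ι))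
    (Finset.prod_nonneg fun i (_ : i ∈ Finset.univ) => hx0 i)
  linarith

lemma card_piFinset_Ico [DecidableEq ι] {a b : ι → ℤ} (hab : ∀ i, a i ≤ b i) :
    ((Fintype.piFinset fun i => Finset.Ico (a i) (b i)).card : ℝ) =
      ∏ i, ((b i - a i : ℤ) : ℝ) := by
  rw [Fintype.card_piFinset, Nat.cast_prod]
  refine Finset.prod_congr rfl fun i _ => ?_
  rw [Int.card_Ico]
  exact_mod_cast Int.toNat_of_nonneg (sub_nonneg.2 (hab i))

open Classical in
lemma abs_card_box_filter_mem_sub_le {H : AddSubgroup (ι → ℤ)} [H.FiniteIndex]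
    {a b : ι → ℤ} {ℓ : ℝ} (hℓ : (H.index : ℝ) ≤ ℓ)
    (hab : ∀ i, ℓ ≤ ((b i - a i : ℤ) : ℝ)) :
    |(((Fintype.piFinset fun i => Finset.Ico (a i) (b i)).filter (· ∈ H)).card : ℝ) -
      ((Fintype.piFinset fun i => Finset.Ico (a i) (b i)).card : ℝ) / H.index| ≤
      2 ^ Fintype.card ι / ℓ * ((Fintype.piFinset fun i => Finset.Ico (a i) (b i)).card : ℝ) := by
  set N := H.index
  have hN0 : 0 < (N : ℝ) :=
    Nat.cast_pos.2 (Nat.pos_of_ne_zero AddSubgroup.FiniteIndex.index_ne_zero)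
  have : NeZero N := ⟨AddSubgroup.FiniteIndex.index_ne_zero⟩
  have hℓ0 : 0 < ℓ := hN0.trans_le hℓ
  have hba : ∀ i, a i ≤ b i := fun i => by
    have : (0 : ℝ) ≤ ((b i - a i : ℤ) : ℝ) := hℓ0.le.trans (hab i)
    exact sub_nonneg.1 (by exact_mod_cast this)
  obtain ⟨ψ, hψ⟩ := exists_addMonoidHom_zmod_lift (QuotientAddGroup.mk' H) (N := N)
    fun y => card_nsmul_eq_zero'
  have hψsurj : Function.Surjective ψ := fun y => by
    obtain ⟨v, hv⟩ := QuotientAddGroup.mk'_surjective H y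
    exact ⟨_, (hψ v).trans hv⟩
  set Z := (Finset.univ : Finset (ι → ZMod N)).filter fun c => ψ c = 0 with hZ
  have hZcard : Z.card * N = N ^ Fintype.card ι := by
    have hcard := card_filter_eq_zero_mul_card hψsurj
    rw [← AddSubgroup.index_eq_card, Nat.card_fun, Nat.card_zmod,
      Nat.card_eq_fintype_card (α := ι)] at hcard
    convert hcard
  set r : ι → ZMod N → ℝ := fun i c =>
    (((Finset.Ico (a i) (b i)).filter fun k : ℤ => (k : ZMod N) = c).card : ℝ)
  set x : ι → ℝ := fun i => ((b i - a i : ℤ) : ℝ) / N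
  have hzeros : (((Fintype.piFinset fun i => Finset.Ico (a i) (b i)).filter
      (· ∈ H)).card : ℝ) = ∑ c ∈ Z, ∏ i, r i (c i) := by
    simp_rw [r, ← Nat.cast_prod, ← Nat.cast_sum, ← card_piFinset_filter_zmod, hZ,
      Finset.mem_filter_univ, hψ, QuotientAddGroup.mk'_apply, QuotientAddGroup.eq_zero_iff]
  have hbox : ((Fintype.piFinset fun i => Finset.Ico (a i) (b i)).card : ℝ) =
      Z.card * N * ∏ i, x i := by
    rw [card_piFinset_Ico hba, Finset.prod_div_distrib, Finset.prod_const, Finset.card_univ,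
      ← Nat.cast_mul, hZcard, Nat.cast_pow, mul_div_cancel₀ _ (by positivity)]
  have hterm : ∀ c : ι → ZMod N,
      |∏ i, r i (c i) - ∏ i, x i| ≤ (∏ i, x i) * (2 ^ Fintype.card ι * (N / ℓ)) := fun c =>
    (abs_prod_sub_prod_le _ (fun i _ => div_nonneg (hℓ0.le.trans (hab i)) hN0.le) fun i _ =>
      abs_card_Ico_filter_zmod_eq_sub_le N (hba i) (c i)).trans <|
      prod_add_one_sub_prod_le (by positivity) ((div_le_one hℓ0).2 hℓ) fun i => by
        rw [inv_div]
        exact div_le_div_of_nonneg_right (hab i) hN0.le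
  calc _ = |∑ c ∈ Z, (∏ i, r i (c i) - ∏ i, x i)| := by
        rw [hzeros, hbox, Finset.sum_sub_distrib, Finset.sum_const, nsmul_eq_mul]
        field_simp
    _ ≤ ∑ c ∈ Z, (∏ i, x i) * (2 ^ Fintype.card ι * (N / ℓ)) :=
        (Finset.abs_sum_le_sum_abs _ _).trans (Finset.sum_le_sum fun c _ => hterm c)
    _ = _ := by
        rw [Finset.sum_const, nsmul_eq_mul, hbox]
        ring

end BoxCount

/-! ### Averages over the lattice points of a dilated region -/

section LatticePoints

open Metric
open scoped Pointwise

variable {ι : Type*} [Fintype ι]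

lemma exists_finset_sum_volume_ge_sub {V : Type*} {μ : V → ENNReal} {v : ENNReal} (hv : v ≠ ⊤)
    (h : v ≤ ∑' c, μ c) {ε : ℝ} (hε : 0 < ε) :
    ∃ F : Finset V, v ≤ ∑ c ∈ F, μ c + ENNReal.ofReal ε := by
  by_contra! hcon
  have hle : ∑' c, μ c + ENNReal.ofReal ε ≤ v :=
    le_of_tendsto (ENNReal.summable.hasSum.add_const _) (Eventually.of_forall fun F => (hcon F).le)
  exact (ENNReal.lt_add_right hv (by simpa using hε)).not_ge
    ((add_le_add_left h _).trans hle)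

lemma exists_disjoint_closedBalls_volume_le_tsum {D : Set (ι → ℝ)} (hf : volume (frontier D) = 0) :
    ∃ (t : Set (ι → ℝ)) (r : (ι → ℝ) → ℝ), (∀ c ∈ t, 0 < r c ∧ closedBall c (r c) ⊆ D) ∧
      t.PairwiseDisjoint (fun c => closedBall c (r c)) ∧
      volume D ≤ ∑' c : t, volume (closedBall (c : ι → ℝ) (r c)) := by
  have hR : ∀ x : ι → ℝ, ∃ R > 0, x ∈ interior D → closedBall x R ⊆ D := fun x => by
    by_cases hx : x ∈ interior D
    · obtain ⟨R, hR, h⟩ := nhds_basis_closedBall.mem_iff.1 (mem_interior_iff_mem_nhds.1 hx)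
      exact ⟨R, hR, fun _ => h⟩
    · exact ⟨1, one_pos, fun h => absurd h hx⟩
  choose R hR0 hR using hR
  obtain ⟨t, r, htc, hts, hr, hcov, hdisj⟩ :=
    Besicovitch.exists_disjoint_closedBall_covering_ae (volume : Measure (ι → ℝ))
      (fun _ => Set.Ioi 0) (interior D)
      (fun x _ δ hδ => ⟨δ / 2, by simp [hδ], by simp [hδ]⟩) R (fun x _ => hR0 x)
  refine ⟨t, r, fun c hc => ⟨(hr c hc).2.1, ?_⟩, hdisj, ?_⟩
  · exact (closedBall_subset_closedBall (hr c hc).2.2.le).trans (hR c (hts hc))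
  · set U := ⋃ x ∈ t, closedBall x (r x)
    have hDU : D ⊆ frontier D ∪ ((interior D \ U) ∪ U) := by
      rw [Set.sdiff_union_self, ← Set.union_assoc, Set.union_comm (frontier D),
        ← closure_eq_interior_union_frontier]
      exact subset_closure.trans Set.subset_union_left
    calc volume D ≤ volume (frontier D) + (volume (interior D \ U) + volume U) :=
          (measure_mono hDU).trans <| (measure_union_le _ _).trans <|
            add_le_add_right (measure_union_le _ _) _
      _ = volume U := by rw [hf, hcov, zero_add, zero_add]
      _ ≤ _ := measure_biUnion_le _ htc _

lemma exists_disjoint_closedBalls_volume_le {D : Set (ι → ℝ)} (hb : Bornology.IsBounded D)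
    (hf : volume (frontier D) = 0) {ε : ℝ} (hε : 0 < ε) :
    ∃ (T : Finset (ι → ℝ)) (r : (ι → ℝ) → ℝ), (∀ c ∈ T, 0 < r c ∧ closedBall c (r c) ⊆ D) ∧
      (T : Set (ι → ℝ)).PairwiseDisjoint (fun c => closedBall c (r c)) ∧
      volume.real D ≤ ∑ c ∈ T, (2 * r c) ^ Fintype.card ι + ε := by
  classical
  obtain ⟨t, r, hr, hdisj, hle⟩ := exists_disjoint_closedBalls_volume_le_tsum hf
  obtain ⟨F, hF⟩ := exists_finset_sum_volume_ge_sub hb.measure_lt_top.ne hle hε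
  have hFt : ((F.image Subtype.val : Finset (ι → ℝ)) : Set (ι → ℝ)) ⊆ t := by simp
  refine ⟨F.image Subtype.val, r, fun c hc => hr c (hFt hc), hdisj.subset hFt, ?_⟩
  have hr0 : ∀ c : t, 0 ≤ (2 * r c) ^ Fintype.card ι := fun c =>
    pow_nonneg (mul_nonneg zero_le_two (hr _ c.2).1.le) _
  rw [Finset.sum_image fun a _ b _ h => Subtype.ext h]
  rw [Finset.sum_congr rfl fun (c : t) _ => Real.volume_pi_closedBall _ (hr _ c.2).1.le,
    ← ENNReal.ofReal_sum_of_nonneg fun c _ => hr0 c,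
    ← ENNReal.ofReal_add (Finset.sum_nonneg fun c _ => hr0 c) hε.le] at hF
  exact ENNReal.toReal_le_of_le_ofReal
    (add_nonneg (Finset.sum_nonneg fun c _ => hr0 c) hε.le) hF

open Classical in
/-- The integer points of `s` times the closed sup-norm ball of centre `c` and radius `r`. -/
def latticeCube (c : ι → ℝ) (r s : ℝ) : Finset (ι → ℤ) :=
  Fintype.piFinset fun i => Finset.Ico ⌈s * (c i - r)⌉ (⌊s * (c i + r)⌋ + 1)

lemma mem_latticeCube {c : ι → ℝ} {r s : ℝ} (hr : 0 ≤ r) (hs : 0 < s) (v : ι → ℤ) :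
    v ∈ latticeCube c r s ↔ s⁻¹ • (fun i => (v i : ℝ)) ∈ closedBall c r := by
  classical
  rw [mem_closedBall, dist_pi_le_iff hr, latticeCube, Fintype.mem_piFinset]
  refine forall_congr' fun i => ?_
  rw [Finset.mem_Ico, Int.lt_add_one_iff, Int.ceil_le, Int.le_floor, Real.dist_eq, abs_le,
    neg_le_sub_iff_le_add, sub_le_iff_le_add', Pi.smul_apply, smul_eq_mul, inv_mul_eq_div,
    ← sub_le_iff_le_add, le_div_iff₀ hs, div_le_iff₀ hs, mul_comm s, mul_comm s]

lemma le_latticeCube_side (x r s : ℝ) :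
    2 * r * s - 1 ≤ ((⌊s * (x + r)⌋ + 1 - ⌈s * (x - r)⌉ : ℤ) : ℝ) := by
  have h1 := Int.ceil_lt_add_one (s * (x - r))
  have h2 := Int.lt_floor_add_one (s * (x + r))
  push_cast
  linarith

lemma le_card_latticeCube {c : ι → ℝ} {r s : ℝ} (h : 1 ≤ 2 * r * s) :
    (2 * r * s - 1) ^ Fintype.card ι ≤ ((latticeCube c r s).card : ℝ) := by
  classical
  rw [latticeCube, Fintype.card_piFinset, Nat.cast_prod, ← Finset.card_univ, ← Finset.prod_const]
  refine Finset.prod_le_prod (fun i _ => by linarith) fun i _ => ?_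
  rw [Int.card_Ico]
  exact (le_latticeCube_side _ _ _).trans (by exact_mod_cast Int.self_le_toNat _)

omit [Fintype ι] in
lemma intCast_mem_span_range_basisFun_iff [Finite ι] {y : ι → ℝ} :
    y ∈ Submodule.span ℤ (Set.range (Pi.basisFun ℝ ι)) ↔ ∃ v : ι → ℤ, (fun i => (v i : ℝ)) = y := by
  rw [Module.Basis.mem_span_iff_repr_mem]
  simp only [Pi.basisFun_repr, Set.mem_range, algebraMap_int_eq, eq_intCast, Classical.skolem,
    funext_iff]

lemma tendsto_card_latticePoints_div_pow {D : Set (ι → ℝ)} (hb : Bornology.IsBounded D)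
    (hm : MeasurableSet D) (hf : volume (frontier D) = 0)
    (hmono : ∀ ⦃x y : ℝ⦄, 0 < x → x ≤ y → x • D ⊆ y • D) :
    Tendsto (fun s : ℝ => (Nat.card {v : ι → ℤ // s⁻¹ • (fun i => (v i : ℝ)) ∈ D} : ℝ) /
      s ^ Fintype.card ι) atTop (𝓝 (volume.real D)) := by
  refine (tendsto_card_div_pow_atTop_volume' D hb hm hf hmono).congr' ?_
  filter_upwards [eventually_gt_atTop 0] with s hs
  congr 2
  symm
  refine Nat.card_congr (Equiv.ofBijective (fun v => ⟨s⁻¹ • (fun i => (v.1 i : ℝ)), v.2,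
    Set.smul_mem_smul_set (intCast_mem_span_range_basisFun_iff.2 ⟨v.1, rfl⟩)⟩) ⟨?_, ?_⟩)
  · intro v w hvw
    have hvw' := smul_right_injective (ι → ℝ) (inv_ne_zero hs.ne') (congrArg Subtype.val hvw)
    exact Subtype.ext (funext fun i => by exact_mod_cast congrFun hvw' i)
  · rintro ⟨x, hxD, y, hy, rfl⟩
    obtain ⟨v, rfl⟩ := intCast_mem_span_range_basisFun_iff.1 hy
    exact ⟨⟨v, hxD⟩, rfl⟩

section Regions

variable {D : Set (ι → ℝ)} {α : Type*} {l : Filter α} {s : α → ℝ}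
  {S : α → Finset (ι → ℤ)}

lemma tendsto_card_div_pow_of_mem_iff (hb : Bornology.IsBounded D)
    (hm : MeasurableSet D) (hf : volume (frontier D) = 0)
    (hmono : ∀ ⦃x y : ℝ⦄, 0 < x → x ≤ y → x • D ⊆ y • D) (hs : Tendsto s l atTop)
    (hS : ∀ᶠ a in l, ∀ v, v ∈ S a ↔ (s a)⁻¹ • (fun i => (v i : ℝ)) ∈ D) :
    Tendsto (fun a => ((S a).card : ℝ) / s a ^ Fintype.card ι) l (𝓝 (volume.real D)) := by
  refine ((tendsto_card_latticePoints_div_pow hb hm hf hmono).comp hs).congr' ?_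
  filter_upwards [hS] with a ha
  rw [Function.comp_apply, ← Nat.card_congr (Equiv.subtypeEquivRight ha), Nat.card_eq_finsetCard]

lemma eventually_le_card_biUnion_latticeCube (hs : Tendsto s l atTop) {T : Finset (ι → ℝ)}
    {r : (ι → ℝ) → ℝ} (hr : ∀ c ∈ T, 0 < r c) {V : ℝ}
    (hV : V < ∑ c ∈ T, (2 * r c) ^ Fintype.card ι) :
    ∀ᶠ a in l, V * s a ^ Fintype.card ι ≤
      ∑ c ∈ T, ((latticeCube c (r c) (s a)).card : ℝ) := by
  have hlim : Tendsto (fun a => ∑ c ∈ T, (2 * r c - (s a)⁻¹) ^ Fintype.card ι) l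
      (𝓝 (∑ c ∈ T, (2 * r c - 0) ^ Fintype.card ι)) :=
    tendsto_finsetSum _ fun c _ => (tendsto_const_nhds.sub hs.inv_tendsto_atTop).pow _
  simp only [sub_zero] at hlim
  have hside : ∀ᶠ a in l, ∀ c ∈ T, 1 ≤ 2 * r c * s a := by
    rw [Finset.eventually_all]
    exact fun c hc => (hs.const_mul_atTop (mul_pos two_pos (hr c hc))).eventually_ge_atTop 1
  filter_upwards [hlim.eventually_const_le hV, hside, hs.eventually_gt_atTop 0] with a ha hsa hs0
  calc V * s a ^ Fintype.card ι
      ≤ (∑ c ∈ T, (2 * r c - (s a)⁻¹) ^ Fintype.card ι) * s a ^ Fintype.card ι := by gcongr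
    _ = ∑ c ∈ T, (2 * r c * s a - 1) ^ Fintype.card ι := by
        rw [Finset.sum_mul]
        refine Finset.sum_congr rfl fun c _ => ?_
        rw [← mul_pow, sub_mul, inv_mul_cancel₀ hs0.ne']
    _ ≤ _ := Finset.sum_le_sum fun c hc => le_card_latticeCube (hsa c hc)

lemma eventually_latticeCube_subset (hs : Tendsto s l atTop)
    (hS : ∀ᶠ a in l, ∀ v, v ∈ S a ↔ (s a)⁻¹ • (fun i => (v i : ℝ)) ∈ D) {c : ι → ℝ} {r : ℝ}
    (hr : 0 < r) (hD : closedBall c r ⊆ D) : ∀ᶠ a in l, latticeCube c r (s a) ⊆ S a := by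
  filter_upwards [hS, hs.eventually_gt_atTop 0] with a ha hsa v hv
  exact (ha v).2 (hD ((mem_latticeCube hr.le hsa v).1 hv))

lemma pairwiseDisjoint_latticeCube {T : Finset (ι → ℝ)} {r : (ι → ℝ) → ℝ} (hr : ∀ c ∈ T, 0 < r c)
    (hT : (T : Set (ι → ℝ)).PairwiseDisjoint fun c => closedBall c (r c)) {s : ℝ} (hs : 0 < s) :
    (T : Set (ι → ℝ)).PairwiseDisjoint fun c => latticeCube c (r c) s := fun c hc c' hc' hne =>
  Finset.disjoint_left.2 fun v hv hv' => Set.disjoint_left.1 (hT hc hc' hne)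
    ((mem_latticeCube (hr c hc).le hs v).1 hv) ((mem_latticeCube (hr c' hc').le hs v).1 hv')

open Classical in
lemma norm_sum_le_add_of_biUnion_subset {V W : Type*} {T : Finset W} {Q : W → Finset V}
    (hQ : (T : Set W).PairwiseDisjoint Q) {S : Finset V} (hS : ∀ c ∈ T, Q c ⊆ S) {g : V → ℂ} {B : ℝ}
    (hg : ∀ v, ‖g v‖ ≤ B) :
    ‖∑ v ∈ S, g v‖ ≤ ∑ c ∈ T, ‖∑ v ∈ Q c, g v‖ + B * (S.card - ∑ c ∈ T, ((Q c).card : ℝ)) := by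
  have hUS : T.biUnion Q ⊆ S := Finset.biUnion_subset.2 hS
  have hU : ∑ v ∈ T.biUnion Q, g v = ∑ c ∈ T, ∑ v ∈ Q c, g v := Finset.sum_biUnion hQ
  rw [← Finset.sum_sdiff hUS, hU, add_comm]
  refine (norm_add_le _ _).trans (add_le_add (norm_sum_le _ _) ?_)
  calc ‖∑ v ∈ S \ T.biUnion Q, g v‖ ≤ ∑ _ ∈ S \ T.biUnion Q, B :=
        norm_sum_le_of_le _ fun v _ => hg v
    _ = _ := by
        rw [Finset.sum_const, nsmul_eq_mul, Finset.card_sdiff_of_subset hUS,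
          Nat.cast_sub (Finset.card_le_card hUS), Finset.card_biUnion hQ, Nat.cast_sum, mul_comm]

lemma isLittleO_sum_of_forall_latticeCube (hb : Bornology.IsBounded D) (hm : MeasurableSet D)
    (hf : volume (frontier D) = 0) (hmono : ∀ ⦃x y : ℝ⦄, 0 < x → x ≤ y → x • D ⊆ y • D)
    (hs : Tendsto s l atTop)
    (hS : ∀ᶠ a in l, ∀ v, v ∈ S a ↔ (s a)⁻¹ • (fun i => (v i : ℝ)) ∈ D)
    {g : α → (ι → ℤ) → ℂ} {B : ℝ} (hB : 0 < B) (hg : ∀ a v, ‖g a v‖ ≤ B)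
    (hcube : ∀ (c : ι → ℝ) (r : ℝ), 0 < r → closedBall c r ⊆ D →
      (fun a => ∑ v ∈ latticeCube c r (s a), g a v) =o[l]
        fun a => ((latticeCube c r (s a)).card : ℝ)) :
    (fun a => ∑ v ∈ S a, g a v) =o[l] fun a => s a ^ Fintype.card ι := by
  have hcard := tendsto_card_div_pow_of_mem_iff hb hm hf hmono hs hS
  have hcardO : (fun a => ((S a).card : ℝ)) =O[l] fun a => s a ^ Fintype.card ι := by
    refine (Asymptotics.isBigO_iff_div_isBoundedUnder ?_).2 hcard.norm.isBoundedUnder_le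
    filter_upwards [hs.eventually_gt_atTop 0] with a hsa h
    exact absurd h (pow_pos hsa _).ne'
  refine Asymptotics.isLittleO_iff.2 fun ε hε => ?_
  set δ := ε / (4 * B)
  have hδ : 0 < δ := by positivity
  obtain ⟨T, r, hr, hdisj, hvol⟩ := exists_disjoint_closedBalls_volume_le hb hf hδ
  have hr0 : ∀ c ∈ T, 0 < r c := fun c hc => (hr c hc).1
  have hsub : ∀ᶠ a in l, ∀ c ∈ T, latticeCube c (r c) (s a) ⊆ S a :=
    (Finset.eventually_all _).2 fun c hc =>
      eventually_latticeCube_subset hs hS (hr0 c hc) (hr c hc).2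
  have hcubes : (fun a => ∑ c ∈ T, ‖∑ v ∈ latticeCube c (r c) (s a), g a v‖) =o[l]
      fun a => s a ^ Fintype.card ι := by
    refine Asymptotics.IsLittleO.fun_sum fun c hc =>
      (hcube c (r c) (hr0 c hc) (hr c hc).2).norm_left.trans_isBigO ?_
    refine (Asymptotics.IsBigO.of_bound 1 ?_).trans hcardO
    filter_upwards [hsub] with a ha
    simpa using Finset.card_le_card (ha c hc)
  filter_upwards [hsub, hs.eventually_gt_atTop 0, hcubes.def (half_pos hε),
    hcard.eventually_le_const (lt_add_of_pos_right _ (half_pos hδ)),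
    eventually_le_card_biUnion_latticeCube (V := volume.real D - 3 / 2 * δ) hs hr0 (by linarith)]
    with a ha hsa hTa hup hlow
  have hpow : 0 < s a ^ Fintype.card ι := pow_pos hsa _
  rw [div_le_iff₀ hpow] at hup
  rw [Real.norm_of_nonneg (Finset.sum_nonneg fun _ _ => norm_nonneg _),
    Real.norm_of_nonneg hpow.le] at hTa
  calc ‖∑ v ∈ S a, g a v‖
      ≤ _ := norm_sum_le_add_of_biUnion_subset
        (pairwiseDisjoint_latticeCube hr0 hdisj hsa) ha (hg a)
    _ ≤ ε / 2 * s a ^ Fintype.card ι + B * (2 * δ * s a ^ Fintype.card ι) := by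
        gcongr
        linarith
    _ = ε * ‖s a ^ Fintype.card ι‖ := by
        rw [Real.norm_of_nonneg hpow.le]
        simp only [δ]
        field_simp
        ring

end Regions

end LatticePoints

/-! ### Ideals in a class as lattice points of a cone -/

section LatticeCoordinates

open NumberField.mixedEmbedding NumberField.mixedEmbedding.fundamentalCone
open scoped nonZeroDivisors Pointwise

variable {K}

/-- An integral basis of the ideal `J`: the additive parametrisation `toIntegers` of `J` by `ℤ^ι`
together with its `ℝ`-linear extension `toMixedSpace` onto the mixed space of `K`. -/
structure LatticeCoordinates (J : Ideal (𝓞 K)) (ι : Type*) [Fintype ι] where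
  toIntegers : (ι → ℤ) →+ 𝓞 K
  toMixedSpace : (ι → ℝ) ≃L[ℝ] mixedSpace K
  mixedEmbedding_toIntegers :
    ∀ v, mixedEmbedding K (toIntegers v : K) = toMixedSpace fun i => (v i : ℝ)
  mem_iff : ∀ a, a ∈ J ↔ ∃ v, toIntegers v = a

lemma nonempty_latticeCoordinates (J : (Ideal (𝓞 K))⁰) :
    Nonempty (LatticeCoordinates J.1
      (Module.Free.ChooseBasisIndex ℤ (FractionalIdeal.mk0 K J))) := by
  set I := FractionalIdeal.mk0 K J with hI
  let b := fractionalIdealLatticeBasis K I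
  have hmem : ∀ x : K, x ∈ (I : Set K) ↔ ∃ a ∈ J.1, algebraMap (𝓞 K) K a = x := fun x => by
    rw [hI, FractionalIdeal.coe_mk0, SetLike.mem_coe, FractionalIdeal.mem_coeIdeal]
  have hb : ∀ i, ∃ a ∈ J.1, algebraMap (𝓞 K) K a = basisOfFractionalIdeal K I i := fun i => by
    rw [← hmem, ← mem_span_basisOfFractionalIdeal]
    exact Submodule.subset_span ⟨i, rfl⟩
  choose a haJ ha using hb
  refine ⟨{
    toIntegers := (Fintype.linearCombination ℤ a).toAddMonoidHom
    toMixedSpace := b.equivFun.symm.toContinuousLinearEquiv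
    mixedEmbedding_toIntegers := fun v => ?_
    mem_iff := fun x => ⟨fun hx => ?_, ?_⟩ }⟩
  · change _ = b.equivFun.symm fun i => (v i : ℝ)
    simp only [Fintype.linearCombination_apply, Module.Basis.equivFun_symm_apply, b, ha, map_sum,
      LinearMap.toAddMonoidHom_coe, zsmul_eq_mul, map_mul, map_intCast,
      fractionalIdealLatticeBasis_apply]
    exact Finset.sum_congr rfl fun i _ => by rw [← zsmul_eq_mul, ← Int.cast_smul_eq_zsmul ℝ]
  · have hxI : algebraMap (𝓞 K) K x ∈ (I : Set K) := (hmem _).2 ⟨x, hx, rfl⟩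
    rw [← mem_span_basisOfFractionalIdeal, Submodule.mem_span_range_iff_exists_fun] at hxI
    obtain ⟨v, hv⟩ := hxI
    refine ⟨v, RingOfIntegers.coe_injective ?_⟩
    simp [Fintype.linearCombination_apply, ← hv, ha]
  · rintro ⟨v, rfl⟩
    simpa [Fintype.linearCombination_apply] using sum_mem fun i _ => J.1.mul_mem_left _ (haJ i)

namespace LatticeCoordinates

variable {J : Ideal (𝓞 K)} {ι : Type*} [Fintype ι] (c : LatticeCoordinates J ι)

lemma card_eq_finrank (c : LatticeCoordinates J ι) : Fintype.card ι = Module.finrank ℚ K := by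
  rw [← mixedEmbedding.finrank, ← c.toMixedSpace.toLinearEquiv.finrank_eq,
    Module.finrank_fintype_fun_eq_card]

lemma dvd_span_toIntegers (v : ι → ℤ) : J ∣ Ideal.span {c.toIntegers v} :=
  Ideal.dvd_iff_le.2 ((Ideal.span_singleton_le_iff_mem _).2 ((c.mem_iff _).2 ⟨v, rfl⟩))

/-- The integral ideal `(α) / J`, where `α ∈ J` is the element with coordinates `v`. -/
def cofactor (v : ι → ℤ) : Ideal (𝓞 K) := (c.dvd_span_toIntegers v).choose

lemma span_toIntegers (v : ι → ℤ) : Ideal.span {c.toIntegers v} = J * c.cofactor v :=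
  (c.dvd_span_toIntegers v).choose_spec

lemma dvd_cofactor_iff (hJ : J ≠ ⊥) {d : Ideal (𝓞 K)} {v : ι → ℤ} :
    d ∣ c.cofactor v ↔ v ∈ (J * d).toAddSubgroup.comap c.toIntegers := by
  rw [← mul_dvd_mul_iff_left (show J ≠ 0 from hJ), ← span_toIntegers, Ideal.dvd_iff_le,
    Ideal.span_singleton_le_iff_mem]
  rfl

lemma index_comap_toIntegers (hJ : J ≠ ⊥) (d : Ideal (𝓞 K)) :
    ((J * d).toAddSubgroup.comap c.toIntegers).index = Ideal.absNorm d := by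
  have hle : (J * d).toAddSubgroup ≤ J.toAddSubgroup :=
    Submodule.toAddSubgroup_mono (Ideal.mul_le_left : J * d ≤ J)
  have hrange : c.toIntegers.range = J.toAddSubgroup := by
    ext a
    exact (c.mem_iff a).symm
  have hmul : (J * d).toAddSubgroup.relIndex J.toAddSubgroup * Ideal.absNorm J =
      Ideal.absNorm J * Ideal.absNorm d := by
    have h := AddSubgroup.relIndex_mul_index hle
    rw [← map_mul, Ideal.absNorm_eq_index (J * d), Ideal.absNorm_eq_index J]
    exact h
  rw [AddSubgroup.index_comap, hrange]
  rw [mul_comm] at hmul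
  exact mul_left_cancel₀ (mt Ideal.absNorm_eq_zero_iff.1 hJ) hmul

lemma norm_toMixedSpace (v : ι → ℤ) :
    mixedEmbedding.norm (c.toMixedSpace fun i => (v i : ℝ)) =
      realNorm J * realNorm (c.cofactor v) := by
  rw [← c.mixedEmbedding_toIntegers, mixedEmbedding.norm_eq_norm, ← realNorm_mul,
    ← c.span_toIntegers, realNorm, Ideal.absNorm_span_singleton, Nat.cast_natAbs,
    ← Rat.cast_intCast, Int.cast_abs, Algebra.coe_norm_int]

lemma cofactor_ne_bot {v : ι → ℤ} (hv : (c.toMixedSpace fun i => (v i : ℝ)) ∈ fundamentalCone K) :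
    c.cofactor v ≠ ⊥ := fun h => by
  have hpos := norm_pos_of_mem hv
  rw [c.norm_toMixedSpace, h] at hpos
  simp [realNorm] at hpos

lemma hasLevelOfDistribution_latticeCube (hJ : J ≠ ⊥) (x : ι → ℝ) {r s : ℝ} (hrs : 1 ≤ r * s) :
    HasLevelOfDistribution (latticeCube x r s) c.cofactor (r * s)
      (2 ^ Fintype.card ι / (r * s)) := by
  classical
  intro d hd hdℓ
  have hindex : (((J * d).toAddSubgroup.comap c.toIntegers).index : ℝ) = realNorm d := by
    rw [c.index_comap_toIntegers hJ]
  have : ((J * d).toAddSubgroup.comap c.toIntegers).FiniteIndex :=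
    ⟨by rw [c.index_comap_toIntegers hJ]; exact mt Ideal.absNorm_eq_zero_iff.1 hd⟩
  simp_rw [c.dvd_cofactor_iff hJ, ← hindex]
  exact abs_card_box_filter_mem_sub_le (hindex.trans_le hdℓ) fun i =>
    (by linarith : r * s ≤ 2 * r * s - 1).trans (le_latticeCube_side _ _ _)

/-- The points with norm at most one in the fundamental cone, in the coordinates of `c`. -/
def unitRegion : Set (ι → ℝ) := c.toMixedSpace ⁻¹' normLeOne K

lemma inv_smul_mem_unitRegion_iff {s : ℝ} (hs : 0 < s) {v : ι → ℝ} :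
    s⁻¹ • v ∈ c.unitRegion ↔ c.toMixedSpace v ∈ fundamentalCone K ∧
      mixedEmbedding.norm (c.toMixedSpace v) ≤ s ^ Module.finrank ℚ K := by
  rw [unitRegion, Set.mem_preimage, map_smul, mem_normLeOne,
    smul_mem_iff_mem (inv_ne_zero hs.ne'), mixedEmbedding.norm_smul, abs_of_pos (inv_pos.2 hs),
    inv_pow, inv_mul_le_iff₀ (by positivity), mul_one]

lemma isBounded_unitRegion : Bornology.IsBounded c.unitRegion := by
  classical
  exact c.toMixedSpace.antilipschitz.isBounded_preimage (isBounded_normLeOne K)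

lemma measurableSet_unitRegion : MeasurableSet c.unitRegion :=
  c.toMixedSpace.continuous.measurable (measurableSet_normLeOne K)

lemma volume_frontier_unitRegion : volume (frontier c.unitRegion) = 0 := by
  have := c.toMixedSpace.isAddHaarMeasure_map (volume : Measure (ι → ℝ))
  have hnull : Measure.map c.toMixedSpace volume (frontier (normLeOne K)) = 0 :=
    Measure.absolutelyContinuous_isAddHaarMeasure _ _ (volume_frontier_normLeOne K)
  rw [Measure.map_apply c.toMixedSpace.continuous.measurable measurableSet_frontier] at hnull
  rwa [unitRegion, ← c.toMixedSpace.coe_toHomeomorph, ← Homeomorph.preimage_frontier]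

lemma smul_unitRegion_subset {x y : ℝ} (hx : 0 < x) (hxy : x ≤ y) :
    x • c.unitRegion ⊆ y • c.unitRegion := fun v hv => by
  have hy := hx.trans_le hxy
  rw [Set.mem_smul_set_iff_inv_smul_mem₀ hx.ne', c.inv_smul_mem_unitRegion_iff hx] at hv
  rw [Set.mem_smul_set_iff_inv_smul_mem₀ hy.ne', c.inv_smul_mem_unitRegion_iff hy]
  exact ⟨hv.1, hv.2.trans (by gcongr)⟩

lemma card_span_toIntegers_eq {P : (Ideal (𝓞 K))⁰} (hP : Submodule.IsPrincipal P.1)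
    (hJP : J ∣ P.1) :
    Nat.card {v : ι → ℤ // (c.toMixedSpace fun i => (v i : ℝ)) ∈ fundamentalCone K ∧
      Ideal.span {c.toIntegers v} = P.1} = Nat.card (Units.torsion K) := by
  have htorsion : {a : integerSet K // (integerSetEquiv K a).1 = ⟨P, hP⟩} ≃ Units.torsion K :=
    ((integerSetEquiv K).subtypeEquiv (q := fun x => x.1 = ⟨P, hP⟩) fun _ => Iff.rfl).trans
      ⟨fun x => x.1.2, fun u => ⟨(⟨P, hP⟩, u), rfl⟩,
        fun x => Subtype.ext (Prod.ext x.2.symm rfl), fun _ => rfl⟩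
  rw [← Nat.card_congr htorsion]
  refine Nat.card_congr (Equiv.ofBijective (fun v => ⟨⟨mixedEmbedding K (c.toIntegers v.1 : K),
    mem_integerSet.2 ⟨c.mixedEmbedding_toIntegers v ▸ v.2.1, _, rfl⟩⟩, ?_⟩) ⟨?_, ?_⟩)
  · refine Subtype.ext (Subtype.ext ?_)
    rw [integerSetEquiv_apply_fst, preimageOfMemIntegerSet_mixedEmbedding]
    exact v.2.2
  · intro v w hvw
    have heq := congrArg (fun x => (x.1.1 : mixedSpace K)) hvw
    simp only [c.mixedEmbedding_toIntegers] at heq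
    exact Subtype.ext (funext fun i => by exact_mod_cast congrFun (c.toMixedSpace.injective heq) i)
  · rintro ⟨⟨a, ha⟩, haP⟩
    obtain ⟨hcone, x, rfl⟩ := mem_integerSet.1 ha
    have hspan : Ideal.span {x} = P.1 := by
      have h := congrArg (fun y => (y.1.1 : Ideal (𝓞 K))) haP
      simp only at h
      rwa [integerSetEquiv_apply_fst, preimageOfMemIntegerSet_mixedEmbedding] at h
    have hxJ : x ∈ J := Ideal.le_of_dvd hJP (hspan ▸ Ideal.mem_span_singleton_self x)
    obtain ⟨v, rfl⟩ := (c.mem_iff x).1 hxJ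
    exact ⟨⟨v, by rwa [← c.mixedEmbedding_toIntegers], hspan⟩, rfl⟩

end LatticeCoordinates

end LatticeCoordinates

/-! ### The Erdős–Kac theorem for ideals of bounded norm -/

section IdealsLE

open NumberField.mixedEmbedding NumberField.mixedEmbedding.fundamentalCone
open scoped nonZeroDivisors

variable {K}

lemma isBigO_log_log_sub_of_log_eq {α : Type*} {l : Filter α} {x y : α → ℝ}
    (hx : Tendsto x l atTop) {p : ℝ} (hp : 0 < p) (q : ℝ)
    (hy : ∀ᶠ a in l, Real.log (y a) = p * Real.log (x a) + q) :
    (fun a => Real.log (Real.log (y a)) - Real.log (Real.log (x a))) =O[l] fun _ => (1 : ℝ) := by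
  have hlog : Tendsto (fun a => Real.log (x a)) l atTop := Real.tendsto_log_atTop.comp hx
  have hlim : Tendsto (fun a => Real.log (p + q * (Real.log (x a))⁻¹)) l
      (𝓝 (Real.log (p + q * 0))) :=
    (tendsto_const_nhds.add (hlog.inv_tendsto_atTop.const_mul q)).log (by simpa using hp.ne')
  have hpos : Tendsto (fun a => p * Real.log (x a) + q) l atTop :=
    tendsto_atTop_add_const_right _ _ (hlog.const_mul_atTop hp)
  refine (hlim.isBigO_one ℝ).congr' ?_ EventuallyEq.rfl
  filter_upwards [hy, hlog.eventually_gt_atTop 0, hpos.eventually_gt_atTop 0] with a ha hx0 hy0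
  rw [ha, ← Real.log_div hy0.ne' hx0.ne', add_div, mul_div_cancel_right₀ _ hx0.ne', div_eq_mul_inv]

lemma exists_finset_mem_iff_inv_smul_mem {ι : Type*} [Finite ι] {D : Set (ι → ℝ)}
    (hD : Bornology.IsBounded D) {s : ℝ} (hs : 0 < s) :
    ∃ S : Finset (ι → ℤ), ∀ v, v ∈ S ↔ s⁻¹ • (fun i => (v i : ℝ)) ∈ D := by
  classical
  cases nonempty_fintype ι
  obtain ⟨R, hR⟩ := hD.subset_closedBall 0
  have hR' := hR.trans (Metric.closedBall_subset_closedBall (le_max_left R 0))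
  refine ⟨(latticeCube 0 (max R 0) s).filter fun v => s⁻¹ • (fun i => (v i : ℝ)) ∈ D, fun v => ?_⟩
  rw [Finset.mem_filter, mem_latticeCube (le_max_right _ _) hs, and_iff_right_of_imp fun h => hR' h]

lemma isLittleO_sum_omegaPhase_sub {α V : Type*} {l : Filter α} {ℓ L : α → ℝ}
    {I : V → Ideal (𝓞 K)} {Ω : α → Finset V} {C : ℝ} (hℓ : Tendsto ℓ l atTop)
    (hL : (fun a => L a - Real.log (Real.log (ℓ a))) =O[l] fun _ => (1 : ℝ)) (hC : 0 ≤ C)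
    (hΩ : ∀ᶠ a in l, HasLevelOfDistribution (Ω a) I (ℓ a) (C / ℓ a)) {M : ℕ}
    (hM : ∀ᶠ a in l, ∀ v ∈ Ω a, I v ≠ ⊥ ∧ realNorm (I v) ≤ ℓ a ^ M) (t : ℝ) :
    (fun a => ∑ v ∈ Ω a, (omegaPhase t (L a) (I v) - (Real.exp (-t ^ 2 / 2) : ℝ))) =o[l]
      fun a => ((Ω a).card : ℝ) := by
  simpa only [Finset.sum_sub_distrib, Finset.sum_const, nsmul_eq_mul] using
    isLittleO_sum_omegaPhase hℓ hL hC hΩ hM t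

omit [NumberField K] in
lemma norm_omegaPhase_sub_exp_le (t L : ℝ) (m : Ideal (𝓞 K)) :
    ‖omegaPhase t L m - (Real.exp (-t ^ 2 / 2) : ℝ)‖ ≤ 2 := by
  refine (norm_sub_le _ _).trans ?_
  have hexp : Real.exp (-t ^ 2 / 2) ≤ 1 := Real.exp_le_one_iff.2 (by nlinarith [sq_nonneg t])
  rw [norm_omegaPhase, Complex.norm_real, Real.norm_of_nonneg (Real.exp_pos _).le]
  linarith

namespace LatticeCoordinates

variable {J : Ideal (𝓞 K)} {ι : Type*} [Fintype ι] (c : LatticeCoordinates J ι)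

section ConePoints

variable {S : Finset (ι → ℤ)} {s y : ℝ}

lemma cofactor_ne_bot_and_le (hJ : J ≠ ⊥) (hs : 0 < s)
    (hsy : s ^ Module.finrank ℚ K = y * realNorm J)
    (hS : ∀ v, v ∈ S ↔ s⁻¹ • (fun i => (v i : ℝ)) ∈ c.unitRegion) {v : ι → ℤ} (hv : v ∈ S) :
    c.cofactor v ≠ ⊥ ∧ realNorm (c.cofactor v) ≤ y := by
  rw [hS, c.inv_smul_mem_unitRegion_iff hs, c.norm_toMixedSpace, hsy, mul_comm] at hv
  exact ⟨c.cofactor_ne_bot hv.1, le_of_mul_le_mul_right hv.2 (realNorm_pos hJ)⟩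

open Classical in
lemma card_filter_cofactor_eq (hJ : J ≠ ⊥) (hs : 0 < s)
    (hsy : s ^ Module.finrank ℚ K = y * realNorm J)
    (hS : ∀ v, v ∈ S ↔ s⁻¹ • (fun i => (v i : ℝ)) ∈ c.unitRegion) {a : Ideal (𝓞 K)}
    (ha0 : a ≠ ⊥) (hay : realNorm a ≤ y) (ha : Submodule.IsPrincipal (J * a)) :
    (S.filter fun v => c.cofactor v = a).card = Nat.card (Units.torsion K) := by
  have hJa : J * a ∈ (Ideal (𝓞 K))⁰ := mem_nonZeroDivisors_of_ne_zero (mul_ne_zero hJ ha0)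
  rw [← c.card_span_toIntegers_eq (P := ⟨J * a, hJa⟩) ha (dvd_mul_right J a),
    ← Nat.card_eq_finsetCard]
  refine Nat.card_congr (Equiv.subtypeEquivRight fun v => ?_)
  rw [Finset.mem_filter, hS, c.inv_smul_mem_unitRegion_iff hs, c.norm_toMixedSpace, hsy,
    c.span_toIntegers, mul_right_inj' (show J ≠ 0 from hJ), mul_comm, and_assoc]
  refine and_congr_right fun _ => and_iff_right_of_imp ?_
  rintro rfl
  exact mul_le_mul_of_nonneg_right hay (realNorm_pos hJ).le

open Classical in
lemma sum_cofactor (hJ : J ≠ ⊥) (hs : 0 < s) (hsy : s ^ Module.finrank ℚ K = y * realNorm J)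
    (hS : ∀ v, v ∈ S ↔ s⁻¹ • (fun i => (v i : ℝ)) ∈ c.unitRegion) (g : Ideal (𝓞 K) → ℂ) :
    ∑ v ∈ S, g (c.cofactor v) = (Nat.card (Units.torsion K) : ℂ) *
      ∑ a ∈ (idealsLE K y).filter fun a => Submodule.IsPrincipal (J * a), g a := by
  have hmaps : ∀ v ∈ S, c.cofactor v ∈
      (idealsLE K y).filter fun a => Submodule.IsPrincipal (J * a) := fun v hv =>
    Finset.mem_filter.2 ⟨mem_idealsLE.2 (c.cofactor_ne_bot_and_le hJ hs hsy hS hv),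
      c.span_toIntegers v ▸ ⟨_, rfl⟩⟩
  rw [← Finset.sum_fiberwise_of_maps_to hmaps, Finset.mul_sum]
  refine Finset.sum_congr rfl fun a ha => ?_
  rw [Finset.mem_filter, mem_idealsLE] at ha
  rw [← c.card_filter_cofactor_eq hJ hs hsy hS ha.1.1 ha.1.2 ha.2, ← nsmul_eq_mul]
  exact Finset.sum_eq_card_nsmul fun v hv => by rw [(Finset.mem_filter.1 hv).2]

end ConePoints

variable {α : Type*} {l : Filter α} {L y s : α → ℝ}

lemma isLittleO_sum_latticeCube_omegaPhase_sub (hJ : J ≠ ⊥) (hs : Tendsto s l atTop)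
    (hsy : ∀ᶠ a in l, s a ^ Module.finrank ℚ K = y a * realNorm J)
    (hL : (fun a => L a - Real.log (Real.log (y a))) =O[l] fun _ => (1 : ℝ))
    {x : ι → ℝ} {r : ℝ} (hr : 0 < r)
    (hx : Metric.closedBall x r ⊆ c.unitRegion) (t : ℝ) :
    (fun a => ∑ v ∈ latticeCube x r (s a),
      (omegaPhase t (L a) (c.cofactor v) - (Real.exp (-t ^ 2 / 2) : ℝ))) =o[l]
      fun a => ((latticeCube x r (s a)).card : ℝ) := by
  have hn : 0 < Module.finrank ℚ K := Module.finrank_pos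
  have hℓ : Tendsto (fun a => r * s a) l atTop := hs.const_mul_atTop hr
  have hJ0 := realNorm_pos hJ
  have hJ1 := one_le_realNorm hJ
  have hlogy : ∀ᶠ a in l, Real.log (y a) = Module.finrank ℚ K * Real.log (r * s a) +
      (-(Module.finrank ℚ K * Real.log r) - Real.log (realNorm J)) := by
    filter_upwards [hsy, hs.eventually_gt_atTop 0] with a ha hsa
    rw [eq_div_of_mul_eq hJ0.ne' ha.symm, Real.log_div (pow_pos hsa _).ne' hJ0.ne', Real.log_pow,
      Real.log_mul hr.ne' hsa.ne']
    ring
  refine isLittleO_sum_omegaPhase_sub (M := 2 * Module.finrank ℚ K) hℓ ?_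
    (C := 2 ^ Fintype.card ι) (by positivity) ?_ ?_ t
  · simpa using hL.add (isBigO_log_log_sub_of_log_eq hℓ (Nat.cast_pos.2 hn) _ hlogy)
  · filter_upwards [hℓ.eventually_ge_atTop 1] with a ha
    exact c.hasLevelOfDistribution_latticeCube hJ x ha
  · filter_upwards [hsy, hs.eventually_gt_atTop 0,
      (hs.const_mul_atTop (pow_pos hr 2)).eventually_ge_atTop 1] with a ha hsa hrs v hv
    obtain ⟨S, hS⟩ := exists_finset_mem_iff_inv_smul_mem c.isBounded_unitRegion hsa
    have hvS : v ∈ S := (hS v).2 (hx ((mem_latticeCube hr.le hsa v).1 hv))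
    obtain ⟨hne, hle⟩ := c.cofactor_ne_bot_and_le hJ hsa ha hS hvS
    have hy : 0 ≤ y a := (realNorm_pos hne).le.trans hle
    refine ⟨hne, hle.trans ?_⟩
    calc y a ≤ y a * realNorm J := le_mul_of_one_le_right hy hJ1
      _ = s a ^ Module.finrank ℚ K := ha.symm
      _ ≤ (r ^ 2 * s a) ^ Module.finrank ℚ K * s a ^ Module.finrank ℚ K :=
          le_mul_of_one_le_left (by positivity) (one_le_pow₀ hrs)
      _ = (r * s a) ^ (2 * Module.finrank ℚ K) := by rw [pow_mul, ← mul_pow]; ring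

end LatticeCoordinates

variable {α : Type*} {l : Filter α} {L y : α → ℝ}

open Classical in
lemma isLittleO_sum_isPrincipal_omegaPhase_sub (J : (Ideal (𝓞 K))⁰) (hy : Tendsto y l atTop)
    (hL : (fun a => L a - Real.log (Real.log (y a))) =O[l] fun _ => (1 : ℝ)) (t : ℝ) :
    (fun a => ∑ m ∈ (idealsLE K (y a)).filter fun m => Submodule.IsPrincipal (J.1 * m),
      (omegaPhase t (L a) m - (Real.exp (-t ^ 2 / 2) : ℝ))) =o[l] y := by
  obtain ⟨c⟩ := nonempty_latticeCoordinates J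
  have hJ : J.1 ≠ ⊥ := nonZeroDivisors.ne_zero J.2
  have hn : Module.finrank ℚ K ≠ 0 := Module.finrank_pos.ne'
  set s : α → ℝ := fun a => (y a * realNorm J.1) ^ ((Module.finrank ℚ K : ℝ)⁻¹)
  have hs : Tendsto s l atTop :=
    (tendsto_rpow_atTop (by positivity)).comp (hy.atTop_mul_const (realNorm_pos hJ))
  have hsy : ∀ᶠ a in l, s a ^ Module.finrank ℚ K = y a * realNorm J.1 := by
    filter_upwards [hy.eventually_ge_atTop 0] with a ha
    exact Real.rpow_inv_natCast_pow (mul_nonneg ha (realNorm_pos hJ).le) hn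
  choose S hS using fun (a : α) (ha : 0 < s a) =>
    exists_finset_mem_iff_inv_smul_mem c.isBounded_unitRegion ha
  have hsum := isLittleO_sum_of_forall_latticeCube (S := fun a => if h : 0 < s a then S a h else ∅)
    c.isBounded_unitRegion c.measurableSet_unitRegion c.volume_frontier_unitRegion
    (fun _ _ => c.smul_unitRegion_subset) hs
    ((hs.eventually_gt_atTop 0).mono fun a ha => by simpa only [dif_pos ha] using hS a ha)
    two_pos (fun a v => norm_omegaPhase_sub_exp_le t (L a) (c.cofactor v))
    fun x r hr hx => c.isLittleO_sum_latticeCube_omegaPhase_sub hJ hs hsy hL hr hx t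
  have hpow : (fun a => s a ^ Fintype.card
      (Module.Free.ChooseBasisIndex ℤ (FractionalIdeal.mk0 K J))) =O[l] y := by
    rw [c.card_eq_finrank]
    refine ((Asymptotics.isBigO_refl y l).const_mul_left (realNorm J.1)).congr' ?_ EventuallyEq.rfl
    filter_upwards [hsy] with a ha
    rw [ha, mul_comm]
  have htorsion : (Nat.card (Units.torsion K) : ℂ) ≠ 0 := Nat.cast_ne_zero.2 Nat.card_pos.ne'
  refine (Asymptotics.isLittleO_const_mul_left_iff htorsion).1
    ((hsum.trans_isBigO hpow).congr' ?_ EventuallyEq.rfl)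
  filter_upwards [hs.eventually_gt_atTop 0, hsy] with a ha hsa
  simp only [dif_pos ha]
  exact c.sum_cofactor hJ ha hsa (hS a ha) fun m =>
    omegaPhase t (L a) m - (Real.exp (-t ^ 2 / 2) : ℝ)

lemma isPrincipal_mul_iff_mk0_eq {C : ClassGroup (𝓞 K)} {J : (Ideal (𝓞 K))⁰}
    (hJ : ClassGroup.mk0 J = C⁻¹) (m : (Ideal (𝓞 K))⁰) :
    Submodule.IsPrincipal (J.1 * m.1) ↔ ClassGroup.mk0 m = C := by
  have h : ClassGroup.mk0 (J * m) = 1 ↔ Submodule.IsPrincipal (J.1 * m.1) :=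
    ClassGroup.mk0_eq_one_iff (J * m).2
  rw [← h, map_mul, hJ, inv_mul_eq_one, eq_comm]

lemma isLittleO_sum_idealsLE_omegaPhase_sub (hy : Tendsto y l atTop)
    (hL : (fun a => L a - Real.log (Real.log (y a))) =O[l] fun _ => (1 : ℝ)) (t : ℝ) :
    (fun a => ∑ m ∈ idealsLE K (y a), (omegaPhase t (L a) m - (Real.exp (-t ^ 2 / 2) : ℝ))) =o[l]
      y := by
  classical
  choose J hJ using fun C : ClassGroup (𝓞 K) => ClassGroup.mk0_surjective C⁻¹
  refine (Asymptotics.IsLittleO.fun_sum (s := Finset.univ) fun C _ =>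
    isLittleO_sum_isPrincipal_omegaPhase_sub (J C) hy hL t).congr_left fun a => ?_
  simp_rw [Finset.sum_filter]
  rw [Finset.sum_comm]
  refine Finset.sum_congr rfl fun m hm => ?_
  have hclass := fun C => isPrincipal_mul_iff_mk0_eq (hJ C)
    ⟨m, mem_nonZeroDivisors_of_ne_zero (mem_idealsLE.1 hm).1⟩
  simp only at hclass
  simp_rw [hclass]
  simp

end IdealsLE

/-! ### Exponents in the prime factorization -/

section Exponents

open UniqueFactorizationMonoid

variable {α : Type*} [CommMonoidWithZero α] [UniqueFactorizationMonoid α] [NormalizationMonoid α]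

section Factorization

variable [Subsingleton αˣ] [DecidableEq α]

lemma eq_of_factorization_eq {a b : α} (ha : a ≠ 0) (hb : b ≠ 0)
    (h : factorization a = factorization b) : a = b :=
  associated_iff_eq.1 (associated_of_factorization_eq a b ha hb h)

lemma factorization_apply_ne_zero_iff {p m : α} (hm : m ≠ 0) :
    factorization m p ≠ 0 ↔ Prime p ∧ p ∣ m := by
  rw [factorization_eq_count, Multiset.count_ne_zero, mem_normalizedFactors_iff hm]

lemma pow_dvd_iff_le_factorization {p m : α} (hp : Prime p) (hm : m ≠ 0) {n : ℕ} :
    p ^ n ∣ m ↔ n ≤ factorization m p := by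
  rw [pow_dvd_iff_le_emultiplicity, emultiplicity_eq_count_normalizedFactors hp.irreducible hm,
    associated_iff_eq.1 (normalize_associated p), Nat.cast_le, factorization_eq_count]

variable [Nontrivial α]

omit [Subsingleton αˣ] in
lemma factorization_prod_pow {κ : Type*} (s : Finset κ) {c : κ → α} (hc : ∀ k, c k ≠ 0)
    (e : κ → ℕ) : factorization (∏ k ∈ s, c k ^ e k) = ∑ k ∈ s, e k • factorization (c k) := by
  classical
  induction s using Finset.induction_on with
  | empty => simp
  | insert k s hk ih =>
    rw [Finset.prod_insert hk, Finset.sum_insert hk, factorization_mul (pow_ne_zero _ (hc k))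
      (Finset.prod_ne_zero_iff.2 fun i _ => pow_ne_zero _ (hc i)), factorization_pow, ih]

lemma exists_factorization_eq_mapRange (m : α) {g : ℕ → ℕ} (hg : g 0 = 0) :
    ∃ a : α, a ≠ 0 ∧ factorization a = (factorization m).mapRange g hg := by
  set f := (factorization m).mapRange g hg
  have hprime : ∀ p ∈ Finsupp.toMultiset f, Prime p := fun p hp => by
    have hpm := Finsupp.support_mapRange ((Finsupp.mem_toMultiset f p).1 hp)
    rw [support_factorization, Multiset.mem_toFinset] at hpm
    exact prime_of_normalized_factor p hpm
  refine ⟨(Finsupp.toMultiset f).prod, Multiset.prod_ne_zero fun h0 => (hprime 0 h0).ne_zero rfl,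
    ?_⟩
  ext p
  rw [factorization_eq_count, normalizedFactors_prod_of_prime hprime, Finsupp.count_toMultiset]

end Factorization

open Classical in
/-- `HasExponentsIn S m` says that `m` is nonzero and that every prime dividing `m` does so to an
exponent in `S`. The `h`-full elements are those with exponents in `Set.Ici h`. -/
def HasExponentsIn (S : Set ℕ) (m : α) : Prop :=
  m ≠ 0 ∧ ∀ p, factorization m p ≠ 0 → factorization m p ∈ S

variable [Subsingleton αˣ] [Nontrivial α]

lemma HasExponentsIn.exists_eq_prod_pow {T : Finset ℕ} {b : α} (hb : HasExponentsIn T b) :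
    ∃ c : T → α, (∀ e, c e ≠ 0) ∧ b = ∏ e, c e ^ (e : ℕ) := by
  classical
  choose c hc0 hc using fun e : T =>
    exists_factorization_eq_mapRange b (g := fun k => if k = e ∧ k ≠ 0 then 1 else 0) (by simp)
  refine ⟨c, hc0, eq_of_factorization_eq hb.1
    (Finset.prod_ne_zero_iff.2 fun e _ => pow_ne_zero _ (hc0 e)) ?_⟩
  ext p
  rw [factorization_prod_pow _ hc0, Finsupp.finsetSum_apply]
  simp only [hc, Finsupp.smul_apply, Finsupp.mapRange_apply, smul_eq_mul, mul_ite, mul_one,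
    mul_zero]
  by_cases hp : factorization b p = 0
  · simp [hp]
  · rw [Finset.sum_eq_single_of_mem (⟨_, hb.2 p hp⟩ : T) (Finset.mem_univ _)
      fun e _ he => if_neg fun h => he (Subtype.ext h.1.symm)]
    simp [hp]

variable {h : ℕ}

omit [Nontrivial α] in
lemma hasExponentsIn_Ici_iff {m : α} :
    HasExponentsIn (Set.Ici h) m ↔ m ≠ 0 ∧ ∀ p, Prime p → p ∣ m → p ^ h ∣ m := by
  classical
  refine and_congr_right fun hm => forall_congr' fun p => ?_
  rw [factorization_apply_ne_zero_iff hm, and_imp]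
  exact forall₂_congr fun hp _ => (pow_dvd_iff_le_factorization hp hm).symm

lemma HasExponentsIn.exists_eq_pow_mul (hh : h ≠ 0) {m : α}
    (hm : HasExponentsIn (Set.Ici h) m) :
    ∃ a b : α, a ≠ 0 ∧ HasExponentsIn (Set.Ioo h (2 * h)) b ∧ a ^ h * b = m := by
  classical
  obtain ⟨a, ha0, ha⟩ := exists_factorization_eq_mapRange m
    (g := fun e => if e % h = 0 then e / h else e / h - 1) (by simp)
  obtain ⟨b, hb0, hb⟩ := exists_factorization_eq_mapRange m
    (g := fun e => if e % h = 0 then 0 else h + e % h) (by simp)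
  refine ⟨a, b, ha0, ⟨hb0, fun p => ?_⟩,
    eq_of_factorization_eq (mul_ne_zero (pow_ne_zero _ ha0) hb0) hm.1 ?_⟩
  · have hlt := Nat.mod_lt (factorization m p) (Nat.pos_of_ne_zero hh)
    rw [hb, Finsupp.mapRange_apply, Set.mem_Ioo]
    split_ifs <;> lia
  · ext p
    rw [factorization_mul (pow_ne_zero _ ha0) hb0, factorization_pow, ha, hb]
    simp only [Finsupp.add_apply, Finsupp.smul_apply, Finsupp.mapRange_apply, smul_eq_mul]
    have hdiv := Nat.div_add_mod (factorization m p) h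
    split_ifs with hmod
    · lia
    · have hle : h ≤ factorization m p := hm.2 p fun h0 => hmod (by simp [h0])
      obtain ⟨q, hq⟩ := Nat.exists_eq_add_of_le'
        ((Nat.one_le_div_iff (Nat.pos_of_ne_zero hh)).2 hle)
      rw [hq] at hdiv ⊢
      rw [Nat.add_sub_cancel]
      linarith

lemma HasExponentsIn.eq_and_eq_of_pow_mul_eq (hh : h ≠ 0) {a a' b b' : α} (ha : a ≠ 0)
    (ha' : a' ≠ 0) (hb : HasExponentsIn (Set.Ioo h (2 * h)) b)
    (hb' : HasExponentsIn (Set.Ioo h (2 * h)) b') (heq : a ^ h * b = a' ^ h * b') :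
    a = a' ∧ b = b' := by
  classical
  have hmod : ∀ {c : α}, HasExponentsIn (Set.Ioo h (2 * h)) c → ∀ p,
      factorization c p = if factorization c p % h = 0 then 0 else h + factorization c p % h := by
    intro c hc p
    by_cases h0 : factorization c p = 0
    · simp [h0]
    · obtain ⟨hlt, hlt'⟩ := hc.2 p h0
      rw [Nat.mod_eq_sub_mod hlt.le, Nat.mod_eq_of_lt (by lia), if_neg (by lia)]
      lia
  have hval : ∀ p, h * factorization a p + factorization b p =
      h * factorization a' p + factorization b' p := fun p => by
    simpa [factorization_mul, pow_ne_zero, ha, ha', hb.1, hb'.1, factorization_pow] using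
      DFunLike.congr_fun (congrArg factorization heq) p
  have hbb : b = b' := eq_of_factorization_eq hb.1 hb'.1 <| by
    ext p
    have hres : factorization b p % h = factorization b' p % h := by
      simpa using congrArg (· % h) (hval p)
    rw [hmod hb p, hmod hb' p, hres]
  refine ⟨eq_of_factorization_eq ha ha' ?_, hbb⟩
  ext p
  exact mul_left_cancel₀ hh (add_right_cancel ((hval p).trans (by rw [hbb])))

omit [Subsingleton αˣ] [Nontrivial α] in
lemma HasExponentsIn.pow_mul {a b : α} (ha : a ≠ 0)
    (hb : HasExponentsIn (Set.Ioo h (2 * h)) b) : HasExponentsIn (Set.Ici h) (a ^ h * b) := by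
  classical
  refine ⟨mul_ne_zero (pow_ne_zero _ ha) hb.1, fun p => ?_⟩
  rw [factorization_mul (pow_ne_zero _ ha) hb.1, factorization_pow]
  simp only [Finsupp.add_apply, Finsupp.smul_apply, smul_eq_mul, Set.mem_Ici]
  intro hne
  by_cases h0 : factorization b p = 0
  · rw [h0, add_zero] at hne ⊢
    exact Nat.le_mul_of_pos_right h (Nat.pos_of_ne_zero (right_ne_zero_of_mul hne))
  · exact (hb.2 p h0).1.le.trans (Nat.le_add_left _ _)

omit [Subsingleton αˣ] in
lemma hasExponentsIn_one (S : Set ℕ) : HasExponentsIn S (1 : α) :=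
  ⟨one_ne_zero, by simp⟩

end Exponents

/-! ### Decomposition of `h`-full ideals -/

section HFullDecomposition

variable {K} {h : ℕ}

lemma isHFull_iff_hasExponentsIn {m : Ideal (𝓞 K)} :
    IsHFull K h m ↔ HasExponentsIn (Set.Ici h) m := by
  rw [hasExponentsIn_Ici_iff]
  refine and_congr_right fun hm => forall_congr' fun p =>
    ⟨fun H hp hpm => H (Ideal.isPrime_of_prime hp) hpm, fun H hp hpm => ?_⟩
  exact H (Ideal.prime_of_isPrime (ne_zero_of_dvd_ne_zero hm hpm) hp) hpm

variable (K) in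
/-- The `h`-full ideals of norm at most `x`. -/
def hFullIdealsLE (h : ℕ) (x : ℝ) : Finset (Ideal (𝓞 K)) := by
  classical exact (idealsLE K x).filter (IsHFull K h)

@[simp] lemma mem_hFullIdealsLE {x : ℝ} {m : Ideal (𝓞 K)} :
    m ∈ hFullIdealsLE K h x ↔ IsHFull K h m ∧ realNorm m ≤ x := by
  simp only [hFullIdealsLE, Finset.mem_filter, mem_idealsLE]
  exact ⟨fun hm => ⟨hm.2, hm.1.2⟩, fun hm => ⟨⟨hm.1.1, hm.2⟩, hm.1⟩⟩

open Classical in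
lemma sum_hFullIdealsLE {M : Type*} [AddCommMonoid M] (hh : h ≠ 0) {x : ℝ} (hx : 0 < x)
    (f : Ideal (𝓞 K) → M) :
    ∑ m ∈ hFullIdealsLE K h x, f m =
      ∑ b ∈ idealsLE K x with HasExponentsIn (Set.Ioo h (2 * h)) b,
        ∑ a ∈ idealsLE K ((x / realNorm b) ^ ((h : ℝ)⁻¹)), f (a ^ h * b) := by
  have hnorm : ∀ a b : Ideal (𝓞 K), b ≠ ⊥ →
      (realNorm a ≤ (x / realNorm b) ^ ((h : ℝ)⁻¹) ↔ realNorm (a ^ h * b) ≤ x) := by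
    intro a b hb
    have hb' := realNorm_pos hb
    rw [Real.le_rpow_inv_iff_of_pos (by positivity) (by positivity) (by positivity),
      Real.rpow_natCast, le_div_iff₀ hb', realNorm_mul]
    simp [realNorm]
  rw [Finset.sum_sigma']
  symm
  refine Finset.sum_nbij (fun i => i.2 ^ h * i.1) ?_ ?_ ?_ fun _ _ => rfl
  · rintro ⟨b, a⟩ hi
    simp only [Finset.mem_sigma, Finset.mem_filter, mem_idealsLE, mem_hFullIdealsLE] at hi ⊢
    obtain ⟨⟨⟨hb0, -⟩, hb⟩, ha0, ha⟩ := hi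
    exact ⟨isHFull_iff_hasExponentsIn.2 (hb.pow_mul ha0), (hnorm a b hb0).1 ha⟩
  · rintro ⟨b, a⟩ hi ⟨b', a'⟩ hi' heq
    simp only [Finset.mem_coe, Finset.mem_sigma, Finset.mem_filter, mem_idealsLE] at hi hi' heq
    obtain ⟨rfl, rfl⟩ := hi.1.2.eq_and_eq_of_pow_mul_eq hh hi.2.1 hi'.2.1 hi'.1.2 heq
    rfl
  · intro m hm
    rw [Finset.mem_coe, mem_hFullIdealsLE, isHFull_iff_hasExponentsIn] at hm
    obtain ⟨a, b, ha, hb, rfl⟩ := hm.1.exists_eq_pow_mul hh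
    refine ⟨⟨b, a⟩, ?_, rfl⟩
    simp only [Finset.mem_coe, Finset.mem_sigma, Finset.mem_filter, mem_idealsLE]
    exact ⟨⟨⟨hb.1, (realNorm_le_of_dvd (dvd_mul_left _ _) hm.1.1).trans hm.2⟩, hb⟩, ha,
      (hnorm a b hb.1).2 hm.2⟩

lemma summable_prod_of_injective {ι κ β : Type*} [Fintype κ] {f : κ → β → ℝ}
    (hf : ∀ k, Summable (f k)) (hf0 : ∀ k b, 0 ≤ f k b) {c : ι → κ → β}
    (hc : Function.Injective c) : Summable fun i => ∏ k, f k (c i k) := by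
  classical
  refine summable_of_sum_le (c := ∏ k, ∑' b, f k b)
    (fun i => Finset.prod_nonneg fun k _ => hf0 k _) fun F => ?_
  calc ∑ i ∈ F, ∏ k, f k (c i k) = ∑ d ∈ F.image c, ∏ k, f k (d k) :=
        (Finset.sum_image (f := fun d => ∏ k, f k (d k)) hc.injOn).symm
    _ ≤ ∑ d ∈ Fintype.piFinset fun k => F.image (c · k), ∏ k, f k (d k) := by
        refine Finset.sum_le_sum_of_subset_of_nonneg (fun d hd => ?_)
          fun d _ _ => Finset.prod_nonneg fun k _ => hf0 k _
        obtain ⟨i, hi, rfl⟩ := Finset.mem_image.1 hd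
        exact Fintype.mem_piFinset.2 fun k => Finset.mem_image_of_mem _ hi
    _ = ∏ k, ∑ b ∈ F.image (c · k), f k b := (Finset.prod_univ_sum _ _).symm
    _ ≤ ∏ k, ∑' b, f k b := Finset.prod_le_prod
        (fun k _ => Finset.sum_nonneg fun b _ => hf0 k b)
        fun k _ => (hf k).sum_le_tsum _ fun b _ => hf0 k b

variable (K) in
lemma summable_realNorm_rpow_neg {s : ℝ} (hs : 1 < s) :
    Summable fun I : {I : Ideal (𝓞 K) // I ≠ ⊥} => realNorm I.1 ^ (-s) := by
  classical
  obtain ⟨C, -, hC⟩ := exists_sum_realNorm_rpow_neg_le K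
  refine summable_of_sum_le (c := C / (min s 2 - 1)) (fun I => by positivity) fun F => ?_
  calc ∑ I ∈ F, realNorm I.1 ^ (-s) ≤ ∑ I ∈ F, realNorm I.1 ^ (-min s 2) :=
        Finset.sum_le_sum fun I _ => Real.rpow_le_rpow_of_exponent_le (one_le_realNorm I.2)
          (neg_le_neg (min_le_left s 2))
    _ = ∑ I ∈ F.image Subtype.val, realNorm I ^ (-min s 2) :=
        (Finset.sum_image (f := fun I => realNorm I ^ (-min s 2)) Subtype.val_injective.injOn).symm
    _ ≤ C / (min s 2 - 1) := hC _ (lt_min hs one_lt_two) (min_le_right s 2) _ fun I hI => by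
        obtain ⟨J, -, rfl⟩ := Finset.mem_image.1 hI
        exact J.2

lemma summable_realNorm_rpow_neg_of_hasExponentsIn {T : Finset ℕ} {σ : ℝ}
    (hσ : ∀ e ∈ T, 1 < e * σ) :
    Summable fun b : {b : Ideal (𝓞 K) // HasExponentsIn T b} => realNorm b.1 ^ (-σ) := by
  choose c hc0 hc using fun b : {b : Ideal (𝓞 K) // HasExponentsIn T b} => b.2.exists_eq_prod_pow
  have hinj : Function.Injective fun b e => (⟨c b e, hc0 b e⟩ : {I : Ideal (𝓞 K) // I ≠ ⊥}) := by
    intro b b' hbb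
    have hcc : c b = c b' := funext fun e => congrArg Subtype.val (congrFun hbb e)
    rw [Subtype.ext_iff, hc b, hc b', hcc]
  refine (summable_prod_of_injective (fun e : T => summable_realNorm_rpow_neg K (hσ e e.2))
    (fun e I => by positivity) hinj).congr fun b => ?_
  have hprod : realNorm (∏ e, c b e ^ (e : ℕ)) = ∏ e : T, realNorm (c b e) ^ (e : ℕ) := by
    simp [realNorm]
  rw [hc b, hprod, ← Real.finsetProd_rpow _ _ fun e _ => by positivity]
  refine Finset.prod_congr rfl fun e _ => ?_
  rw [← Real.rpow_natCast, ← Real.rpow_mul (by positivity), mul_neg]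

lemma abs_omegaI_pow_mul_sub_le {a b : Ideal (𝓞 K)} (ha : a ≠ ⊥) (hb : b ≠ ⊥) (hh : h ≠ 0) :
    |(omegaI K (a ^ h * b) : ℝ) - omegaI K a| ≤ omegaI K b := by
  classical
  have hm : a ^ h * b ≠ ⊥ := mul_ne_zero (pow_ne_zero _ ha) hb
  have ham : a ∣ a ^ h * b := (dvd_pow_self a hh).mul_right b
  have hbm : b ∣ a ^ h * b := dvd_mul_left _ _
  rw [omegaI_eq_card_filter hm le_rfl, omegaI_eq_card_filter ha (realNorm_le_of_dvd ham hm),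
    omegaI_eq_card_filter hb (realNorm_le_of_dvd hbm hm)]
  set P := primesLE K (realNorm (a ^ h * b))
  have hlower : (P.filter (· ∣ a)).card ≤ (P.filter (· ∣ a ^ h * b)).card :=
    Finset.card_le_card (Finset.monotone_filter_right _ fun p _ hp => hp.trans ham)
  have hupper : (P.filter (· ∣ a ^ h * b)).card ≤
      (P.filter (· ∣ a)).card + (P.filter (· ∣ b)).card := by
    refine (Finset.card_le_card fun p hp => ?_).trans (Finset.card_union_le _ _)
    obtain ⟨hpP, hpm⟩ := Finset.mem_filter.1 hp
    have hprime := (mem_primesLE.1 hpP).1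
    rw [← Finset.filter_or, Finset.mem_filter]
    exact ⟨hpP, (hprime.dvd_or_dvd hpm).imp_left hprime.dvd_of_dvd_pow⟩
  rw [abs_of_nonneg (sub_nonneg.2 (Nat.cast_le.2 hlower)), sub_le_iff_le_add']
  exact_mod_cast hupper

end HFullDecomposition

/-! ### Sums over `h`-full ideals -/

section HFullSums

open Asymptotics

variable {K} {h : ℕ}

lemma isLittleO_tsum {α β E : Type*} [NormedAddCommGroup E] [NormedSpace ℝ E] [CompleteSpace E]
    {l : Filter α} {f : α → β → E} {g : α → ℝ} {bound : β → ℝ} (hsum : Summable bound)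
    (hf : ∀ k, (f · k) =o[l] g) (hbound : ∀ᶠ a in l, ∀ k, ‖f a k‖ ≤ bound k * ‖g a‖) :
    (fun a => ∑' k, f a k) =o[l] g := by
  have hzero : ∀ᶠ a in l, g a = 0 → ∑' k, f a k = 0 := by
    filter_upwards [hbound] with a ha hg
    have hfa : ∀ k, f a k = 0 := fun k => by simpa [hg] using ha k
    simp only [hfa, tsum_zero]
  rw [← isLittleOTVS_iff_isLittleO (𝕜 := ℝ), isLittleOTVS_iff_tendsto_inv_smul hzero]
  have hlim := tendsto_tsum_of_dominated_convergence (f := fun a k => (g a)⁻¹ • f a k)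
    (summable_abs_iff.2 hsum) (fun k => (isLittleOTVS_iff_isLittleO.2 (hf k)).tendsto_inv_smul) ?_
  · simpa only [tsum_zero, tsum_const_smul''] using hlim
  · filter_upwards [hbound] with a ha k
    rw [norm_smul, norm_inv]
    exact inv_mul_le_of_le_mul₀ (norm_nonneg _) (abs_nonneg _)
      ((ha k).trans (by rw [mul_comm]; gcongr; exact le_abs_self _))

lemma idealsLE_eq_empty {x : ℝ} (hx : x < 1) : idealsLE K x = ∅ :=
  Finset.eq_empty_of_forall_notMem fun _ hI =>
    ((one_le_realNorm (mem_idealsLE.1 hI).1).trans (mem_idealsLE.1 hI).2).not_gt hx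

variable (K) in
lemma exists_card_idealsLE_rpow_le : ∃ C : ℝ, 0 < C ∧ ∀ (x : ℝ) (b : Ideal (𝓞 K)) (s : ℝ), 0 < x →
    b ≠ ⊥ → (idealsLE K ((x / realNorm b) ^ s)).card ≤ C * realNorm b ^ (-s) * x ^ s := by
  obtain ⟨c, C, -, hC, hcard⟩ := exists_card_idealsLE_bounds K
  refine ⟨C, hC, fun x b s hx hb => ?_⟩
  have hb0 := realNorm_pos hb
  have hsplit : C * realNorm b ^ (-s) * x ^ s = C * (x / realNorm b) ^ s := by
    rw [Real.div_rpow hx.le hb0.le, Real.rpow_neg hb0.le]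
    ring
  rw [hsplit]
  rcases le_or_gt 1 ((x / realNorm b) ^ s) with hge | hlt
  · exact (hcard _ hge).2
  · rw [idealsLE_eq_empty hlt, Finset.card_empty, Nat.cast_zero]
    positivity

variable (K) in
lemma summable_realNorm_rpow_neg_inv (hh : h ≠ 0) :
    Summable fun b : {b : Ideal (𝓞 K) // HasExponentsIn (Set.Ioo h (2 * h)) b} =>
      realNorm b.1 ^ (-(h : ℝ)⁻¹) := by
  have hsum := summable_realNorm_rpow_neg_of_hasExponentsIn (K := K) (T := Finset.Ioo h (2 * h))
    (σ := (h : ℝ)⁻¹) fun e he => by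
      rw [← div_eq_mul_inv, one_lt_div (by positivity)]
      exact_mod_cast (Finset.mem_Ioo.1 he).1
  rwa [Finset.coe_Ioo] at hsum

lemma sum_hFullIdealsLE_eq_tsum {M : Type*} [AddCommMonoid M] [TopologicalSpace M] (hh : h ≠ 0)
    {x : ℝ} (hx : 0 < x) (f : Ideal (𝓞 K) → M) :
    ∑ m ∈ hFullIdealsLE K h x, f m =
      ∑' b : {b : Ideal (𝓞 K) // HasExponentsIn (Set.Ioo h (2 * h)) b},
        ∑ a ∈ idealsLE K ((x / realNorm b.1) ^ ((h : ℝ)⁻¹)), f (a ^ h * b.1) := by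
  classical
  rw [sum_hFullIdealsLE hh hx, ← Finset.sum_subtype_eq_sum_filter, tsum_eq_sum]
  intro b hb
  have hb0 := realNorm_pos b.2.1
  have hxb : x < realNorm b.1 := by
    by_contra hle
    exact hb (Finset.mem_subtype.2 (mem_idealsLE.2 ⟨b.2.1, not_lt.1 hle⟩))
  rw [idealsLE_eq_empty (Real.rpow_lt_one (by positivity) ((div_lt_one hb0).2 hxb)
    (by positivity)), Finset.sum_empty]

variable (K) in
lemma exists_card_hFullIdealsLE_bounds (hh : h ≠ 0) : ∃ c C : ℝ, 0 < c ∧ 0 < C ∧ ∀ x : ℝ, 1 ≤ x →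
    c * x ^ ((h : ℝ)⁻¹) ≤ (hFullIdealsLE K h x).card ∧
      (hFullIdealsLE K h x).card ≤ C * x ^ ((h : ℝ)⁻¹) := by
  obtain ⟨c, _, hc, -, hcard⟩ := exists_card_idealsLE_bounds K
  obtain ⟨C, hC, hle⟩ := exists_card_idealsLE_rpow_le K
  have hS := (summable_realNorm_rpow_neg_inv K hh).mul_left C
  set S := ∑' b : {b : Ideal (𝓞 K) // HasExponentsIn (Set.Ioo h (2 * h)) b},
    C * realNorm b.1 ^ (-(h : ℝ)⁻¹)
  have hS0 : 0 ≤ S := tsum_nonneg fun b => by positivity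
  refine ⟨c, S + 1, hc, add_pos_of_nonneg_of_pos hS0 one_pos, fun x hx => ?_⟩
  have hx0 : 0 < x := one_pos.trans_le hx
  have hcount := sum_hFullIdealsLE_eq_tsum hh hx0 fun _ : Ideal (𝓞 K) => (1 : ℝ)
  simp only [Finset.sum_const, nsmul_eq_mul, mul_one] at hcount
  have hterm := fun b : {b : Ideal (𝓞 K) // HasExponentsIn (Set.Ioo h (2 * h)) b} =>
    hle x b.1 ((h : ℝ)⁻¹) hx0 b.2.1
  have hsummable := (hS.mul_right (x ^ ((h : ℝ)⁻¹))).of_nonneg_of_le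
    (fun b => Nat.cast_nonneg _) hterm
  rw [hcount]
  constructor
  · calc c * x ^ ((h : ℝ)⁻¹) ≤ (idealsLE K (x ^ ((h : ℝ)⁻¹))).card :=
          (hcard _ (Real.one_le_rpow hx (by positivity))).1
      _ ≤ _ := by
          have hone := hsummable.le_tsum ⟨1, hasExponentsIn_one _⟩ fun _ _ => Nat.cast_nonneg _
          simpa [realNorm] using hone
  · calc _ ≤ S * x ^ ((h : ℝ)⁻¹) := by
          rw [← tsum_mul_right]
          exact hsummable.tsum_le_tsum hterm (hS.mul_right _)
      _ ≤ (S + 1) * x ^ ((h : ℝ)⁻¹) := by gcongr; linarith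

lemma isLittleO_sum_hFullIdealsLE (hh : h ≠ 0) {f : ℝ → Ideal (𝓞 K) → ℂ} {B : ℝ}
    (hB : ∀ x m, ‖f x m‖ ≤ B)
    (hf : ∀ b : Ideal (𝓞 K), b ≠ ⊥ →
      (fun x => ∑ a ∈ idealsLE K ((x / realNorm b) ^ ((h : ℝ)⁻¹)), f x (a ^ h * b)) =o[atTop]
        fun x => x ^ ((h : ℝ)⁻¹)) :
    (fun x => ∑ m ∈ hFullIdealsLE K h x, f x m) =o[atTop] fun x => x ^ ((h : ℝ)⁻¹) := by
  obtain ⟨C, hC, hle⟩ := exists_card_idealsLE_rpow_le K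
  have hB0 : 0 ≤ B := (norm_nonneg _).trans (hB 0 ⊥)
  refine (isLittleO_tsum ((summable_realNorm_rpow_neg_inv K hh).mul_left (B * C))
    (fun b => hf b.1 b.2.1) ?_).congr' ?_ EventuallyEq.rfl
  · filter_upwards [eventually_gt_atTop 0] with x hx b
    calc _ ≤ (idealsLE K ((x / realNorm b.1) ^ ((h : ℝ)⁻¹))).card * B := by
          rw [← nsmul_eq_mul, ← Finset.sum_const]
          exact norm_sum_le_of_le _ fun a _ => hB x _
      _ ≤ C * realNorm b.1 ^ (-(h : ℝ)⁻¹) * x ^ ((h : ℝ)⁻¹) * B := by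
          gcongr
          exact hle x b.1 _ hx b.2.1
      _ = _ := by rw [Real.norm_of_nonneg (by positivity)]; ring
  · filter_upwards [eventually_gt_atTop 0] with x hx
    exact (sum_hFullIdealsLE_eq_tsum hh hx (f x)).symm

lemma norm_omegaPhase_pow_mul_sub_le (hh : h ≠ 0) {a b : Ideal (𝓞 K)} (ha : a ≠ ⊥) (hb : b ≠ ⊥)
    (t L : ℝ) : ‖omegaPhase t L (a ^ h * b) - omegaPhase t L a‖ ≤ |t| / √L * omegaI K b := by
  refine (norm_exp_I_mul_sub_le _ _).trans ?_
  rw [← mul_sub, sub_sub_sub_cancel_right, abs_mul, abs_div, abs_of_nonneg (Real.sqrt_nonneg L)]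
  gcongr
  exact abs_omegaI_pow_mul_sub_le ha hb hh

lemma isLittleO_sum_omegaPhase_pow_mul_sub {α : Type*} {l : Filter α} {L y : α → ℝ} (hh : h ≠ 0)
    {b : Ideal (𝓞 K)} (hb : b ≠ ⊥) (hy : Tendsto y l atTop) (hL : Tendsto L l atTop)
    (hLy : (fun a => L a - Real.log (Real.log (y a))) =O[l] fun _ => (1 : ℝ)) (t : ℝ) :
    (fun x => ∑ a ∈ idealsLE K (y x),
      (omegaPhase t (L x) (a ^ h * b) - (Real.exp (-t ^ 2 / 2) : ℝ))) =o[l] y := by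
  obtain ⟨_, C, -, -, hcard⟩ := exists_card_idealsLE_bounds K
  have hE : Tendsto (fun x => C * (|t| / √(L x) * omegaI K b)) l (𝓝 0) := by
    simpa using ((tendsto_div_sqrt hL |t|).mul_const (omegaI K b : ℝ)).const_mul C
  have hshift : (fun x => ∑ a ∈ idealsLE K (y x),
      (omegaPhase t (L x) (a ^ h * b) - omegaPhase t (L x) a)) =o[l] y := by
    refine isLittleO_of_norm_le_mul hE ?_
    filter_upwards [hy.eventually_ge_atTop 1] with x hx
    calc _ ≤ (idealsLE K (y x)).card * (|t| / √(L x) * omegaI K b) := by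
          rw [← nsmul_eq_mul, ← Finset.sum_const]
          exact norm_sum_le_of_le _ fun a ha =>
            norm_omegaPhase_pow_mul_sub_le hh (mem_idealsLE.1 ha).1 hb t (L x)
      _ ≤ C * y x * (|t| / √(L x) * omegaI K b) := by
          gcongr
          exact (hcard _ hx).2
      _ = _ := by ring
  refine (hshift.add (isLittleO_sum_idealsLE_omegaPhase_sub (K := K) hy hLy t)).congr_left
    fun x => ?_
  rw [← Finset.sum_add_distrib]
  simp only [sub_add_sub_cancel]

lemma isLittleO_sum_hFullIdealsLE_omegaPhase_sub (hh : h ≠ 0) (t : ℝ) :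
    (fun x : ℝ => ∑ m ∈ hFullIdealsLE K h x,
      (omegaPhase t (Real.log (Real.log x)) m - (Real.exp (-t ^ 2 / 2) : ℝ))) =o[atTop]
      fun x => ((hFullIdealsLE K h x).card : ℝ) := by
  obtain ⟨c, _, hc, -, hcard⟩ := exists_card_hFullIdealsLE_bounds K hh
  have hcardO : (fun x : ℝ => x ^ ((h : ℝ)⁻¹)) =O[atTop]
      fun x => ((hFullIdealsLE K h x).card : ℝ) := by
    refine IsBigO.of_bound c⁻¹ ?_
    filter_upwards [eventually_ge_atTop 1] with x hx
    rw [Real.norm_of_nonneg (by positivity), Real.norm_of_nonneg (Nat.cast_nonneg _)]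
    exact (le_inv_mul_iff₀ hc).2 (hcard x hx).1
  refine (isLittleO_sum_hFullIdealsLE hh (fun x m => norm_omegaPhase_sub_exp_le t _ m)
    fun b hb => ?_).trans_isBigO hcardO
  have hb0 := realNorm_pos hb
  have hh0 : (0 : ℝ) < (h : ℝ)⁻¹ := by positivity
  have hy : Tendsto (fun x : ℝ => (x / realNorm b) ^ ((h : ℝ)⁻¹)) atTop atTop :=
    (tendsto_rpow_atTop hh0).comp (tendsto_id.atTop_div_const hb0)
  have hlog : ∀ᶠ x : ℝ in atTop, Real.log ((x / realNorm b) ^ ((h : ℝ)⁻¹)) =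
      (h : ℝ)⁻¹ * Real.log x + -((h : ℝ)⁻¹ * Real.log (realNorm b)) := by
    filter_upwards [eventually_gt_atTop 0] with x hx
    rw [Real.log_rpow (by positivity), Real.log_div hx.ne' hb0.ne', mul_sub, sub_eq_add_neg]
  have hyO : (fun x : ℝ => (x / realNorm b) ^ ((h : ℝ)⁻¹)) =O[atTop]
      fun x => x ^ ((h : ℝ)⁻¹) := by
    refine ((isBigO_refl _ _).const_mul_left (realNorm b ^ (h : ℝ)⁻¹)⁻¹).congr' ?_
      EventuallyEq.rfl
    filter_upwards [eventually_ge_atTop 0] with x hx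
    rw [Real.div_rpow hx hb0.le, div_eq_inv_mul]
  refine (isLittleO_sum_omegaPhase_pow_mul_sub hh hb hy tendsto_log_log_atTop ?_ t).trans_isBigO hyO
  exact (isBigO_log_log_sub_of_log_eq tendsto_id hh0 _ hlog).neg_left.congr_left
    fun x => by rw [neg_sub]; rfl

variable (K) in
lemma tendsto_card_hFullIdealsLE_sqrt_div (hh : h ≠ 0) :
    Tendsto (fun x : ℝ => ((hFullIdealsLE K h (√x)).card : ℝ) / (hFullIdealsLE K h x).card) atTop
      (𝓝 0) := by
  obtain ⟨c, C, hc, hC, hcard⟩ := exists_card_hFullIdealsLE_bounds K hh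
  have hlim : Tendsto (fun x : ℝ => C / c * (√x) ^ (-(h : ℝ)⁻¹)) atTop (𝓝 0) := by
    simpa using ((tendsto_rpow_neg_atTop (y := (h : ℝ)⁻¹) (by positivity)).comp
      Real.tendsto_sqrt_atTop).const_mul (C / c)
  refine squeeze_zero' (Eventually.of_forall fun x => by positivity) ?_ hlim
  filter_upwards [eventually_ge_atTop 1] with x hx
  have hx0 : 0 < x := one_pos.trans_le hx
  have hsqrt : x ^ ((h : ℝ)⁻¹) = (√x) ^ ((h : ℝ)⁻¹) * (√x) ^ ((h : ℝ)⁻¹) := by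
    rw [← Real.mul_rpow (Real.sqrt_nonneg x) (Real.sqrt_nonneg x), Real.mul_self_sqrt hx0.le]
  calc _ ≤ C * (√x) ^ ((h : ℝ)⁻¹) / (c * x ^ ((h : ℝ)⁻¹)) := by
        gcongr
        · exact (hcard _ (Real.one_le_sqrt.2 hx)).2
        · exact (hcard x hx).1
    _ = _ := by
        rw [hsqrt, Real.rpow_neg (Real.sqrt_nonneg x)]
        field_simp

end HFullSums

/-! ### Lévy's continuity theorem for counting functions -/

section Levy

open ProbabilityTheory

lemma continuous_setIntegral_Iic {f : ℝ → ℝ} (hf : Integrable f) :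
    Continuous fun γ => ∫ u in Set.Iic γ, f u := by
  have hsplit : ∀ γ, ∫ u in Set.Iic γ, f u = (∫ u in (0 : ℝ)..γ, f u) + ∫ u in Set.Iic 0, f u :=
    fun γ => by
      rw [← intervalIntegral.integral_Iic_sub_Iic hf.integrableOn hf.integrableOn, sub_add_cancel]
  rw [funext hsplit]
  exact (intervalIntegral.continuous_primitive (fun _ _ => hf.intervalIntegrable) 0).add
    continuous_const

lemma gaussPhi_eq_integral (γ : ℝ) : gaussPhi γ = ∫ u in Set.Iic γ, gaussianPDFReal 0 1 u := by
  simp [gaussPhi, gaussianPDFReal, integral_const_mul]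

lemma continuous_gaussPhi : Continuous gaussPhi := by
  rw [funext gaussPhi_eq_integral]
  exact continuous_setIntegral_Iic (integrable_gaussianPDFReal 0 1)

lemma gaussPhi_eq_gaussianReal (γ : ℝ) : gaussPhi γ = (gaussianReal 0 1).real (Set.Iic γ) := by
  rw [gaussPhi_eq_integral, Measure.real, gaussianReal_apply_eq_integral 0 one_ne_zero,
    ENNReal.toReal_ofReal (integral_nonneg (gaussianPDFReal_nonneg 0 1))]

section EmpiricalMeasure

variable {ι : Type*} (S : Finset ι) (f : ι → ℝ)

/-- The empirical measure of the values `f i`, `i ∈ S`: the law of `f i` for `i` uniform in `S`. -/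
def empiricalMeasure : Measure ℝ :=
  (S.card : ENNReal)⁻¹ • ∑ i ∈ S, Measure.dirac (f i)

variable {S} in
lemma isProbabilityMeasure_empiricalMeasure (hS : S.Nonempty) :
    IsProbabilityMeasure (empiricalMeasure S f) := by
  refine ⟨?_⟩
  rw [empiricalMeasure, Measure.smul_apply, Measure.finsetSum_apply]
  simp only [measure_univ, Finset.sum_const, nsmul_eq_mul, mul_one, smul_eq_mul]
  exact ENNReal.inv_mul_cancel (by simpa using hS.ne_empty) (ENNReal.natCast_ne_top _)

open Classical in
lemma empiricalMeasure_real_apply {E : Set ℝ} (hE : MeasurableSet E) :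
    (empiricalMeasure S f).real E = ((S.filter fun i => f i ∈ E).card : ℝ) / S.card := by
  have hcount : ∑ i ∈ S, Measure.dirac (f i) E = ((S.filter fun i => f i ∈ E).card : ENNReal) := by
    simp [Measure.dirac_apply' _ hE, Set.indicator_apply]
  rw [Measure.real, empiricalMeasure, Measure.smul_apply, Measure.finsetSum_apply, hcount]
  simp [div_eq_inv_mul]

lemma charFun_empiricalMeasure (t : ℝ) :
    charFun (empiricalMeasure S f) t =
      (S.card : ℂ)⁻¹ * ∑ i ∈ S, Complex.exp (Complex.I * (t * f i : ℝ)) := by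
  rw [charFun_apply_real, empiricalMeasure, integral_smul_measure,
    integral_finsetSum_measure fun i _ => integrable_dirac (by simp)]
  simp only [integral_dirac, ENNReal.toReal_inv, ENNReal.toReal_natCast, Complex.real_smul,
    Complex.ofReal_inv, Complex.ofReal_natCast, Complex.ofReal_mul, mul_comm Complex.I]

end EmpiricalMeasure

lemma tendsto_measureReal_of_tendsto_charFun {α : Type*} {l : Filter α} [l.IsCountablyGenerated]
    {μ : α → Measure ℝ} {ν : Measure ℝ} [IsProbabilityMeasure ν]
    (hμ : ∀ᶠ a in l, IsProbabilityMeasure (μ a))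
    (hchar : ∀ t, Tendsto (fun a => charFun (μ a) t) l (𝓝 (charFun ν t))) {E : Set ℝ}
    (hE : ν (frontier E) = 0) : Tendsto (fun a => (μ a).real E) l (𝓝 (ν.real E)) := by
  refine tendsto_of_seq_tendsto fun u hu => ?_
  obtain ⟨N, hN⟩ := eventually_atTop.1 (hu.eventually hμ)
  rw [← tendsto_add_atTop_iff_nat N]
  let μ' : ℕ → ProbabilityMeasure ℝ := fun n => ⟨μ (u (n + N)), hN _ (Nat.le_add_left N n)⟩
  let ν' : ProbabilityMeasure ℝ := ⟨ν, inferInstance⟩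
  have hconv : Tendsto μ' atTop (𝓝 ν') :=
    ProbabilityMeasure.tendsto_iff_tendsto_charFun.2 fun t =>
      (tendsto_add_atTop_iff_nat N).2 ((hchar t).comp hu)
  exact (ENNReal.tendsto_toReal (measure_ne_top ν E)).comp
    (ProbabilityMeasure.tendsto_measure_of_null_frontier_of_tendsto' hconv hE)

open Classical in
lemma tendsto_card_filter_le_div_gaussPhi {α ι : Type*} {l : Filter α} [l.IsCountablyGenerated]
    {S : α → Finset ι} {f : α → ι → ℝ} (hS : ∀ᶠ a in l, (S a).Nonempty)
    (hexp : ∀ t : ℝ, (fun a => ∑ i ∈ S a, (Complex.exp (Complex.I * (t * f a i : ℝ)) -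
      (Real.exp (-t ^ 2 / 2) : ℝ))) =o[l] fun a => ((S a).card : ℝ)) (γ : ℝ) :
    Tendsto (fun a => (((S a).filter fun i => f a i ≤ γ).card : ℝ) / (S a).card) l
      (𝓝 (gaussPhi γ)) := by
  have hatom := nullSingletonClass_gaussianReal (μ := 0) (v := 1) one_ne_zero
  rw [gaussPhi_eq_gaussianReal]
  refine (tendsto_measureReal_of_tendsto_charFun (E := Set.Iic γ)
    (hS.mono fun a ha => isProbabilityMeasure_empiricalMeasure (f a) ha) (fun t => ?_) ?_).congr
    fun a => empiricalMeasure_real_apply (S a) (f a) measurableSet_Iic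
  · have hgauss : charFun (gaussianReal 0 1) t = (Real.exp (-t ^ 2 / 2) : ℝ) := by
      simp [charFun_gaussianReal, neg_div]
    have hlim := ((Complex.isLittleO_ofReal_right.2 (hexp t)).tendsto_div_nhds_zero).add_const
      (Real.exp (-t ^ 2 / 2) : ℂ)
    rw [zero_add] at hlim
    rw [hgauss]
    refine hlim.congr' ?_
    filter_upwards [hS] with a ha
    have hcard : ((S a).card : ℂ) ≠ 0 := Nat.cast_ne_zero.2 ha.card_ne_zero
    rw [charFun_empiricalMeasure, Finset.sum_sub_distrib, Finset.sum_const, nsmul_eq_mul]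
    push_cast
    field_simp
    ring
  · rw [frontier_Iic]
    exact measure_singleton γ

end Levy

/-! ### Replacing `log log x` by `log log N(m)` -/

section Renormalisation

open Classical in
lemma tendsto_card_filter_div_of_sandwich {α ι : Type*} {l : Filter α} {S E : α → Finset ι}
    {f : α → ι → ℝ} {p : α → ι → Prop} {F : ℝ → ℝ} {γ : ℝ} (hF : ContinuousAt F γ)
    (hf : ∀ γ', Tendsto (fun a => (((S a).filter fun i => f a i ≤ γ').card : ℝ) / (S a).card) l
      (𝓝 (F γ')))
    (hE : Tendsto (fun a => ((E a).card : ℝ) / (S a).card) l (𝓝 0))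
    (hp : ∀ δ > 0, ∀ᶠ a in l, ∀ i ∈ S a, i ∉ E a →
      (f a i ≤ γ - δ → p a i) ∧ (p a i → f a i ≤ γ + δ)) :
    Tendsto (fun a => (((S a).filter (p a)).card : ℝ) / (S a).card) l (𝓝 (F γ)) := by
  have card_le : ∀ {a} {q r : ι → Prop}, (∀ i ∈ S a, i ∉ E a → q i → r i) →
      (((S a).filter q).card : ℝ) ≤ ((S a).filter r).card + (E a).card := fun {a q r} hqr => by
    have hsub : (S a).filter q ⊆ (S a).filter r ∪ E a := fun i hi => by
      simp only [Finset.mem_union, Finset.mem_filter] at hi ⊢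
      by_cases hiE : i ∈ E a
      exacts [Or.inr hiE, Or.inl ⟨hi.1, hqr i hi.1 hiE hi.2⟩]
    exact_mod_cast (Finset.card_le_card hsub).trans (Finset.card_union_le _ _)
  have exists_shift : ∀ {U : Set ℝ}, U ∈ 𝓝 (F γ) → ∃ δ > 0, F (γ - δ) ∈ U ∧ F (γ + δ) ∈ U := by
    intro U hU
    have hsub : Tendsto (fun δ => F (γ - δ)) (𝓝[>] 0) (𝓝 (F γ)) :=
      (hF.tendsto.comp (by simpa using (continuous_sub_left γ).tendsto 0)).mono_left
        nhdsWithin_le_nhds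
    have hadd : Tendsto (fun δ => F (γ + δ)) (𝓝[>] 0) (𝓝 (F γ)) :=
      (hF.tendsto.comp (by simpa using (continuous_const_add γ).tendsto 0)).mono_left
        nhdsWithin_le_nhds
    obtain ⟨δ, hδU, hδ⟩ := (((hsub.eventually hU).and (hadd.eventually hU)).and
      self_mem_nhdsWithin).exists
    exact ⟨δ, hδ, hδU⟩
  refine tendsto_order.2 ⟨fun b hb => ?_, fun b hb => ?_⟩
  · obtain ⟨δ, hδ, hbδ, -⟩ := exists_shift (Ioi_mem_nhds hb)
    have hlim := (hf (γ - δ)).sub hE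
    rw [sub_zero] at hlim
    filter_upwards [hlim.eventually (lt_mem_nhds hbδ), hp δ hδ] with a hba hpa
    refine hba.trans_le ?_
    rw [← sub_div]
    exact div_le_div_of_nonneg_right
      (sub_le_iff_le_add.2 (card_le fun i hi hiE => (hpa i hi hiE).1)) (Nat.cast_nonneg _)
  · obtain ⟨δ, hδ, -, hbδ⟩ := exists_shift (Iio_mem_nhds hb)
    have hlim := (hf (γ + δ)).add hE
    rw [add_zero] at hlim
    filter_upwards [hlim.eventually (gt_mem_nhds hbδ), hp δ hδ] with a hba hpa
    refine lt_of_le_of_lt ?_ hba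
    rw [← add_div]
    exact div_le_div_of_nonneg_right (card_le fun i hi hiE => (hpa i hi hiE).2) (Nat.cast_nonneg _)

lemma abs_mul_sqrt_sub_sqrt_le {L l : ℝ} (hl : 0 ≤ l) (hlL : l ≤ L) (hLl : L - 1 ≤ l)
    (hL : 1 ≤ √L) (γ : ℝ) : |γ * (√L - √l)| ≤ |γ| := by
  have hsqrt : √l ≤ √L := Real.sqrt_le_sqrt hlL
  have hdiff : √L - √l ≤ 1 := by
    nlinarith [Real.sqrt_nonneg l, Real.mul_self_sqrt hl, Real.mul_self_sqrt (hl.trans hlL)]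
  rw [abs_mul, abs_of_nonneg (sub_nonneg.2 hsqrt)]
  exact mul_le_of_le_one_right (abs_nonneg γ) hdiff

lemma normalized_le_of_normalized_le_sub {L l γ δ w : ℝ} (hl : 0 < l) (hlL : l ≤ L)
    (hLl : L - 1 ≤ l) (hL : 1 ≤ √L) (hδ : 1 + |γ| ≤ δ * √L) (hw : (w - L) / √L ≤ γ - δ) :
    (w - l) / √l ≤ γ := by
  have hγ := abs_le.1 (abs_mul_sqrt_sub_sqrt_le hl.le hlL hLl hL γ)
  rw [div_le_iff₀ (one_pos.trans_le hL)] at hw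
  rw [div_le_iff₀ (Real.sqrt_pos.2 hl)]
  linarith [hγ.2]

lemma normalized_le_add_of_normalized_le {L l γ δ w : ℝ} (hl : 0 < l) (hlL : l ≤ L)
    (hLl : L - 1 ≤ l) (hL : 1 ≤ √L) (hδ : |γ| ≤ δ * √L) (hw : (w - l) / √l ≤ γ) :
    (w - L) / √L ≤ γ + δ := by
  have hγ := abs_le.1 (abs_mul_sqrt_sub_sqrt_le hl.le hlL hLl hL γ)
  rw [div_le_iff₀ (Real.sqrt_pos.2 hl)] at hw
  rw [div_le_iff₀ (one_pos.trans_le hL)]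
  linarith [hγ.1]

lemma log_log_pos {y : ℝ} (hy : 3 ≤ y) : 0 < Real.log (Real.log y) := by
  refine Real.log_pos ?_
  rw [Real.lt_log_iff_exp_lt (by linarith)]
  linarith [Real.exp_one_lt_d9]

lemma log_log_sub_one_le {x y : ℝ} (hx : 1 < x) (hxy : √x ≤ y) :
    Real.log (Real.log x) - 1 ≤ Real.log (Real.log y) := by
  have hlog : Real.log x / 2 ≤ Real.log y := by
    rw [← Real.log_sqrt (by linarith)]
    exact Real.log_le_log (Real.sqrt_pos.2 (by linarith)) hxy
  have hloglog := Real.log_le_log (half_pos (Real.log_pos hx)) hlog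
  rw [Real.log_div (Real.log_pos hx).ne' two_ne_zero] at hloglog
  linarith [Real.log_two_lt_d9]

lemma one_mem_hFullIdealsLE (h : ℕ) {x : ℝ} (hx : 1 ≤ x) : 1 ∈ hFullIdealsLE K h x := by
  refine mem_hFullIdealsLE.2 ⟨⟨one_ne_zero, fun p hp hp1 => ?_⟩, by simpa [realNorm] using hx⟩
  exact absurd (Ideal.isUnit_iff.1 (isUnit_of_dvd_one hp1)) hp.ne_top

/-- `ω(m)`, centred at `L` and scaled by `√L`: the natural model of `ω(m)` when `m` is random is a
Poisson variable of parameter `L ≈ log log N(m)`. -/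
def normalizedOmega (L : ℝ) (m : Ideal (𝓞 K)) : ℝ := (omegaI K m - L) / √L

open Classical in
lemma tendsto_card_filter_normalizedOmega_le_div {h : ℕ} (hh : h ≠ 0) (γ : ℝ) :
    Tendsto (fun x : ℝ => (((hFullIdealsLE K h x).filter fun m =>
      normalizedOmega K (Real.log (Real.log x)) m ≤ γ).card : ℝ) / (hFullIdealsLE K h x).card)
      atTop (𝓝 (gaussPhi γ)) := by
  refine tendsto_card_filter_le_div_gaussPhi ?_ (fun t => ?_) γ
  · filter_upwards [eventually_ge_atTop 1] with x hx using ⟨1, one_mem_hFullIdealsLE K h hx⟩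
  · refine (isLittleO_sum_hFullIdealsLE_omegaPhase_sub hh t).congr_left fun x => ?_
    simp only [omegaPhase, normalizedOmega, mul_div_assoc', div_mul_eq_mul_div]

lemma eventually_normalizedOmega_sandwich (h : ℕ) (γ : ℝ) {δ : ℝ} (hδ : 0 < δ) :
    ∀ᶠ x : ℝ in atTop, ∀ m ∈ hFullIdealsLE K h x, m ∉ hFullIdealsLE K h (√x) →
      (normalizedOmega K (Real.log (Real.log x)) m ≤ γ - δ →
        3 ≤ Ideal.absNorm m ∧ normalizedOmega K (Real.log (Real.log (Ideal.absNorm m))) m ≤ γ) ∧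
      (3 ≤ Ideal.absNorm m ∧ normalizedOmega K (Real.log (Real.log (Ideal.absNorm m))) m ≤ γ →
        normalizedOmega K (Real.log (Real.log x)) m ≤ γ + δ) := by
  have hsqrt : Tendsto (fun x : ℝ => √(Real.log (Real.log x))) atTop atTop :=
    Real.tendsto_sqrt_atTop.comp tendsto_log_log_atTop
  filter_upwards [eventually_ge_atTop 9, hsqrt.eventually_ge_atTop 1,
    hsqrt.eventually_ge_atTop ((1 + |γ|) / δ)] with x hx hL hLδ m hm hm'
  rw [div_le_iff₀' hδ] at hLδ
  obtain ⟨hfull, hmx⟩ := mem_hFullIdealsLE.1 hm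
  have hxm : √x < Ideal.absNorm m :=
    lt_of_not_ge fun hmx' => hm' (mem_hFullIdealsLE.2 ⟨hfull, hmx'⟩)
  have hm3 : (3 : ℝ) ≤ Ideal.absNorm m := (Real.le_sqrt' three_pos).2 (by linarith) |>.trans hxm.le
  have hlog : 0 < Real.log (Ideal.absNorm m) := Real.log_pos (by linarith)
  have hle : Real.log (Real.log (Ideal.absNorm m)) ≤ Real.log (Real.log x) :=
    Real.log_le_log hlog (Real.log_le_log (by linarith) hmx)
  have hge := log_log_sub_one_le (by linarith) hxm.le
  exact ⟨fun hw => ⟨by exact_mod_cast hm3,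
      normalized_le_of_normalized_le_sub (log_log_pos hm3) hle hge hL hLδ hw⟩,
    fun hw => normalized_le_add_of_normalized_le (log_log_pos hm3) hle hge hL (by linarith) hw.2⟩

end Renormalisation

theorem erdosKac_hFull_ideals_general (h : ℕ) (hh : h ≠ 0) (γ : ℝ) :
    Tendsto (fun x : ℝ =>
      (Nat.card {m : Ideal (𝓞 K) //
          IsHFull K h m ∧ (Ideal.absNorm m : ℝ) ≤ x ∧ 3 ≤ Ideal.absNorm m ∧
          ((omegaI K m : ℝ) - Real.log (Real.log (Ideal.absNorm m))) /
            √(Real.log (Real.log (Ideal.absNorm m))) ≤ γ} : ℝ) /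
        (Nat.card {m : Ideal (𝓞 K) // IsHFull K h m ∧ (Ideal.absNorm m : ℝ) ≤ x} : ℝ))
      atTop (𝓝 (gaussPhi γ)) := by
  classical
  refine (tendsto_card_filter_div_of_sandwich continuous_gaussPhi.continuousAt
    (tendsto_card_filter_normalizedOmega_le_div K hh) (tendsto_card_hFullIdealsLE_sqrt_div K hh)
    fun δ hδ => eventually_normalizedOmega_sandwich K h γ hδ).congr fun x => ?_
  rw [Nat.subtype_card (hFullIdealsLE K h x) fun m => mem_hFullIdealsLE,
    Nat.subtype_card ((hFullIdealsLE K h x).filter fun m => 3 ≤ Ideal.absNorm m ∧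
      normalizedOmega K (Real.log (Real.log (Ideal.absNorm m))) m ≤ γ) fun m => by
        rw [Finset.mem_filter, mem_hFullIdealsLE, and_assoc, realNorm, normalizedOmega]]
  congr!

/-- **The Erdős–Kac theorem for `h`-full ideals of a number field.** -/
theorem erdosKac_hFull_ideals (h : ℕ) (hh : 2 ≤ h) (γ : ℝ) :
    Tendsto (fun x : ℝ =>
      (Nat.card {m : Ideal (NumberField.RingOfIntegers K) //
          IsHFull K h m ∧ (Ideal.absNorm m : ℝ) ≤ x ∧ 3 ≤ Ideal.absNorm m ∧
          ((omegaI K m : ℝ) - Real.log (Real.log (Ideal.absNorm m))) /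
            Real.sqrt (Real.log (Real.log (Ideal.absNorm m))) ≤ γ} : ℝ) /
        (Nat.card {m : Ideal (NumberField.RingOfIntegers K) //
          IsHFull K h m ∧ (Ideal.absNorm m : ℝ) ≤ x} : ℝ))
      atTop (𝓝 (gaussPhi γ)) :=
  erdosKac_hFull_ideals_general K h (by omega) γ

end
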